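/- arXiv:math/0412241 — 4 statements merged into one kernel-verified Lean document; each statement's English description precedes it below -/
import Mathlib

section
/- Let n ≥ 3 be an integer and let p satisfy 1 < p < n/(n−2). Then there exists a nontrivial classical solution of the Cauchy problem (P) with initial data g ≡ 0; that is, there exists a function u : (ℝⁿ∖{0}) × [0,∞) → ℝ, continuous on (ℝⁿ∖{0}) × [0,∞), C² in x and C¹ in t on (ℝⁿ∖{0}) × (0,∞), satisfying u_t = Δu − u^p and u ≥ 0 on (ℝⁿ∖{0}) × (0,∞), with u(x,0) = 0 for all x ≠ 0, such that u is not identically zero. -/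
open scoped BigOperators

/-- The Laplacian of `f : ℝⁿ → ℝ`, expressed as the sum of second directional
derivatives along the standard basis vectors. -/
noncomputable def laplacian {n : ℕ} (f : EuclideanSpace ℝ (Fin n) → ℝ)
    (x : EuclideanSpace ℝ (Fin n)) : ℝ :=
  ∑ i : Fin n, fderiv ℝ (fun y => fderiv ℝ f y (EuclideanSpace.single i 1)) x
    (EuclideanSpace.single i 1)

/-- A classical solution of the Cauchy problem (P):
`u_t = Δu − u^p` in `(ℝⁿ∖{0}) × (0,∞)`, `u ≥ 0`, `u(·,0) = g`,
with `u` continuous on `(ℝⁿ∖{0}) × [0,∞)`, `C²` in `x` and `C¹` in `t`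
on `(ℝⁿ∖{0}) × (0,∞)`. -/
structure IsClassicalSolution (n : ℕ) (p : ℝ) (g : EuclideanSpace ℝ (Fin n) → ℝ)
    (u : EuclideanSpace ℝ (Fin n) → ℝ → ℝ) : Prop where
  continuousOn : ContinuousOn (fun q : EuclideanSpace ℝ (Fin n) × ℝ => u q.1 q.2)
    {q : EuclideanSpace ℝ (Fin n) × ℝ | q.1 ≠ 0 ∧ 0 ≤ q.2}
  contDiff_space : ∀ x : EuclideanSpace ℝ (Fin n), x ≠ 0 → ∀ t : ℝ, 0 < t →
    ContDiffAt ℝ 2 (fun y => u y t) x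
  contDiff_time : ∀ x : EuclideanSpace ℝ (Fin n), x ≠ 0 → ∀ t : ℝ, 0 < t →
    ContDiffAt ℝ 1 (u x) t
  pde : ∀ x : EuclideanSpace ℝ (Fin n), x ≠ 0 → ∀ t : ℝ, 0 < t →
    deriv (u x) t = laplacian (fun y => u y t) x - u x t ^ p
  nonneg : ∀ x : EuclideanSpace ℝ (Fin n), x ≠ 0 → ∀ t : ℝ, 0 < t → 0 ≤ u x t
  initial : ∀ x : EuclideanSpace ℝ (Fin n), x ≠ 0 → u x 0 = g x

open Set Filter Topology MeasureTheory

/-- A function with two derivatives on `(0, ∞)`, the second one continuous, is `C²` there. -/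
theorem contDiffOn_two_of_hasDerivAt {f f' f'' : ℝ → ℝ}
    (hf : ∀ s, 0 < s → HasDerivAt f (f' s) s) (hf' : ∀ s, 0 < s → HasDerivAt f' (f'' s) s)
    (hc : ContinuousOn f'' (Ioi 0)) : ContDiffOn ℝ 2 f (Ioi 0) := by
  have h1 : ContDiffOn ℝ 1 f' (Ioi 0) := by
    rw [show (1 : WithTop ℕ∞) = 0 + 1 from rfl, contDiffOn_succ_iff_deriv_of_isOpen isOpen_Ioi]
    refine ⟨fun s hs => (hf' s hs).differentiableAt.differentiableWithinAt, by simp, ?_⟩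
    rw [contDiffOn_zero]
    exact hc.congr fun s hs => (hf' s hs).deriv
  rw [show (2 : WithTop ℕ∞) = 1 + 1 from rfl, contDiffOn_succ_iff_deriv_of_isOpen isOpen_Ioi]
  refine ⟨fun s hs => (hf s hs).differentiableAt.differentiableWithinAt, by simp, ?_⟩
  exact h1.congr fun s hs => (hf s hs).deriv

/-- The Laplacian of a radial function written in terms of the squared norm. -/
theorem laplacian_comp_norm_sq {n : ℕ} {f f' f'' : ℝ → ℝ}
    (hf : ∀ s, 0 < s → HasDerivAt f (f' s) s) (hf' : ∀ s, 0 < s → HasDerivAt f' (f'' s) s)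
    {x : EuclideanSpace ℝ (Fin n)} (hx : x ≠ 0) :
    laplacian (fun y => f (‖y‖ ^ 2)) x
      = 4 * ‖x‖ ^ 2 * f'' (‖x‖ ^ 2) + 2 * n * f' (‖x‖ ^ 2) := by
  have hsq : ∀ y : EuclideanSpace ℝ (Fin n),
      HasFDerivAt (fun y : EuclideanSpace ℝ (Fin n) => ‖y‖ ^ 2) (2 • innerSL ℝ y) y :=
    fun y => (hasStrictFDerivAt_norm_sq y).hasFDerivAt
  have hpos : ∀ y : EuclideanSpace ℝ (Fin n), y ≠ 0 → 0 < ‖y‖ ^ 2 := fun y hy => by positivity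
  have key : ∀ i : Fin n, fderiv ℝ (fun y => fderiv ℝ (fun y => f (‖y‖ ^ 2)) y
      (EuclideanSpace.single i 1)) x (EuclideanSpace.single i 1)
        = 4 * f'' (‖x‖ ^ 2) * x i ^ 2 + 2 * f' (‖x‖ ^ 2) := by
    intro i
    have hev : (fun y => fderiv ℝ (fun y => f (‖y‖ ^ 2)) y (EuclideanSpace.single i 1))
        =ᶠ[𝓝 x] fun y => f' (‖y‖ ^ 2) * (2 * innerSL ℝ (EuclideanSpace.single i 1) y) := by
      filter_upwards [isOpen_ne.mem_nhds hx] with y hy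
      have := (hf _ (hpos y hy)).comp_hasFDerivAt y (hsq y)
      have h2 : fderiv ℝ (fun y => f (‖y‖ ^ 2)) y = f' (‖y‖ ^ 2) • (2 • innerSL ℝ y) :=
        this.fderiv
      rw [h2]
      simp [EuclideanSpace.inner_single_right, EuclideanSpace.inner_single_left]
    rw [hev.fderiv_eq]
    have h1 := (hf' _ (hpos x hx)).comp_hasFDerivAt x (hsq x)
    have h2 := ((innerSL ℝ (EuclideanSpace.single i (1 : ℝ))).hasFDerivAt (x := x)).const_mul 2
    have h3 := h1.mul h2
    have h4 : fderiv ℝ (fun y => f' (‖y‖ ^ 2) *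
        (2 * innerSL ℝ (EuclideanSpace.single i (1 : ℝ)) y)) x = _ := h3.fderiv
    rw [h4]
    simp [EuclideanSpace.inner_single_right, EuclideanSpace.inner_single_left]
    ring
  unfold laplacian
  simp_rw [key]
  rw [Finset.sum_add_distrib, ← Finset.mul_sum, ← EuclideanSpace.real_norm_sq_eq]
  simp
  ring

/-- A decaying solution of the self-similar profile equation yields a classical solution of the
Cauchy problem with zero initial data. -/
theorem isClassicalSolution_of_profile {n : ℕ} {p a : ℝ} (hp : a * (p - 1) = 1)
    {W W' W'' : ℝ → ℝ}
    (hW : ∀ s, 0 < s → HasDerivAt W (W' s) s) (hW' : ∀ s, 0 < s → HasDerivAt W' (W'' s) s)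
    (hc : ContinuousOn W'' (Ioi 0)) (hnn : ∀ s, 0 < s → 0 ≤ W s) (h0 : W 0 = 0)
    (hlim : Tendsto W atTop (𝓝 0))
    (hode : ∀ s, 0 < s → 4 * s ^ 2 * W'' s + ((2 * n - 8 * a) * s + s ^ 2) * W' s
      + 2 * a * (2 * a + 2 - n) * W s - W s ^ p = 0) :
    IsClassicalSolution n p (fun _ => 0) (fun x t => (‖x‖ ^ 2) ^ (-a) * W (‖x‖ ^ 2 / t)) := by
  have hpos : ∀ y : EuclideanSpace ℝ (Fin n), y ≠ 0 → 0 < ‖y‖ ^ 2 := fun y hy => by positivity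
  have hWc : ContDiffOn ℝ 2 W (Ioi 0) := contDiffOn_two_of_hasDerivAt hW hW' hc
  have hWat : ∀ s, 0 < s → ContDiffAt ℝ 2 W s := fun s hs => hWc.contDiffAt (Ioi_mem_nhds hs)
  refine ⟨?_, ?_, ?_, ?_, ?_, ?_⟩
  · have hV : ContinuousOn (fun y : ℝ => W y⁻¹) (Ici 0) := by
      intro y hy
      rcases (mem_Ici.1 hy).eq_or_lt with rfl | hy
      · rw [← continuousWithinAt_Ioi_iff_Ici]
        simp only [ContinuousWithinAt, inv_zero, h0]
        exact hlim.comp tendsto_inv_nhdsGT_zero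
      · have : ContinuousAt W y⁻¹ := (hW _ (inv_pos.2 hy)).continuousAt
        exact (ContinuousAt.comp this (continuousAt_inv₀ hy.ne')).continuousWithinAt
    have h1 : ContinuousOn (fun q : EuclideanSpace ℝ (Fin n) × ℝ => q.2 / ‖q.1‖ ^ 2)
        {q : EuclideanSpace ℝ (Fin n) × ℝ | q.1 ≠ 0 ∧ 0 ≤ q.2} :=
      ContinuousOn.div (by fun_prop) (by fun_prop) fun q hq => (hpos _ hq.1).ne'
    have h2 : ContinuousOn (fun q : EuclideanSpace ℝ (Fin n) × ℝ => (‖q.1‖ ^ 2) ^ (-a))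
        {q : EuclideanSpace ℝ (Fin n) × ℝ | q.1 ≠ 0 ∧ 0 ≤ q.2} :=
      ContinuousOn.rpow_const (by fun_prop) fun q hq => Or.inl (hpos _ hq.1).ne'
    refine (h2.mul (hV.comp h1 fun q hq => ?_)).congr fun q hq => ?_
    · exact div_nonneg hq.2 (hpos _ hq.1).le
    · simp [Function.comp_def, inv_div]
  · intro x hx t ht
    have h1 : ContDiffAt ℝ 2 (fun y : EuclideanSpace ℝ (Fin n) => ‖y‖ ^ 2) x :=
      (contDiff_norm_sq ℝ).contDiffAt
    have hW2 := hWat _ (div_pos (hpos x hx) ht)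
    exact (h1.rpow_const_of_ne (hpos x hx).ne').mul (hW2.comp x (h1.div_const t))
  · intro x hx t ht
    have hW2 := (hWat _ (div_pos (hpos x hx) ht)).of_le (by norm_num : (1 : WithTop ℕ∞) ≤ 2)
    exact contDiffAt_const.mul (hW2.comp t (contDiffAt_const.div contDiffAt_id ht.ne'))
  · intro x hx t ht
    set σ := ‖x‖ ^ 2 with hσ
    have hσ0 : 0 < σ := hpos x hx
    have hdt : HasDerivAt (fun t => σ ^ (-a) * W (σ / t))
        (σ ^ (-a) * (W' (σ / t) * (-σ / t ^ 2))) t := by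
      have h1 : HasDerivAt (fun t : ℝ => σ / t) (-σ / t ^ 2) t := by
        have := (hasDerivAt_const t σ).div (hasDerivAt_id t) ht.ne'
        exact this.congr_deriv (by simp)
      exact ((hW _ (div_pos hσ0 ht)).comp t h1).const_mul _
    rw [hdt.deriv]
    have hrp : ∀ s : ℝ, 0 < s → ∀ b : ℝ, HasDerivAt (fun s : ℝ => s ^ b) (b * s ^ (b - 1)) s :=
      fun s hs b => Real.hasDerivAt_rpow_const (Or.inl hs.ne')
    have hdiv : ∀ s : ℝ, HasDerivAt (fun s : ℝ => s / t) (1 / t) s :=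
      fun s => (hasDerivAt_id s).div_const t
    have hd1 : ∀ s, 0 < s → HasDerivAt (fun s => s ^ (-a) * W (s / t))
        (-a * s ^ (-a - 1) * W (s / t) + s ^ (-a) * (W' (s / t) * (1 / t))) s := fun s hs =>
      (hrp s hs _).mul ((hW _ (div_pos hs ht)).comp s (hdiv s))
    have hd2 : ∀ s, 0 < s → HasDerivAt
        (fun s => -a * s ^ (-a - 1) * W (s / t) + s ^ (-a) * (W' (s / t) * (1 / t)))
        ((-a * ((-a - 1) * s ^ (-a - 1 - 1)) * W (s / t)
            + -a * s ^ (-a - 1) * (W' (s / t) * (1 / t)))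
          + (-a * s ^ (-a - 1) * (W' (s / t) * (1 / t))
            + s ^ (-a) * (W'' (s / t) * (1 / t) * (1 / t)))) s := fun s hs =>
      (((hrp s hs _).const_mul (-a)).mul ((hW _ (div_pos hs ht)).comp s (hdiv s))).add
        ((hrp s hs _).mul (((hW' _ (div_pos hs ht)).comp s (hdiv s)).mul_const (1 / t)))
    rw [laplacian_comp_norm_sq hd1 hd2 hx, ← hσ]
    have hW0 := hnn _ (div_pos hσ0 ht)
    rw [Real.mul_rpow (Real.rpow_nonneg hσ0.le _) hW0, ← Real.rpow_mul hσ0.le,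
      show -a * p = -a - 1 by linarith, Real.rpow_sub_one hσ0.ne', Real.rpow_sub_one hσ0.ne']
    have ho := hode _ (div_pos hσ0 ht)
    have hWp : W (σ / t) ^ p = 4 * (σ / t) ^ 2 * W'' (σ / t)
        + ((2 * n - 8 * a) * (σ / t) + (σ / t) ^ 2) * W' (σ / t)
        + 2 * a * (2 * a + 2 - n) * W (σ / t) := by linarith
    rw [hWp]
    field_simp
    ring
  · intro x hx t ht
    exact mul_nonneg (Real.rpow_nonneg (hpos x hx).le _) (hnn _ (div_pos (hpos x hx) ht))
  · intro x hx
    simp [h0]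

/-- The inner primitive `s ↦ ∫₀ˢ H(t, w(t)) dt`. -/
noncomputable def innerPrimitive (H : ℝ → ℝ → ℝ) (w : ℝ → ℝ) (s : ℝ) : ℝ :=
  ∫ t in Ioc 0 s, H t (w t)

/-- The iterated integral `ξ ↦ ∫_ξ^∞ R(s) ∫₀ˢ H(t, w(t)) dt ds`. -/
noncomputable def outerPrimitive (R : ℝ → ℝ) (H : ℝ → ℝ → ℝ) (w : ℝ → ℝ) (ξ : ℝ) : ℝ :=
  ∫ s in Ioi ξ, R s * innerPrimitive H w s

/-- Data for which `w ↦ φ · outerPrimitive R H w` is an order preserving operator on functions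
`(0, ∞) → [0, c]`. -/
structure IsMonotoneKernel (φ R : ℝ → ℝ) (H : ℝ → ℝ → ℝ) (c : ℝ) : Prop where
  nonneg_bound : 0 ≤ c
  continuousOn_factor : ContinuousOn φ (Ioi 0)
  factor_nonneg : ∀ s, 0 < s → 0 ≤ φ s
  continuousOn_weight : ContinuousOn R (Ioi 0)
  weight_nonneg : ∀ s, 0 < s → 0 ≤ R s
  continuousOn_source : ContinuousOn (Function.uncurry H) (Ioi 0 ×ˢ Icc 0 c)
  source_nonneg : ∀ t, 0 < t → ∀ w ∈ Icc 0 c, 0 ≤ H t w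
  monotoneOn_source : ∀ t, 0 < t → MonotoneOn (H t) (Icc 0 c)
  integrableOn_inner : ∀ s, 0 < s → IntegrableOn (fun t => H t c) (Ioc 0 s)
  integrableOn_outer : ∀ ξ, 0 < ξ →
    IntegrableOn (fun s => R s * innerPrimitive H (fun _ => c) s) (Ioi ξ)

namespace IsMonotoneKernel

variable {φ R : ℝ → ℝ} {H : ℝ → ℝ → ℝ} {c : ℝ} {v w : ℝ → ℝ}

theorem continuousOn_comp (hK : IsMonotoneKernel φ R H c) (hw : ContinuousOn w (Ioi 0))
    (hwc : ∀ t, 0 < t → w t ∈ Icc 0 c) : ContinuousOn (fun t => H t (w t)) (Ioi 0) :=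
  hK.continuousOn_source.comp (f := fun t => (t, w t)) (continuousOn_id.prodMk hw)
    fun t ht => ⟨ht, hwc t ht⟩

theorem integrableOn_comp (hK : IsMonotoneKernel φ R H c)
    (hm : AEStronglyMeasurable (fun t => H t (w t)) (volume.restrict (Ioi 0)))
    (hwc : ∀ t, 0 < t → w t ∈ Icc 0 c) {s : ℝ} (hs : 0 < s) :
    IntegrableOn (fun t => H t (w t)) (Ioc 0 s) := by
  refine (hK.integrableOn_inner s hs).mono' (hm.mono_set Ioc_subset_Ioi_self) ?_
  filter_upwards [ae_restrict_mem measurableSet_Ioc] with t ht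
  rw [Real.norm_of_nonneg (hK.source_nonneg t ht.1 _ (hwc t ht.1))]
  exact hK.monotoneOn_source t ht.1 (hwc t ht.1) ⟨hK.nonneg_bound, le_rfl⟩ (hwc t ht.1).2

theorem innerPrimitive_nonneg (hK : IsMonotoneKernel φ R H c)
    (hwc : ∀ t, 0 < t → w t ∈ Icc 0 c) (s : ℝ) : 0 ≤ innerPrimitive H w s :=
  setIntegral_nonneg measurableSet_Ioc fun t ht => hK.source_nonneg t ht.1 _ (hwc t ht.1)

theorem innerPrimitive_mono (hK : IsMonotoneKernel φ R H c)
    (hmv : AEStronglyMeasurable (fun t => H t (v t)) (volume.restrict (Ioi 0)))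
    (hmw : AEStronglyMeasurable (fun t => H t (w t)) (volume.restrict (Ioi 0)))
    (hvc : ∀ t, 0 < t → v t ∈ Icc 0 c) (hwc : ∀ t, 0 < t → w t ∈ Icc 0 c)
    (hvw : ∀ t, 0 < t → v t ≤ w t) {s : ℝ} (hs : 0 < s) :
    innerPrimitive H v s ≤ innerPrimitive H w s :=
  setIntegral_mono_on (hK.integrableOn_comp hmv hvc hs) (hK.integrableOn_comp hmw hwc hs)
    measurableSet_Ioc fun t ht =>
      hK.monotoneOn_source t ht.1 (hvc t ht.1) (hwc t ht.1) (hvw t ht.1)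

theorem continuousOn_innerPrimitive (hK : IsMonotoneKernel φ R H c)
    (hm : AEStronglyMeasurable (fun t => H t (w t)) (volume.restrict (Ioi 0)))
    (hwc : ∀ t, 0 < t → w t ∈ Icc 0 c) : ContinuousOn (innerPrimitive H w) (Ioi 0) := by
  intro s hs
  have hs' : (0 : ℝ) < s + 1 := by linarith [mem_Ioi.1 hs]
  have h1 : ContinuousOn (innerPrimitive H w) (Icc 0 (s + 1)) :=
    intervalIntegral.continuousOn_primitive
      ((integrableOn_Icc_iff_integrableOn_Ioc).2 (hK.integrableOn_comp hm hwc hs'))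
  exact (h1.continuousAt (Icc_mem_nhds hs (by linarith))).continuousWithinAt

theorem aestronglyMeasurable_const (hK : IsMonotoneKernel φ R H c) :
    AEStronglyMeasurable (fun t => H t c) (volume.restrict (Ioi 0)) :=
  (hK.continuousOn_comp continuousOn_const
    fun _ _ => ⟨hK.nonneg_bound, le_rfl⟩).aestronglyMeasurable measurableSet_Ioi

theorem weight_mul_le (hK : IsMonotoneKernel φ R H c)
    (hm : AEStronglyMeasurable (fun t => H t (w t)) (volume.restrict (Ioi 0)))
    (hwc : ∀ t, 0 < t → w t ∈ Icc 0 c) {s : ℝ} (hs : 0 < s) :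
    ‖R s * innerPrimitive H w s‖ ≤ R s * innerPrimitive H (fun _ => c) s := by
  rw [Real.norm_of_nonneg (mul_nonneg (hK.weight_nonneg s hs) (hK.innerPrimitive_nonneg hwc s))]
  exact mul_le_mul_of_nonneg_left (hK.innerPrimitive_mono hm hK.aestronglyMeasurable_const hwc
    (fun _ _ => ⟨hK.nonneg_bound, le_rfl⟩) (fun t ht => (hwc t ht).2) hs) (hK.weight_nonneg s hs)

theorem continuousOn_weight_mul (hK : IsMonotoneKernel φ R H c)
    (hm : AEStronglyMeasurable (fun t => H t (w t)) (volume.restrict (Ioi 0)))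
    (hwc : ∀ t, 0 < t → w t ∈ Icc 0 c) :
    ContinuousOn (fun s => R s * innerPrimitive H w s) (Ioi 0) :=
  hK.continuousOn_weight.mul (hK.continuousOn_innerPrimitive hm hwc)

theorem integrableOn_weight_mul (hK : IsMonotoneKernel φ R H c)
    (hm : AEStronglyMeasurable (fun t => H t (w t)) (volume.restrict (Ioi 0)))
    (hwc : ∀ t, 0 < t → w t ∈ Icc 0 c) {ξ : ℝ} (hξ : 0 < ξ) :
    IntegrableOn (fun s => R s * innerPrimitive H w s) (Ioi ξ) := by
  refine (hK.integrableOn_outer ξ hξ).mono' (((hK.continuousOn_weight_mul hm hwc).mono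
    (Ioi_subset_Ioi hξ.le)).aestronglyMeasurable measurableSet_Ioi) ?_
  filter_upwards [ae_restrict_mem measurableSet_Ioi] with s hs
  exact hK.weight_mul_le hm hwc (hξ.trans hs)

theorem outerPrimitive_mono (hK : IsMonotoneKernel φ R H c)
    (hmv : AEStronglyMeasurable (fun t => H t (v t)) (volume.restrict (Ioi 0)))
    (hmw : AEStronglyMeasurable (fun t => H t (w t)) (volume.restrict (Ioi 0)))
    (hvc : ∀ t, 0 < t → v t ∈ Icc 0 c) (hwc : ∀ t, 0 < t → w t ∈ Icc 0 c)
    (hvw : ∀ t, 0 < t → v t ≤ w t) {ξ : ℝ} (hξ : 0 < ξ) :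
    outerPrimitive R H v ξ ≤ outerPrimitive R H w ξ :=
  setIntegral_mono_on (hK.integrableOn_weight_mul hmv hvc hξ)
    (hK.integrableOn_weight_mul hmw hwc hξ) measurableSet_Ioi fun _ hs =>
      mul_le_mul_of_nonneg_left (hK.innerPrimitive_mono hmv hmw hvc hwc hvw (hξ.trans hs))
        (hK.weight_nonneg _ (hξ.trans hs))

theorem continuousOn_outerPrimitive (hK : IsMonotoneKernel φ R H c)
    (hm : AEStronglyMeasurable (fun t => H t (w t)) (volume.restrict (Ioi 0)))
    (hwc : ∀ t, 0 < t → w t ∈ Icc 0 c) : ContinuousOn (outerPrimitive R H w) (Ioi 0) := by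
  intro ξ hξ
  have hpos : (0 : ℝ) < ξ / 2 := half_pos hξ
  have h1 : ContinuousOn (outerPrimitive R H w) (Ici (ξ / 2)) :=
    (hK.integrableOn_weight_mul hm hwc hpos).continuousOn_Ici_primitive_Ioi
  exact (h1.continuousAt (Ici_mem_nhds (half_lt_self hξ))).continuousWithinAt

theorem continuousOn_operator (hK : IsMonotoneKernel φ R H c)
    (hm : AEStronglyMeasurable (fun t => H t (w t)) (volume.restrict (Ioi 0)))
    (hwc : ∀ t, 0 < t → w t ∈ Icc 0 c) :
    ContinuousOn (fun ξ => φ ξ * outerPrimitive R H w ξ) (Ioi 0) :=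
  hK.continuousOn_factor.mul (hK.continuousOn_outerPrimitive hm hwc)

/-- Passage to the limit in the operator along a pointwise convergent sequence. -/
theorem tendsto_operator (hK : IsMonotoneKernel φ R H c) {f : ℕ → ℝ → ℝ}
    (hm : ∀ k, AEStronglyMeasurable (fun t => H t (f k t)) (volume.restrict (Ioi 0)))
    (hfc : ∀ k t, 0 < t → f k t ∈ Icc 0 c) (hwc : ∀ t, 0 < t → w t ∈ Icc 0 c)
    (hlim : ∀ t, 0 < t → Tendsto (fun k => f k t) atTop (𝓝 (w t))) :
    AEStronglyMeasurable (fun t => H t (w t)) (volume.restrict (Ioi 0)) ∧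
    ∀ ξ, 0 < ξ → Tendsto (fun k => φ ξ * outerPrimitive R H (f k) ξ) atTop
      (𝓝 (φ ξ * outerPrimitive R H w ξ)) := by
  have hH : ∀ t, 0 < t → Tendsto (fun k => H t (f k t)) atTop (𝓝 (H t (w t))) := by
    intro t ht
    have hc : ContinuousWithinAt (Function.uncurry H) (Ioi 0 ×ˢ Icc 0 c) (t, w t) :=
      hK.continuousOn_source (t, w t) ⟨ht, hwc t ht⟩
    exact hc.tendsto.comp (tendsto_nhdsWithin_iff.2
      ⟨tendsto_const_nhds.prodMk_nhds (hlim t ht),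
        Eventually.of_forall fun k => ⟨ht, hfc k t ht⟩⟩)
  refine ⟨aestronglyMeasurable_of_tendsto_ae atTop hm ?_, fun ξ hξ => ?_⟩
  · filter_upwards [ae_restrict_mem measurableSet_Ioi] with t ht using hH t ht
  have hI : ∀ s, 0 < s → Tendsto (fun k => innerPrimitive H (f k) s) atTop
      (𝓝 (innerPrimitive H w s)) := by
    intro s hs
    refine tendsto_integral_of_dominated_convergence (fun t => H t c)
      (fun k => (hm k).mono_set Ioc_subset_Ioi_self) (hK.integrableOn_inner s hs) (fun k => ?_) ?_
    · filter_upwards [ae_restrict_mem measurableSet_Ioc] with t ht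
      rw [Real.norm_of_nonneg (hK.source_nonneg t ht.1 _ (hfc k t ht.1))]
      exact hK.monotoneOn_source t ht.1 (hfc k t ht.1) ⟨hK.nonneg_bound, le_rfl⟩
        (hfc k t ht.1).2
    · filter_upwards [ae_restrict_mem measurableSet_Ioc] with t ht using hH t ht.1
  refine Tendsto.const_mul _ (tendsto_integral_of_dominated_convergence
    (fun s => R s * innerPrimitive H (fun _ => c) s)
    (fun k => (hK.integrableOn_weight_mul (hm k) (hfc k) hξ).1) (hK.integrableOn_outer ξ hξ)
    (fun k => ?_) ?_)
  · filter_upwards [ae_restrict_mem measurableSet_Ioi] with s hs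
    exact hK.weight_mul_le (hm k) (hfc k) (hξ.trans hs)
  · filter_upwards [ae_restrict_mem measurableSet_Ioi] with s hs
    exact (hI s (hξ.trans hs)).const_mul _

/-- Monotone iteration from the constant supersolution `c` down to a subsolution `v`. -/
theorem exists_fixedPoint (hK : IsMonotoneKernel φ R H c) (hv : ContinuousOn v (Ioi 0))
    (hvc : ∀ t, 0 < t → v t ∈ Icc 0 c)
    (hsub : ∀ ξ, 0 < ξ → v ξ ≤ φ ξ * outerPrimitive R H v ξ)
    (hsup : ∀ ξ, 0 < ξ → φ ξ * outerPrimitive R H (fun _ => c) ξ ≤ c) :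
    ∃ w : ℝ → ℝ, ContinuousOn w (Ioi 0) ∧ (∀ t, 0 < t → v t ≤ w t ∧ w t ≤ c) ∧
      ∀ ξ, 0 < ξ → w ξ = φ ξ * outerPrimitive R H w ξ := by
  let f : ℕ → ℝ → ℝ := fun k =>
    (fun (w : ℝ → ℝ) (ξ : ℝ) => φ ξ * outerPrimitive R H w ξ)^[k] (fun _ => c)
  have hf : ∀ k, f (k + 1) = fun ξ => φ ξ * outerPrimitive R H (f k) ξ := fun k =>
    Function.iterate_succ_apply' _ _ _
  have meas : ∀ {u : ℝ → ℝ}, ContinuousOn u (Ioi 0) → (∀ t, 0 < t → u t ∈ Icc 0 c) →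
      AEStronglyMeasurable (fun t => H t (u t)) (volume.restrict (Ioi 0)) := fun hu huc =>
    (hK.continuousOn_comp hu huc).aestronglyMeasurable measurableSet_Ioi
  have hcc : ∀ t : ℝ, 0 < t → c ∈ Icc 0 c := fun _ _ => ⟨hK.nonneg_bound, le_rfl⟩
  have inv : ∀ k, ContinuousOn (f k) (Ioi 0) ∧ (∀ t, 0 < t → v t ≤ f k t ∧ f k t ≤ c) ∧
      ∀ t, 0 < t → f (k + 1) t ≤ f k t := by
    intro k
    induction k with
    | zero => exact ⟨continuousOn_const, fun t ht => ⟨(hvc t ht).2, le_rfl⟩, hsup⟩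
    | succ k ih =>
      obtain ⟨hc, hb, hd⟩ := ih
      have hbc : ∀ t, 0 < t → f k t ∈ Icc 0 c := fun t ht =>
        ⟨(hvc t ht).1.trans (hb t ht).1, (hb t ht).2⟩
      have hc' : ContinuousOn (f (k + 1)) (Ioi 0) := by
        rw [hf]; exact hK.continuousOn_operator (meas hc hbc) hbc
      have hb' : ∀ t, 0 < t → v t ≤ f (k + 1) t ∧ f (k + 1) t ≤ c := fun t ht => by
        refine ⟨?_, (hd t ht).trans (hb t ht).2⟩
        rw [hf]
        exact (hsub t ht).trans (mul_le_mul_of_nonneg_left (hK.outerPrimitive_mono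
          (meas hv hvc) (meas hc hbc) hvc hbc (fun t ht => (hb t ht).1) ht)
          (hK.factor_nonneg t ht))
      have hbc' : ∀ t, 0 < t → f (k + 1) t ∈ Icc 0 c := fun t ht =>
        ⟨(hvc t ht).1.trans (hb' t ht).1, (hb' t ht).2⟩
      refine ⟨hc', hb', fun t ht => ?_⟩
      rw [hf (k + 1)]
      conv_rhs => rw [hf k]
      exact mul_le_mul_of_nonneg_left (hK.outerPrimitive_mono (meas hc' hbc') (meas hc hbc)
        hbc' hbc hd ht) (hK.factor_nonneg t ht)
  have hfc : ∀ k t, 0 < t → f k t ∈ Icc 0 c := fun k t ht =>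
    ⟨(hvc t ht).1.trans ((inv k).2.1 t ht).1, ((inv k).2.1 t ht).2⟩
  have hlim : ∀ t, 0 < t → Tendsto (fun k => f k t) atTop (𝓝 (⨅ k, f k t)) := fun t ht =>
    tendsto_atTop_ciInf (antitone_nat_of_succ_le fun k => (inv k).2.2 t ht)
      ⟨0, by rintro _ ⟨k, rfl⟩; exact (hfc k t ht).1⟩
  have hwb : ∀ t, 0 < t → v t ≤ (⨅ k, f k t) ∧ (⨅ k, f k t) ≤ c := fun t ht =>
    ⟨ge_of_tendsto' (hlim t ht) fun k => ((inv k).2.1 t ht).1,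
      le_of_tendsto' (hlim t ht) fun k => ((inv k).2.1 t ht).2⟩
  have hwc : ∀ t, 0 < t → (⨅ k, f k t) ∈ Icc 0 c := fun t ht =>
    ⟨(hvc t ht).1.trans (hwb t ht).1, (hwb t ht).2⟩
  obtain ⟨hm, hT⟩ := hK.tendsto_operator (w := fun t => ⨅ k, f k t)
    (fun k => meas (inv k).1 (hfc k)) hfc hwc hlim
  have hfix : ∀ ξ, 0 < ξ → (⨅ k, f k ξ) = φ ξ * outerPrimitive R H (fun t => ⨅ k, f k t) ξ := by
    intro ξ hξ
    refine tendsto_nhds_unique ((tendsto_add_atTop_iff_nat 1).2 (hlim ξ hξ)) ?_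
    simp_rw [hf]
    exact hT ξ hξ
  exact ⟨fun t => ⨅ k, f k t, (hK.continuousOn_operator hm hwc).congr hfix, hwb, hfix⟩

/-- The first fundamental theorem of calculus for the inner primitive. -/
theorem hasDerivAt_innerPrimitive (hK : IsMonotoneKernel φ R H c) (hw : ContinuousOn w (Ioi 0))
    (hwc : ∀ t, 0 < t → w t ∈ Icc 0 c) {s : ℝ} (hs : 0 < s) :
    HasDerivAt (innerPrimitive H w) (H s (w s)) s := by
  have hc := hK.continuousOn_comp hw hwc
  have hm := hc.aestronglyMeasurable (μ := volume) measurableSet_Ioi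
  have hfi : IntervalIntegrable (fun t => H t (w t)) volume 0 s :=
    (intervalIntegrable_iff_integrableOn_Ioc_of_le hs.le).2 (hK.integrableOn_comp hm hwc hs)
  have h1 := intervalIntegral.integral_hasDerivAt_right hfi
    (hc.stronglyMeasurableAtFilter isOpen_Ioi s hs) (hc.continuousAt (Ioi_mem_nhds hs))
  refine h1.congr_of_eventuallyEq ?_
  filter_upwards [Ioi_mem_nhds hs] with u hu
  rw [intervalIntegral.integral_of_le (mem_Ioi.1 hu).le, innerPrimitive]

end IsMonotoneKernel

/-- The derivative of a tail integral. -/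
theorem hasDerivAt_integral_Ioi_left {f : ℝ → ℝ} {a ξ : ℝ} (haξ : a < ξ)
    (hf : ContinuousOn f (Ioi a)) (hfi : IntegrableOn f (Ioi a)) :
    HasDerivAt (fun ξ => ∫ s in Ioi ξ, f s) (-f ξ) ξ := by
  have hii : ∀ u, a < u → IntervalIntegrable f volume u (ξ + 1) := fun u hu =>
    (intervalIntegrable_iff).2 (hfi.mono_set fun y hy =>
      lt_of_le_of_lt (le_min hu.le (by linarith)) hy.1)
  have h1 := (intervalIntegral.integral_hasDerivAt_left (hii ξ haξ)
    (hf.stronglyMeasurableAtFilter isOpen_Ioi ξ haξ)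
    (hf.continuousAt (Ioi_mem_nhds haξ))).add_const (∫ s in Ioi (ξ + 1), f s)
  refine h1.congr_of_eventuallyEq ?_
  filter_upwards [Ioi_mem_nhds haξ] with u hu
  rw [intervalIntegral.integral_interval_add_Ioi (hfi.mono_set (Ioi_subset_Ioi hu.le))
    (hfi.mono_set (Ioi_subset_Ioi (by linarith)))]

theorem IsMonotoneKernel.hasDerivAt_outerPrimitive {φ R : ℝ → ℝ} {H : ℝ → ℝ → ℝ} {c : ℝ}
    {w : ℝ → ℝ} (hK : IsMonotoneKernel φ R H c) (hw : ContinuousOn w (Ioi 0))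
    (hwc : ∀ t, 0 < t → w t ∈ Icc 0 c) {ξ : ℝ} (hξ : 0 < ξ) :
    HasDerivAt (outerPrimitive R H w) (-(R ξ * innerPrimitive H w ξ)) ξ := by
  have hm := (hK.continuousOn_comp hw hwc).aestronglyMeasurable (μ := volume) measurableSet_Ioi
  have hpos : (0 : ℝ) < ξ / 2 := half_pos hξ
  exact hasDerivAt_integral_Ioi_left (half_lt_self hξ)
    ((hK.continuousOn_weight_mul hm hwc).mono (Ioi_subset_Ioi hpos.le))
    (hK.integrableOn_weight_mul hm hwc hpos)

/-- The factor `(t / (4 + t)) ^ μ`. -/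
noncomputable def saturatingPower (μ t : ℝ) : ℝ := t ^ μ * (4 + t) ^ (-μ)

/-- The integrating factor of `w'' + (1 / 4 - κ / t) w'`. -/
noncomputable def driftWeight (κ t : ℝ) : ℝ := t ^ (-κ) * Real.exp (t / 4)

/-- The flux `driftWeight κ · (saturatingPower μ)'`. -/
noncomputable def saturatingFlux (κ μ t : ℝ) : ℝ :=
  4 * μ * t ^ (μ - κ - 1) * (4 + t) ^ (-μ - 1) * Real.exp (t / 4)

/-- The potential `k` for which `saturatingPower μ` solves
`φ'' + (1 / 4 - κ / t) φ' = (k / t ^ 2) φ`. -/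
noncomputable def saturatingPotential (κ μ t : ℝ) : ℝ :=
  (μ ^ 2 + μ) * (4 / (4 + t)) ^ 2 - μ * (3 + κ) * (4 / (4 + t)) + μ

section Weights

variable {κ μ t : ℝ}

theorem saturatingPower_pos (ht : 0 < t) : 0 < saturatingPower μ t := by
  unfold saturatingPower; positivity

theorem driftWeight_pos (ht : 0 < t) : 0 < driftWeight κ t := by
  unfold driftWeight; positivity

theorem saturatingPower_eq (ht : 0 < t) : saturatingPower μ t = (t / (4 + t)) ^ μ := by
  rw [saturatingPower, Real.div_rpow ht.le (by positivity), Real.rpow_neg (by positivity),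
    div_eq_mul_inv]

theorem tendsto_saturatingPower : Tendsto (saturatingPower μ) atTop (𝓝 1) := by
  have h1 : Tendsto (fun t : ℝ => 1 - 4 / (4 + t)) atTop (𝓝 (1 - 0)) :=
    tendsto_const_nhds.sub (tendsto_const_nhds.div_atTop (tendsto_atTop_add_const_left _ _
      tendsto_id))
  have h2 := h1.rpow_const (p := μ) (Or.inl (by norm_num))
  rw [sub_zero, Real.one_rpow] at h2
  refine h2.congr' ?_
  filter_upwards [eventually_gt_atTop 0] with t ht
  rw [saturatingPower_eq ht]
  congr 1
  field_simp
  ring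

theorem hasDerivAt_add_rpow (b : ℝ) (ht : 0 < t) :
    HasDerivAt (fun t : ℝ => (4 + t) ^ b) (b * (4 + t) ^ (b - 1)) t := by
  have h := ((hasDerivAt_id t).const_add 4).rpow_const (p := b)
    (Or.inl (by simp only [id]; positivity))
  exact h.congr_deriv (by simp)

theorem hasDerivAt_exp_quarter :
    HasDerivAt (fun t : ℝ => Real.exp (t / 4)) (Real.exp (t / 4) * (1 / 4)) t :=
  ((hasDerivAt_id t).div_const 4).exp

theorem hasDerivAt_saturatingPower (ht : 0 < t) :
    HasDerivAt (saturatingPower μ) (saturatingPower μ t * (4 * μ / (t * (4 + t)))) t := by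
  have h := (Real.hasDerivAt_rpow_const (p := μ) (Or.inl ht.ne')).mul
    (hasDerivAt_add_rpow (-μ) ht)
  refine h.congr_deriv ?_
  have h4 : 4 + t ≠ 0 := by positivity
  rw [saturatingPower, Real.rpow_sub_one ht.ne', Real.rpow_sub_one h4]
  field_simp
  ring

theorem hasDerivAt_logDeriv_saturatingPower (ht : 0 < t) :
    HasDerivAt (fun t : ℝ => 4 * μ / (t * (4 + t)))
      (-(4 * μ * (4 + 2 * t)) / (t * (4 + t)) ^ 2) t := by
  have h := (hasDerivAt_const t (4 * μ)).div
    ((hasDerivAt_id t).mul ((hasDerivAt_id t).const_add 4))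
    (mul_ne_zero ht.ne' (by simp only [id]; positivity))
  refine h.congr_deriv ?_
  simp
  ring

theorem hasDerivAt_driftWeight (ht : 0 < t) :
    HasDerivAt (driftWeight κ) (driftWeight κ t * (-κ / t + 1 / 4)) t := by
  have h := (Real.hasDerivAt_rpow_const (p := -κ) (Or.inl ht.ne')).mul
    (hasDerivAt_exp_quarter (t := t))
  refine h.congr_deriv ?_
  rw [driftWeight, Real.rpow_sub_one ht.ne']
  field_simp

theorem saturatingFlux_eq (ht : 0 < t) : saturatingFlux κ μ t =
    driftWeight κ t * saturatingPower μ t * (4 * μ / (t * (4 + t))) := by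
  have h4 : 4 + t ≠ 0 := by positivity
  rw [saturatingFlux, driftWeight, saturatingPower, Real.rpow_sub_one ht.ne',
    Real.rpow_sub_one h4, Real.rpow_sub ht, Real.rpow_neg ht.le κ]
  field_simp

theorem hasDerivAt_saturatingFlux (ht : 0 < t) : HasDerivAt (saturatingFlux κ μ)
    (driftWeight κ t * saturatingPower μ t * (saturatingPotential κ μ t / t ^ 2)) t := by
  have h4 : 4 + t ≠ 0 := by positivity
  have h := ((hasDerivAt_driftWeight (κ := κ) ht).mul (hasDerivAt_saturatingPower (μ := μ) ht)).mul
    (hasDerivAt_logDeriv_saturatingPower (μ := μ) ht)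
  refine (h.congr_deriv ?_).congr_of_eventuallyEq ?_
  · simp only [Pi.mul_apply, saturatingPotential]
    field_simp
    ring
  · filter_upwards [Ioi_mem_nhds ht] with s hs using saturatingFlux_eq hs

theorem saturatingPotential_ge (hμ : 0 ≤ μ) (t : ℝ) :
    μ - (3 + κ) ^ 2 / 4 ≤ saturatingPotential κ μ t := by
  unfold saturatingPotential
  nlinarith [sq_nonneg (μ * (4 / (4 + t)) - (3 + κ) / 2), mul_nonneg hμ (sq_nonneg (4 / (4 + t)))]

theorem continuousOn_saturatingPower (hμ : 0 ≤ μ) :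
    ContinuousOn (saturatingPower μ) (Ici 0) := by
  unfold saturatingPower
  refine ContinuousOn.mul (continuousOn_id.rpow_const fun _ _ => Or.inr hμ) ?_
  exact ContinuousOn.rpow_const (by fun_prop) fun t ht =>
    Or.inl (by have := mem_Ici.1 ht; positivity)

theorem continuousOn_saturatingFlux (hμ : κ + 1 ≤ μ) :
    ContinuousOn (saturatingFlux κ μ) (Ici 0) := by
  unfold saturatingFlux
  refine ContinuousOn.mul (ContinuousOn.mul (continuousOn_const.mul
    (continuousOn_id.rpow_const fun _ _ => Or.inr (by linarith))) ?_) (by fun_prop)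
  exact ContinuousOn.rpow_const (by fun_prop) fun t ht =>
    Or.inl (by have := mem_Ici.1 ht; positivity)

/-- The weight of the outer integral, `1 / (driftWeight κ · (saturatingPower μ) ^ 2)`. -/
noncomputable def outerWeight (κ μ t : ℝ) : ℝ :=
  (driftWeight κ t * saturatingPower μ t ^ 2)⁻¹

theorem hasDerivAt_outerWeight (ht : 0 < t) : HasDerivAt (outerWeight κ μ)
    (outerWeight κ μ t * (κ / t - 1 / 4 - 8 * μ / (t * (4 + t)))) t := by
  have hφ := (saturatingPower_pos (μ := μ) ht).ne'
  have hQ := (driftWeight_pos (κ := κ) ht).ne'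
  have h4 : 4 + t ≠ 0 := by positivity
  have h := ((hasDerivAt_driftWeight (κ := κ) ht).mul
    ((hasDerivAt_saturatingPower (μ := μ) ht).pow 2)).inv (by simp [hφ, hQ])
  refine h.congr_deriv ?_
  simp only [Pi.mul_apply, Pi.pow_apply, outerWeight]
  field_simp
  ring

theorem outerWeight_pos (ht : 0 < t) : 0 < outerWeight κ μ t := by
  have hφ := saturatingPower_pos (μ := μ) ht
  have hQ := driftWeight_pos (κ := κ) ht
  unfold outerWeight
  positivity

end Weights

section Barrier

variable {κ μ η l : ℝ} {v : ℝ → ℝ}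

/-- The linear source generated by a function with constant flux `-η` integrates to its explicit
flux relative to `saturatingPower μ`. -/
theorem integral_potential_mul (hμ : 0 < μ) (hμκ : κ + 1 < μ)
    (hpot : ∀ t, 0 ≤ saturatingPotential κ μ t)
    (hv : ContinuousOn v (Ici 0)) (hv0 : ∀ t, 0 < t → 0 ≤ v t)
    (hd : ∀ t, 0 < t → HasDerivAt v (-(η / driftWeight κ t)) t) {s : ℝ} (hs : 0 < s) :
    IntegrableOn (fun t => driftWeight κ t * saturatingPower μ t *
        (saturatingPotential κ μ t / t ^ 2) * v t) (Ioc 0 s) ∧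
    ∫ t in Ioc 0 s, driftWeight κ t * saturatingPower μ t *
        (saturatingPotential κ μ t / t ^ 2) * v t
      = η * saturatingPower μ s + saturatingFlux κ μ s * v s := by
  have hcont : ContinuousOn (fun t => η * saturatingPower μ t + saturatingFlux κ μ t * v t)
      (Icc 0 s) :=
    ((continuousOn_const.mul (continuousOn_saturatingPower hμ.le)).add
      ((continuousOn_saturatingFlux hμκ.le).mul hv)).mono Icc_subset_Ici_self
  have hder : ∀ t ∈ Ioo 0 s,
      HasDerivAt (fun t => η * saturatingPower μ t + saturatingFlux κ μ t * v t)
        (driftWeight κ t * saturatingPower μ t * (saturatingPotential κ μ t / t ^ 2) * v t) t := by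
    intro t ht
    have h := ((hasDerivAt_saturatingPower (μ := μ) ht.1).const_mul η).add
      ((hasDerivAt_saturatingFlux (κ := κ) (μ := μ) ht.1).mul (hd t ht.1))
    refine h.congr_deriv ?_
    have hQ := (driftWeight_pos (κ := κ) ht.1).ne'
    rw [saturatingFlux_eq ht.1]
    field_simp
    ring
  have hnn : ∀ t ∈ Ioo 0 s, 0 ≤ driftWeight κ t * saturatingPower μ t *
      (saturatingPotential κ μ t / t ^ 2) * v t := fun t ht =>
    mul_nonneg (mul_nonneg (mul_pos (driftWeight_pos ht.1) (saturatingPower_pos ht.1)).le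
      (div_nonneg (hpot t) (sq_nonneg t))) (hv0 t ht.1)
  have hfi := intervalIntegral.integrableOn_deriv_of_nonneg hcont hder hnn
  refine ⟨hfi, ?_⟩
  rw [← intervalIntegral.integral_of_le hs.le,
    intervalIntegral.integral_eq_sub_of_hasDerivAt_of_le hs.le hcont hder
      ((intervalIntegrable_iff_integrableOn_Ioc_of_le hs.le).2 hfi)]
  have h1 : μ - κ - 1 ≠ 0 := by linarith
  simp [saturatingPower, saturatingFlux, Real.zero_rpow hμ.ne', Real.zero_rpow h1]

/-- The explicit flux integrates back to the function it comes from. -/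
theorem integral_outerWeight_mul (hμ : 0 < μ) (hη : 0 ≤ η)
    (hv0 : ∀ t, 0 < t → 0 ≤ v t)
    (hd : ∀ t, 0 < t → HasDerivAt v (-(η / driftWeight κ t)) t) (hl : Tendsto v atTop (𝓝 l))
    {ξ : ℝ} (hξ : 0 < ξ) :
    IntegrableOn (fun s => outerWeight κ μ s *
      (η * saturatingPower μ s + saturatingFlux κ μ s * v s)) (Ioi ξ) ∧
    ∫ s in Ioi ξ, outerWeight κ μ s * (η * saturatingPower μ s + saturatingFlux κ μ s * v s)
      = v ξ / saturatingPower μ ξ - l := by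
  have hder : ∀ t ∈ Ici ξ, HasDerivAt (fun t => -(v t / saturatingPower μ t))
      (outerWeight κ μ t * (η * saturatingPower μ t + saturatingFlux κ μ t * v t)) t := by
    intro t ht
    have ht0 : 0 < t := lt_of_lt_of_le hξ ht
    have hφ := (saturatingPower_pos (μ := μ) ht0).ne'
    have hQ := (driftWeight_pos (κ := κ) ht0).ne'
    refine ((hd t ht0).div (hasDerivAt_saturatingPower (μ := μ) ht0) hφ).neg.congr_deriv ?_
    rw [saturatingFlux_eq ht0, outerWeight]
    field_simp
    ring
  have hnn : ∀ t ∈ Ioi ξ,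
      0 ≤ outerWeight κ μ t * (η * saturatingPower μ t + saturatingFlux κ μ t * v t) := by
    intro t ht
    have ht0 : 0 < t := hξ.trans ht
    have hφ := saturatingPower_pos (μ := μ) ht0
    have hQ := driftWeight_pos (κ := κ) ht0
    have hR := outerWeight_pos (κ := κ) (μ := μ) ht0
    have hv := hv0 t ht0
    rw [saturatingFlux_eq ht0]
    positivity
  have hlim : Tendsto (fun t => -(v t / saturatingPower μ t)) atTop (𝓝 (-(l / 1))) :=
    (hl.div tendsto_saturatingPower one_ne_zero).neg
  refine ⟨integrableOn_Ioi_deriv_of_nonneg' hder hnn hlim, ?_⟩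
  rw [integral_Ioi_of_hasDerivAt_of_nonneg' hder hnn hlim]
  ring

end Barrier

/-- The bounded function on `(0, ∞)` vanishing at infinity with constant flux: it is continuous up
to `0`, takes the value `c` there, and has values in `[0, c]`. -/
theorem exists_constant_flux {κ c : ℝ} (hκ : -1 < κ) (hc : 0 < c) :
    ∃ (η : ℝ) (v : ℝ → ℝ), 0 ≤ η ∧ ContinuousOn v (Ici 0) ∧ v 0 = c ∧
      (∀ t, 0 < t → v t ∈ Icc 0 c) ∧
      (∀ t, 0 < t → HasDerivAt v (-(η / driftWeight κ t)) t) ∧ Tendsto v atTop (𝓝 0) := by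
  set g : ℝ → ℝ := fun s => s ^ κ * Real.exp (-(1 / 4 * s)) with hg
  have hfi : IntegrableOn g (Ioi 0) := by
    have := integrableOn_rpow_mul_exp_neg_mul_rpow (p := 1) (b := 1 / 4) hκ one_pos (by norm_num)
    simpa [hg] using this
  have hg0 : ∀ s, 0 < s → 0 ≤ g s := fun s hs => by simp only [hg]; positivity
  have hgc : ContinuousOn g (Ioi 0) :=
    (continuousOn_id.rpow_const fun s hs => Or.inl (ne_of_gt hs)).mul (by fun_prop)
  have hS : 0 < ∫ s in Ioi 0, g s := by
    have h := Real.integral_rpow_mul_exp_neg_mul_Ioi (a := κ + 1) (r := 1 / 4) (by linarith)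
      (by norm_num)
    rw [add_sub_cancel_right] at h
    rw [hg, h]
    have := Real.Gamma_pos_of_pos (show 0 < κ + 1 by linarith)
    positivity
  set S := ∫ s in Ioi 0, g s with hSdef
  refine ⟨c / S, fun t => c / S * ∫ s in Ioi t, g s, by positivity, ?_, ?_, ?_, ?_, ?_⟩
  · exact continuousOn_const.mul hfi.continuousOn_Ici_primitive_Ioi
  · simp only [← hSdef]
    field_simp
  · intro t ht
    have h0 : 0 ≤ ∫ s in Ioi t, g s :=
      setIntegral_nonneg measurableSet_Ioi fun s hs => hg0 s (ht.trans hs)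
    have h1 : ∫ s in Ioi t, g s ≤ S := by
      refine setIntegral_mono_set hfi ?_ (Ioi_subset_Ioi ht.le).eventuallyLE
      filter_upwards [ae_restrict_mem measurableSet_Ioi] with s hs using hg0 s hs
    refine ⟨by positivity, ?_⟩
    calc c / S * ∫ s in Ioi t, g s ≤ c / S * S := by gcongr
      _ = c := by field_simp
  · intro t ht
    refine ((hasDerivAt_integral_Ioi_left ht hgc hfi).const_mul (c / S)).congr_deriv ?_
    simp only [hg, driftWeight]
    rw [Real.rpow_neg ht.le, show -(1 / 4 * t) = -(t / 4) by ring, Real.exp_neg]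
    field_simp
  · have := (tendsto_integral_Ioi_zero (f := g) (μ := volume) tendsto_id).const_mul (c / S)
    simpa using this

/-- The source term `(λ w - w ^ p) / 4 + k w`, multiplied by the weight of the inner integral. -/
noncomputable def profileSource (κ μ lam p t w : ℝ) : ℝ :=
  driftWeight κ t * saturatingPower μ t *
    (((lam + 4 * saturatingPotential κ μ t) * w - w ^ p) / (4 * t ^ 2))

section Source

variable {κ μ lam p c : ℝ}

theorem monotoneOn_linear_sub_rpow {A : ℝ} (hp : 1 < p) (hA : p * c ^ (p - 1) ≤ A) :
    MonotoneOn (fun w : ℝ => A * w - w ^ p) (Icc 0 c) := by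
  have hd : ∀ w : ℝ, HasDerivAt (fun w : ℝ => A * w - w ^ p) (A * 1 - p * w ^ (p - 1)) w :=
    fun w => ((hasDerivAt_id w).const_mul A).sub (Real.hasDerivAt_rpow_const (Or.inr hp.le))
  refine monotoneOn_of_deriv_nonneg (convex_Icc 0 c)
    (fun w _ => (hd w).continuousAt.continuousWithinAt)
    (fun w _ => (hd w).differentiableAt.differentiableWithinAt) fun w hw => ?_
  rw [interior_Icc] at hw
  rw [(hd w).deriv]
  have h1 : w ^ (p - 1) ≤ c ^ (p - 1) := Real.rpow_le_rpow hw.1.le hw.2.le (by linarith)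
  have h2 : p * w ^ (p - 1) ≤ p * c ^ (p - 1) := by gcongr
  linarith

theorem rpow_le_mul (hp : 1 < p) (hcp : c ^ (p - 1) = lam) {w : ℝ} (hw : w ∈ Icc 0 c) :
    w ^ p ≤ lam * w := by
  rcases hw.1.eq_or_lt with rfl | hw0
  · rw [Real.zero_rpow (by linarith)]; simp
  · rw [show p = (p - 1) + 1 by ring, Real.rpow_add_one hw0.ne', ← hcp]
    exact mul_le_mul_of_nonneg_right (Real.rpow_le_rpow hw.1 hw.2 (by linarith)) hw0.le

theorem potential_mul_le_profileSource (hp : 1 < p) (hcp : c ^ (p - 1) = lam) {t w : ℝ}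
    (ht : 0 < t) (hw : w ∈ Icc 0 c) :
    driftWeight κ t * saturatingPower μ t * (saturatingPotential κ μ t / t ^ 2) * w
      ≤ profileSource κ μ lam p t w := by
  have hφ := saturatingPower_pos (μ := μ) ht
  have hQ := driftWeight_pos (κ := κ) ht
  have := rpow_le_mul hp hcp hw
  rw [profileSource, mul_assoc]
  refine mul_le_mul_of_nonneg_left ?_ (by positivity)
  rw [le_div_iff₀ (by positivity)]
  field_simp
  linarith

theorem profileSource_bound (hc : 0 < c) (hcp : c ^ (p - 1) = lam) {t : ℝ}
    (ht : 0 < t) : profileSource κ μ lam p t c =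
      driftWeight κ t * saturatingPower μ t * (saturatingPotential κ μ t / t ^ 2) * c := by
  have : c ^ p = lam * c := by
    rw [← hcp, ← Real.rpow_add_one hc.ne', sub_add_cancel]
  rw [profileSource, this]
  field_simp
  ring

theorem integral_source_bound (hμ : 0 < μ) (hμκ : κ + 1 < μ)
    (hpot : ∀ t, 0 ≤ saturatingPotential κ μ t) (hc : 0 < c) (hcp : c ^ (p - 1) = lam)
    {s : ℝ} (hs : 0 < s) :
    IntegrableOn (fun t => profileSource κ μ lam p t c) (Ioc 0 s) ∧
      innerPrimitive (profileSource κ μ lam p) (fun _ => c) s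
        = 0 * saturatingPower μ s + saturatingFlux κ μ s * c := by
  have h := integral_potential_mul (η := 0) (v := fun _ => c) hμ hμκ hpot continuousOn_const
    (fun _ _ => hc.le) (fun t _ => (hasDerivAt_const t c).congr_deriv (by simp)) hs
  refine ⟨h.1.congr_fun (fun t ht => (profileSource_bound hc hcp ht.1).symm) measurableSet_Ioc, ?_⟩
  rw [← h.2]
  exact setIntegral_congr_fun measurableSet_Ioc fun t ht => profileSource_bound hc hcp ht.1

theorem integral_outer_bound (hμ : 0 < μ) (hμκ : κ + 1 < μ)
    (hpot : ∀ t, 0 ≤ saturatingPotential κ μ t) (hc : 0 < c) (hcp : c ^ (p - 1) = lam)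
    {ξ : ℝ} (hξ : 0 < ξ) :
    IntegrableOn (fun s => outerWeight κ μ s *
      innerPrimitive (profileSource κ μ lam p) (fun _ => c) s) (Ioi ξ) ∧
      outerPrimitive (outerWeight κ μ) (profileSource κ μ lam p) (fun _ => c) ξ
        = c / saturatingPower μ ξ - c := by
  have h := integral_outerWeight_mul (κ := κ) (η := 0) (v := fun _ => c) hμ le_rfl
    (fun _ _ => hc.le) (fun t _ => (hasDerivAt_const t c).congr_deriv (by simp))
    tendsto_const_nhds hξ
  have heq : ∀ s ∈ Ioi ξ, outerWeight κ μ s * (0 * saturatingPower μ s + saturatingFlux κ μ s * c)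
      = outerWeight κ μ s * innerPrimitive (profileSource κ μ lam p) (fun _ => c) s :=
    fun s hs => by rw [(integral_source_bound hμ hμκ hpot hc hcp (hξ.trans hs)).2]
  refine ⟨h.1.congr_fun heq measurableSet_Ioi, ?_⟩
  rw [← h.2]
  exact (setIntegral_congr_fun measurableSet_Ioi heq).symm

theorem isMonotoneKernel_profile (hμ : 0 < μ) (hμκ : κ + 1 < μ) (hp : 1 < p)
    (hpot : ∀ t, p * lam ≤ saturatingPotential κ μ t) (hc : 0 < c) (hcp : c ^ (p - 1) = lam) :
    IsMonotoneKernel (saturatingPower μ) (outerWeight κ μ) (profileSource κ μ lam p) c := by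
  have hlam : 0 < lam := by rw [← hcp]; positivity
  have hpot0 : ∀ t, 0 ≤ saturatingPotential κ μ t := fun t =>
    le_trans (by positivity) (hpot t)
  have hφc : ContinuousOn (saturatingPower μ) (Ioi 0) :=
    fun t ht => (hasDerivAt_saturatingPower ht).continuousAt.continuousWithinAt
  have hQc : ContinuousOn (driftWeight κ) (Ioi 0) :=
    fun t ht => (hasDerivAt_driftWeight ht).continuousAt.continuousWithinAt
  have hkc : ContinuousOn (saturatingPotential κ μ) (Ioi 0) := by
    unfold saturatingPotential
    have : ContinuousOn (fun t : ℝ => 4 / (4 + t)) (Ioi 0) :=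
      ContinuousOn.div continuousOn_const (by fun_prop) fun t ht => by
        have := mem_Ioi.1 ht; positivity
    fun_prop
  refine ⟨hc.le, hφc, fun s hs => (saturatingPower_pos hs).le,
    fun t ht => (hasDerivAt_outerWeight ht).continuousAt.continuousWithinAt,
    fun s hs => (outerWeight_pos hs).le, ?_, ?_, ?_,
    fun s hs => (integral_source_bound hμ hμκ hpot0 hc hcp hs).1,
    fun ξ hξ => (integral_outer_bound hμ hμκ hpot0 hc hcp hξ).1⟩
  · have hfst : MapsTo Prod.fst (Ioi (0 : ℝ) ×ˢ Icc 0 c) (Ioi 0) := fun q hq => hq.1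
    have h1 := hφc.comp continuousOn_fst hfst
    have h2 := hQc.comp continuousOn_fst hfst
    have h3 := hkc.comp continuousOn_fst hfst
    have h4 : ContinuousOn (fun q : ℝ × ℝ => q.2 ^ p) (Ioi (0 : ℝ) ×ˢ Icc 0 c) :=
      continuousOn_snd.rpow_const fun q _ => Or.inr (by linarith)
    refine (h2.mul h1).mul ((((continuousOn_const.add (h3.const_mul 4)).mul
      continuousOn_snd).sub h4).div (by fun_prop) fun q hq => ?_)
    have : 0 < q.1 := hq.1
    positivity
  · intro t ht w hw
    have hφ := saturatingPower_pos (μ := μ) ht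
    have hQ := driftWeight_pos (κ := κ) ht
    exact le_trans (mul_nonneg (mul_nonneg (by positivity) (div_nonneg (hpot0 t) (sq_nonneg t)))
      hw.1) (potential_mul_le_profileSource hp hcp ht hw)
  · intro t ht w hw w' hw' hle
    have hφ := saturatingPower_pos (μ := μ) ht
    have hQ := driftWeight_pos (κ := κ) ht
    have h := monotoneOn_linear_sub_rpow (c := c) (A := lam + 4 * saturatingPotential κ μ t) hp
      (by rw [hcp]; linarith [hpot t, hpot0 t]) hw hw' hle
    unfold profileSource
    simp only at h
    gcongr

end Source

/-- The subsolution property of functions with constant flux. -/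
theorem le_operator_of_constant_flux {κ μ lam p c η : ℝ} {v : ℝ → ℝ} (hμ : 0 < μ)
    (hμκ : κ + 1 < μ) (hp : 1 < p) (hpot : ∀ t, p * lam ≤ saturatingPotential κ μ t)
    (hc : 0 < c) (hcp : c ^ (p - 1) = lam) (hη : 0 ≤ η) (hv : ContinuousOn v (Ici 0))
    (hvc : ∀ t, 0 < t → v t ∈ Icc 0 c)
    (hd : ∀ t, 0 < t → HasDerivAt v (-(η / driftWeight κ t)) t) (hl : Tendsto v atTop (𝓝 0))
    {ξ : ℝ} (hξ : 0 < ξ) :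
    v ξ ≤ saturatingPower μ ξ *
      outerPrimitive (outerWeight κ μ) (profileSource κ μ lam p) v ξ := by
  have hK := isMonotoneKernel_profile hμ hμκ hp hpot hc hcp
  have hlam : 0 < lam := by rw [← hcp]; positivity
  have hpot0 : ∀ t, 0 ≤ saturatingPotential κ μ t := fun t =>
    le_trans (by positivity) (hpot t)
  have hm := (hK.continuousOn_comp (hv.mono Ioi_subset_Ici_self) hvc).aestronglyMeasurable
    (μ := volume) measurableSet_Ioi
  have hφ := saturatingPower_pos (μ := μ) hξ
  have hinner : ∀ s, 0 < s → η * saturatingPower μ s + saturatingFlux κ μ s * v s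
      ≤ innerPrimitive (profileSource κ μ lam p) v s := by
    intro s hs
    have h := integral_potential_mul hμ hμκ hpot0 hv (fun t ht => (hvc t ht).1) hd hs
    rw [← h.2]
    exact setIntegral_mono_on h.1 (hK.integrableOn_comp hm hvc hs) measurableSet_Ioc
      fun t ht => potential_mul_le_profileSource hp hcp ht.1 (hvc t ht.1)
  have h := integral_outerWeight_mul hμ hη (fun t ht => (hvc t ht).1) hd hl hξ
  have houter : v ξ / saturatingPower μ ξ - 0
      ≤ outerPrimitive (outerWeight κ μ) (profileSource κ μ lam p) v ξ := by
    rw [← h.2]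
    exact setIntegral_mono_on h.1 (hK.integrableOn_weight_mul hm hvc hξ) measurableSet_Ioi
      fun s hs => mul_le_mul_of_nonneg_left (hinner s (hξ.trans hs))
        (outerWeight_pos (hξ.trans hs)).le
  rw [sub_zero, div_le_iff₀ hφ] at houter
  linarith

/-- The self-similar profile equation has a nontrivial nonnegative solution on `(0, ∞)` that
vanishes at infinity. -/
theorem exists_profile {κ lam p : ℝ} (hκ : -1 < κ) (hlam : 0 < lam) (hp : 1 < p) :
    ∃ W W' W'' : ℝ → ℝ, (∀ s, 0 < s → HasDerivAt W (W' s) s) ∧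
      (∀ s, 0 < s → HasDerivAt W' (W'' s) s) ∧ ContinuousOn W'' (Ioi 0) ∧
      (∀ s, 0 < s → 0 ≤ W s) ∧ W 0 = 0 ∧ Tendsto W atTop (𝓝 0) ∧
      (∀ s, 0 < s → 4 * s ^ 2 * W'' s + (-4 * κ * s + s ^ 2) * W' s + lam * W s - W s ^ p = 0) ∧
      ∃ s, 0 < s ∧ 0 < W s := by
  set c := lam ^ (p - 1)⁻¹
  have hc : 0 < c := by positivity
  have hcp : c ^ (p - 1) = lam := Real.rpow_inv_rpow hlam.le (by linarith)
  set μ := p * lam + (3 + κ) ^ 2 / 4 + κ + 2 with hμdef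
  have hpl : 0 < p * lam := by positivity
  have hμ : 0 < μ := by linarith [sq_nonneg (3 + κ)]
  have hμκ : κ + 1 < μ := by linarith [sq_nonneg (3 + κ)]
  have hpot : ∀ t, p * lam ≤ saturatingPotential κ μ t := fun t =>
    le_trans (by linarith) (saturatingPotential_ge hμ.le t)
  have hpot0 : ∀ t, 0 ≤ saturatingPotential κ μ t := fun t => hpl.le.trans (hpot t)
  have hK := isMonotoneKernel_profile hμ hμκ hp hpot hc hcp
  obtain ⟨η, v, hη, hv, hv0, hvc, hd, hl⟩ := exists_constant_flux hκ hc
  obtain ⟨w, hw, hwb, hfix⟩ := hK.exists_fixedPoint (hv.mono Ioi_subset_Ici_self) hvc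
    (fun ξ hξ => le_operator_of_constant_flux hμ hμκ hp hpot hc hcp hη hv hvc hd hl hξ)
    (fun ξ hξ => by
      have hφ := saturatingPower_pos (μ := μ) hξ
      rw [(integral_outer_bound hμ hμκ hpot0 hc hcp hξ).2, mul_sub, mul_div_cancel₀ _ hφ.ne']
      nlinarith [mul_pos hφ hc])
  have hwc : ∀ t, 0 < t → w t ∈ Icc 0 c := fun t ht =>
    ⟨(hvc t ht).1.trans (hwb t ht).1, (hwb t ht).2⟩
  set φ := saturatingPower μ with hφdef
  set R := outerWeight κ μ with hRdef
  set J := outerPrimitive R (profileSource κ μ lam p) w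
  set I := innerPrimitive (profileSource κ μ lam p) w
  have hJ : ∀ s, 0 < s → HasDerivAt J (-(R s * I s)) s := fun s hs =>
    hK.hasDerivAt_outerPrimitive hw hwc hs
  have hI : ∀ s, 0 < s → HasDerivAt I (profileSource κ μ lam p s (w s)) s := fun s hs =>
    hK.hasDerivAt_innerPrimitive hw hwc hs
  have hφd : ∀ s, 0 < s → HasDerivAt φ (φ s * (4 * μ / (s * (4 + s)))) s := fun s hs =>
    hasDerivAt_saturatingPower hs
  have hRd : ∀ s, 0 < s → HasDerivAt R (R s * (κ / s - 1 / 4 - 8 * μ / (s * (4 + s)))) s :=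
    fun s hs => hasDerivAt_outerWeight hs
  let W : ℝ → ℝ := fun s => φ s * J s
  let W' : ℝ → ℝ := fun s => φ s * (4 * μ / (s * (4 + s))) * J s - φ s * (R s * I s)
  let W'' : ℝ → ℝ := fun s => (κ / s - 1 / 4) * W' s - (lam * w s - w s ^ p) / (4 * s ^ 2)
  have hWw : ∀ s, 0 < s → W s = w s := fun s hs => (hfix s hs).symm
  have hW1 : ∀ s, 0 < s → HasDerivAt W (W' s) s := fun s hs =>
    ((hφd s hs).mul (hJ s hs)).congr_deriv (by simp only [W']; ring)
  have hW2 : ∀ s, 0 < s → HasDerivAt W' (W'' s) s := by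
    intro s hs
    have h := (((hφd s hs).mul (hasDerivAt_logDeriv_saturatingPower (μ := μ) hs)).mul (hJ s hs)).sub
      ((hφd s hs).mul ((hRd s hs).mul (hI s hs)))
    refine h.congr_deriv ?_
    have hφ0 := (saturatingPower_pos (μ := μ) hs).ne'
    have hQ0 := (driftWeight_pos (κ := κ) hs).ne'
    have h4 : 4 + s ≠ 0 := by positivity
    simp only [Pi.mul_apply, W'', W', profileSource]
    generalize hwp : w s ^ p = y
    rw [hfix s hs]
    simp only [hφdef, hRdef, outerWeight, saturatingPotential]
    field_simp
    ring
  have hc' : ContinuousOn W' (Ioi 0) := fun s hs => (hW2 s hs).continuousAt.continuousWithinAt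
  refine ⟨W, W', W'', hW1, hW2, ?_, ?_, ?_, ?_, ?_, ?_⟩
  · refine ((ContinuousOn.sub (continuousOn_const.div continuousOn_id fun s hs => ne_of_gt hs)
      continuousOn_const).mul hc').sub (((continuousOn_const.mul hw).sub
        (hw.rpow_const fun s _ => Or.inr (by linarith))).div (by fun_prop) fun s hs => ?_)
    have : 0 < s := hs
    positivity
  · intro s hs
    rw [hWw s hs]
    exact (hwc s hs).1
  · simp [W, hφdef, saturatingPower, Real.zero_rpow hμ.ne']
  · have h1 : Tendsto J atTop (𝓝 0) :=
      tendsto_integral_Ioi_zero (f := fun s => R s * I s) (μ := volume) tendsto_id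
    have h2 := (tendsto_saturatingPower (μ := μ)).mul h1
    rwa [one_mul] at h2
  · intro s hs
    simp only [W'']
    rw [hWw s hs]
    field_simp
    ring
  · have hev : ∀ᶠ s in 𝓝[>] (0 : ℝ), 0 < v s := by
      have h1 : Tendsto v (𝓝[>] 0) (𝓝 (v 0)) :=
        (hv 0 self_mem_Ici).mono Ioi_subset_Ici_self
      exact h1.eventually_const_lt (by rw [hv0]; exact hc)
    obtain ⟨s, hs, hs0⟩ := (hev.and self_mem_nhdsWithin).exists
    exact ⟨s, hs0, by rw [hWw s hs0]; exact hs.trans_le (hwb s hs0).1⟩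

/-- if `n ≥ 3` and `1 < p < n/(n-2)`, there is a nontrivial classical
solution of (P) with vanishing initial data. -/
theorem nonuniqueness_of_punctured_cauchy_problem
    (n : ℕ) (hn : 3 ≤ n) (p : ℝ) (hp : 1 < p) (hpn : p < (n : ℝ) / ((n : ℝ) - 2)) :
    ∃ u : EuclideanSpace ℝ (Fin n) → ℝ → ℝ,
      IsClassicalSolution n p (fun _ => 0) u ∧
      ∃ x : EuclideanSpace ℝ (Fin n), x ≠ 0 ∧ ∃ t : ℝ, 0 ≤ t ∧ u x t ≠ 0 := by
  have hn' : (0 : ℝ) < (n : ℝ) - 2 := by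
    have : (3 : ℝ) ≤ n := by exact_mod_cast hn
    linarith
  have hp' : 0 < p - 1 := by linarith
  set a := (p - 1)⁻¹ with ha
  have ha0 : 0 < a := inv_pos.2 hp'
  have hap : a * (p - 1) = 1 := inv_mul_cancel₀ hp'.ne'
  have h2a : (n : ℝ) - 2 < 2 * a := by
    rw [lt_div_iff₀ hn'] at hpn
    have : (p - 1) * ((n : ℝ) - 2) < 2 := by linarith
    rw [ha, ← div_eq_mul_inv, lt_div_iff₀ hp']
    linarith
  obtain ⟨W, W', W'', hW, hW', hc, hnn, h0, hlim, hode, s, hs, hpos⟩ :=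
    exists_profile (κ := 2 * a - n / 2) (lam := 2 * a * (2 * a + 2 - n)) (p := p)
      (by linarith) (by have : 0 < 2 * a + 2 - n := by linarith
                        positivity) hp
  refine ⟨_, isClassicalSolution_of_profile hap hW hW' hc hnn h0 hlim fun s hs => ?_, ?_⟩
  · have := hode s hs
    linear_combination this
  · refine ⟨EuclideanSpace.single ⟨0, by omega⟩ 1, by simp, s⁻¹, by positivity, ?_⟩
    simpa using hpos.ne'
end

section
/- Let n ≥ 3 be an integer and let p ≥ n/(n−2). Then for every continuous g ≥ 0 on ℝⁿ∖{0}, the classical solution of the Cauchy problem (P) is unique: if u₁ and u₂ are both classical solutions of (P) with the same initial data g, then u₁ = u₂ on (ℝⁿ∖{0}) × [0,∞). -/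
open scoped BigOperators

open Filter Topology Set

section Calculus

/-- Necessary second-order condition at a local maximum. -/
theorem IsLocalMax.secondDeriv_nonpos {φ φ' : ℝ → ℝ} {s c : ℝ} (hmax : IsLocalMax φ s)
    (hφ : ∀ᶠ r in 𝓝 s, HasDerivAt φ (φ' r) r) (hφ' : HasDerivAt φ' c s) : c ≤ 0 := by
  by_contra! hc
  have hderiv : deriv φ =ᶠ[𝓝 s] φ' := hφ.mono fun r hr => hr.deriv
  have hc' : deriv (deriv φ) s = c := by rw [hderiv.deriv_eq, hφ'.deriv]
  have hmin : IsLocalMin φ s :=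
    isLocalMin_of_deriv_deriv_pos (hc'.symm ▸ hc) hmax.deriv_eq_zero hφ.self_of_nhds.continuousAt
  have hconst : φ =ᶠ[𝓝 s] fun _ => φ s := by
    filter_upwards [hmax, hmin] with r h₁ h₂ using le_antisymm h₁ h₂
  have : deriv φ =ᶠ[𝓝 s] fun _ => 0 := by simpa using hconst.deriv
  have h0 : deriv (deriv φ) s = 0 := by simpa using this.deriv_eq
  linarith

/-- A function that does not exceed its value at `t` just before `t` has a nonnegative derivative
at `t`. -/
theorem HasDerivAt.nonneg_of_eventually_le_left {f : ℝ → ℝ} {f' t : ℝ} (hf : HasDerivAt f f' t)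
    (hle : ∀ᶠ s in 𝓝[<] t, f s ≤ f t) : 0 ≤ f' := by
  refine ge_of_tendsto (hasDerivAt_iff_tendsto_slope_left_right.1 hf).1 ?_
  filter_upwards [hle, self_mem_nhdsWithin] with s hs hst
  rw [slope_def_field]
  exact div_nonneg_of_nonpos (by linarith) (by simpa using (mem_Iio.1 hst).le)

variable {E : Type*} [NormedAddCommGroup E] [NormedSpace ℝ E]

theorem hasDerivAt_line (x e : E) (s : ℝ) : HasDerivAt (fun r : ℝ => x + r • e) e s := by
  simpa using ((hasDerivAt_id s).smul_const e).const_add x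

theorem tendsto_line (x e : E) : Tendsto (fun r : ℝ => x + r • e) (𝓝 0) (𝓝 x) := by
  simpa [ContinuousAt] using (hasDerivAt_line x e 0).continuousAt

/-- First derivative of a `C²` function along a line. -/
theorem ContDiffAt.eventually_hasDerivAt_line {f : E → ℝ} {x : E} (hf : ContDiffAt ℝ 2 f x)
    (e : E) :
    ∀ᶠ s in 𝓝 (0 : ℝ),
      HasDerivAt (fun r : ℝ => f (x + r • e)) (fderiv ℝ f (x + s • e) e) s := by
  have h : ∀ᶠ y in 𝓝 x, DifferentiableAt ℝ f y :=
    (hf.eventually (by simp)).mono fun y hy => hy.differentiableAt (by simp)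
  filter_upwards [(tendsto_line x e).eventually h] with s hs
  exact hs.hasFDerivAt.comp_hasDerivAt s (hasDerivAt_line x e s)

/-- Second derivative of a `C²` function along a line. -/
theorem ContDiffAt.hasDerivAt_fderiv_line {f : E → ℝ} {x : E} (hf : ContDiffAt ℝ 2 f x) (e : E) :
    HasDerivAt (fun r : ℝ => fderiv ℝ f (x + r • e) e)
      (fderiv ℝ (fun y => fderiv ℝ f y e) x e) 0 := by
  have h₁ : DifferentiableAt ℝ (fderiv ℝ f) x :=
    (hf.fderiv_right (m := 1) (by norm_num)).differentiableAt (by simp)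
  have h₂ : DifferentiableAt ℝ (fun y => fderiv ℝ f y e) (x + (0 : ℝ) • e) := by
    simpa using h₁.clm_apply (differentiableAt_const e)
  have h₃ := h₂.hasFDerivAt.comp_hasDerivAt (0 : ℝ) (hasDerivAt_line x e 0)
  rw [zero_smul, add_zero] at h₃
  exact h₃

end Calculus

section RadialSupersolution

/-- The function `x ↦ Φ (‖x‖ ^ 2)` is a positive supersolution of `Δv = v ^ p` on
`{x : ℝⁿ | ‖x‖ ^ 2 ∈ S}`, where `Φ'` and `Φ''` are the first two derivatives of `Φ` on `S`. -/
structure IsRadialSupersolution (n : ℕ) (p : ℝ) (S : Set ℝ) (Φ Φ' Φ'' : ℝ → ℝ) : Prop where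
  pos : ∀ q ∈ S, 0 < Φ q
  hasDerivAt : ∀ q ∈ S, HasDerivAt Φ (Φ' q) q
  hasDerivAt' : ∀ q ∈ S, HasDerivAt Φ' (Φ'' q) q
  le_rpow : ∀ q ∈ S, 2 * n * Φ' q + 4 * q * Φ'' q ≤ Φ q ^ p

theorem IsRadialSupersolution.add {n : ℕ} {p : ℝ} (hp : 1 ≤ p) {S T : Set ℝ}
    {Φ Φ' Φ'' Ψ Ψ' Ψ'' : ℝ → ℝ} (hΦ : IsRadialSupersolution n p S Φ Φ' Φ'')
    (hΨ : IsRadialSupersolution n p T Ψ Ψ' Ψ'') :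
    IsRadialSupersolution n p (S ∩ T) (fun q => Φ q + Ψ q) (fun q => Φ' q + Ψ' q)
      (fun q => Φ'' q + Ψ'' q) where
  pos q hq := add_pos (hΦ.pos q hq.1) (hΨ.pos q hq.2)
  hasDerivAt q hq := (hΦ.hasDerivAt q hq.1).add (hΨ.hasDerivAt q hq.2)
  hasDerivAt' q hq := (hΦ.hasDerivAt' q hq.1).add (hΨ.hasDerivAt' q hq.2)
  le_rpow q hq := by
    have h := Real.add_rpow_le_rpow_add (hΦ.pos q hq.1).le (hΨ.pos q hq.2).le hp
    linarith [hΦ.le_rpow q hq.1, hΨ.le_rpow q hq.2]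

theorem norm_add_smul_single_sq {n : ℕ} (x : EuclideanSpace ℝ (Fin n)) (i : Fin n) (s : ℝ) :
    ‖x + s • EuclideanSpace.single i (1 : ℝ)‖ ^ 2 = ‖x‖ ^ 2 + 2 * s * x i + s ^ 2 := by
  rw [norm_add_sq_real, inner_smul_right, EuclideanSpace.inner_single_right, norm_smul,
    PiLp.norm_single]
  simp
  ring

/-- At a local maximum of `f₁ - f₂ - Φ(‖·‖²)`, the Laplacian of this difference is
nonpositive. -/
theorem laplacian_sub_le_of_isLocalMax {n : ℕ} {f₁ f₂ : EuclideanSpace ℝ (Fin n) → ℝ}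
    {x : EuclideanSpace ℝ (Fin n)} {Φ Φ' Φ'' : ℝ → ℝ}
    (hf₁ : ContDiffAt ℝ 2 f₁ x) (hf₂ : ContDiffAt ℝ 2 f₂ x)
    (hΦ : ∀ᶠ q in 𝓝 (‖x‖ ^ 2), HasDerivAt Φ (Φ' q) q)
    (hΦ' : HasDerivAt Φ' (Φ'' (‖x‖ ^ 2)) (‖x‖ ^ 2))
    (hmax : IsLocalMax (fun y => f₁ y - f₂ y - Φ (‖y‖ ^ 2)) x) :
    laplacian f₁ x - laplacian f₂ x ≤
      2 * n * Φ' (‖x‖ ^ 2) + 4 * ‖x‖ ^ 2 * Φ'' (‖x‖ ^ 2) := by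
  have key : ∀ i : Fin n,
      fderiv ℝ (fun y => fderiv ℝ f₁ y (EuclideanSpace.single i 1)) x
          (EuclideanSpace.single i 1) -
        fderiv ℝ (fun y => fderiv ℝ f₂ y (EuclideanSpace.single i 1)) x
          (EuclideanSpace.single i 1) ≤
      2 * Φ' (‖x‖ ^ 2) + 4 * x i ^ 2 * Φ'' (‖x‖ ^ 2) := by
    intro i
    set e : EuclideanSpace ℝ (Fin n) := EuclideanSpace.single i 1 with he
    have hq : ∀ s : ℝ, HasDerivAt (fun r : ℝ => ‖x + r • e‖ ^ 2) (2 * x i + 2 * s) s := by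
      intro s
      simp only [he, norm_add_smul_single_sq]
      have h₁ : HasDerivAt (fun r : ℝ => 2 * r * x i) (2 * 1 * x i) s :=
        ((hasDerivAt_id s).const_mul 2).mul_const (x i)
      have h₂ : HasDerivAt (fun r : ℝ => r ^ 2) (2 * s) s := by simpa using hasDerivAt_pow 2 s
      exact ((h₁.const_add (‖x‖ ^ 2)).add h₂).congr_deriv (by ring)
    have hq0 : Tendsto (fun r : ℝ => ‖x + r • e‖ ^ 2) (𝓝 0) (𝓝 (‖x‖ ^ 2)) := by
      simpa [ContinuousAt] using (hq 0).continuousAt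
    have hfirst : ∀ᶠ s in 𝓝 (0 : ℝ),
        HasDerivAt (fun r : ℝ => Φ (‖x + r • e‖ ^ 2)) (Φ' (‖x + s • e‖ ^ 2) * (2 * x i + 2 * s))
          s := by
      filter_upwards [hq0.eventually hΦ] with s hs
      exact hs.comp s (hq s)
    have hsecond : HasDerivAt (fun r : ℝ => Φ' (‖x + r • e‖ ^ 2) * (2 * x i + 2 * r))
        (2 * Φ' (‖x‖ ^ 2) + 4 * x i ^ 2 * Φ'' (‖x‖ ^ 2)) 0 := by
      have h₁ : HasDerivAt (fun r : ℝ => Φ' (‖x + r • e‖ ^ 2))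
          (Φ'' (‖x‖ ^ 2) * (2 * x i + 2 * 0)) 0 :=
        HasDerivAt.comp (h₂ := Φ') 0 (by simpa using hΦ') (hq 0)
      have h₂ : HasDerivAt (fun r : ℝ => 2 * x i + 2 * r) 2 0 := by
        simpa using ((hasDerivAt_id (0 : ℝ)).const_mul 2).const_add (2 * x i)
      refine (h₁.mul h₂).congr_deriv ?_
      rw [zero_smul, add_zero]
      ring
    have hmaxline : IsLocalMax
        (fun r : ℝ => f₁ (x + r • e) - f₂ (x + r • e) - Φ (‖x + r • e‖ ^ 2)) 0 := by
      have := (tendsto_line x e).eventually hmax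
      simpa [IsLocalMax, IsMaxFilter] using this
    have := hmaxline.secondDeriv_nonpos
      (by
        filter_upwards [hf₁.eventually_hasDerivAt_line e, hf₂.eventually_hasDerivAt_line e,
          hfirst] with s h₁ h₂ h₃
        exact (h₁.sub h₂).sub h₃)
      (((hf₁.hasDerivAt_fderiv_line e).sub (hf₂.hasDerivAt_fderiv_line e)).sub hsecond)
    linarith
  calc laplacian f₁ x - laplacian f₂ x
      ≤ ∑ i : Fin n, (2 * Φ' (‖x‖ ^ 2) + 4 * x i ^ 2 * Φ'' (‖x‖ ^ 2)) := by
        rw [laplacian, laplacian, ← Finset.sum_sub_distrib]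
        exact Finset.sum_le_sum fun i _ => key i
    _ = 2 * n * Φ' (‖x‖ ^ 2) + 4 * ‖x‖ ^ 2 * Φ'' (‖x‖ ^ 2) := by
        rw [Finset.sum_add_distrib, ← Finset.sum_mul _ _ (Φ'' _), ← Finset.mul_sum _ _ (4 : ℝ),
          ← EuclideanSpace.real_norm_sq_eq]
        simp
        ring

end RadialSupersolution

section Comparison

/-- The difference of two solutions with the same initial datum lies below every radial
supersolution that blows up at the boundary of an annulus. -/
theorem IsClassicalSolution.sub_le_of_isRadialSupersolution {n : ℕ} {p : ℝ} (hp : 1 ≤ p)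
    {g : EuclideanSpace ℝ (Fin n) → ℝ} {u₁ u₂ : EuclideanSpace ℝ (Fin n) → ℝ → ℝ}
    (h₁ : IsClassicalSolution n p g u₁) (h₂ : IsClassicalSolution n p g u₂)
    {a b : ℝ} (ha : 0 < a) {Φ Φ' Φ'' : ℝ → ℝ}
    (hΦ : IsRadialSupersolution n p (Ioo a b) Φ Φ' Φ'')
    (hΦa : Tendsto Φ (𝓝[>] a) atTop) (hΦb : Tendsto Φ (𝓝[<] b) atTop)
    {x₀ : EuclideanSpace ℝ (Fin n)} (hx₀ : ‖x₀‖ ^ 2 ∈ Ioo a b) {t₀ : ℝ} (ht₀ : 0 ≤ t₀) :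
    u₁ x₀ t₀ - u₂ x₀ t₀ ≤ Φ (‖x₀‖ ^ 2) := by
  by_contra! hlt
  let A : ℝ → ℝ → Set (EuclideanSpace ℝ (Fin n)) := fun c d => {x | ‖x‖ ^ 2 ∈ Icc c d}
  have hA : ∀ c d, IsCompact (A c d) := by
    intro c d
    refine Metric.isCompact_of_isClosed_isBounded
      (isClosed_Icc.preimage (by fun_prop : Continuous fun x : EuclideanSpace ℝ (Fin n) =>
        ‖x‖ ^ 2)) ?_
    refine (Metric.isBounded_closedBall (x := (0 : EuclideanSpace ℝ (Fin n)))
      (r := d + 1)).subset fun x hx => ?_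
    have : ‖x‖ ^ 2 ≤ d := hx.2
    rw [mem_closedBall_zero_iff]
    nlinarith [sq_nonneg (‖x‖ - 1)]
  have hne : ∀ {x : EuclideanSpace ℝ (Fin n)}, a ≤ ‖x‖ ^ 2 → x ≠ 0 := by
    rintro x hx rfl
    norm_num at hx
    linarith
  have hw : ContinuousOn (fun z : EuclideanSpace ℝ (Fin n) × ℝ => u₁ z.1 z.2 - u₂ z.1 z.2)
      (A a b ×ˢ Icc 0 t₀) :=
    (h₁.continuousOn.sub h₂.continuousOn).mono fun z hz => ⟨hne hz.1.1, hz.2.1⟩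
  obtain ⟨M, hM⟩ := (((hA a b).prod isCompact_Icc).image_of_continuousOn hw).bddAbove
  have hwM : ∀ x ∈ A a b, ∀ t ∈ Icc 0 t₀, u₁ x t - u₂ x t ≤ M := fun x hx t ht =>
    hM ⟨(x, t), ⟨hx, ht⟩, rfl⟩
  obtain ⟨a₁, hMa, haa₁, ha₁⟩ := ((hΦa.eventually_ge_atTop M).and
    (Ioo_mem_nhdsGT hx₀.1)).exists
  obtain ⟨b₁, hMb, hb₁, hbb₁⟩ := ((hΦb.eventually_ge_atTop M).and
    (Ioo_mem_nhdsLT hx₀.2)).exists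
  have hsub : A a₁ b₁ ⊆ A a b := fun x hx => ⟨haa₁.le.trans hx.1, hx.2.trans hbb₁.le⟩
  have hmem : ∀ {x}, x ∈ A a₁ b₁ → ‖x‖ ^ 2 ∈ Ioo a b := fun hx =>
    ⟨haa₁.trans_le hx.1, hx.2.trans_lt hbb₁⟩
  have hF : ContinuousOn (fun z : EuclideanSpace ℝ (Fin n) × ℝ =>
      u₁ z.1 z.2 - u₂ z.1 z.2 - Φ (‖z.1‖ ^ 2)) (A a₁ b₁ ×ˢ Icc 0 t₀) := by
    refine (hw.mono (prod_mono hsub le_rfl)).sub fun z hz => ?_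
    have hc : ContinuousAt (fun z : EuclideanSpace ℝ (Fin n) × ℝ => ‖z.1‖ ^ 2) z := by fun_prop
    exact (ContinuousAt.comp (f := fun z : EuclideanSpace ℝ (Fin n) × ℝ => ‖z.1‖ ^ 2)
      (hΦ.hasDerivAt _ (hmem hz.1)).continuousAt hc).continuousWithinAt
  have hx₀A : x₀ ∈ A a₁ b₁ := ⟨ha₁.le, hb₁.le⟩
  obtain ⟨⟨x, t⟩, ⟨hxA, ht⟩, hmax⟩ := ((hA a₁ b₁).prod isCompact_Icc).exists_isMaxOn
    ⟨(x₀, t₀), hx₀A, ht₀, le_rfl⟩ hF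
  have hmax' : ∀ y ∈ A a₁ b₁, ∀ s ∈ Icc 0 t₀,
      u₁ y s - u₂ y s - Φ (‖y‖ ^ 2) ≤ u₁ x t - u₂ x t - Φ (‖x‖ ^ 2) := fun y hy s hs =>
    hmax (show (y, s) ∈ A a₁ b₁ ×ˢ Icc 0 t₀ from ⟨hy, hs⟩)
  have hpos : Φ (‖x‖ ^ 2) < u₁ x t - u₂ x t := by
    have := hmax' x₀ hx₀A t₀ ⟨ht₀, le_rfl⟩
    linarith
  have hx0 : x ≠ 0 := hne (hmem hxA).1.le
  have hΦpos := hΦ.pos _ (hmem hxA)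
  have htpos : 0 < t := by
    refine lt_of_le_of_ne ht.1 fun h => ?_
    rw [← h, h₁.initial x hx0, h₂.initial x hx0] at hpos
    linarith
  have hxa : a₁ < ‖x‖ ^ 2 := by
    refine lt_of_le_of_ne hxA.1 fun h => ?_
    have := hwM x (hsub hxA) t ht
    rw [← h] at hpos
    linarith
  have hxb : ‖x‖ ^ 2 < b₁ := by
    refine lt_of_le_of_ne hxA.2 fun h => ?_
    have := hwM x (hsub hxA) t ht
    rw [h] at hpos
    linarith
  have hspace : IsLocalMax (fun y => u₁ y t - u₂ y t - Φ (‖y‖ ^ 2)) x := by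
    have hc : ContinuousAt (fun y : EuclideanSpace ℝ (Fin n) => ‖y‖ ^ 2) x := by fun_prop
    filter_upwards [hc.eventually (Ioo_mem_nhds hxa hxb)] with y hy
    exact hmax' y ⟨hy.1.le, hy.2.le⟩ t ht
  have hlap := laplacian_sub_le_of_isLocalMax (h₁.contDiff_space x hx0 t htpos)
    (h₂.contDiff_space x hx0 t htpos)
    (eventually_of_mem (Ioo_mem_nhds (hmem hxA).1 (hmem hxA).2) hΦ.hasDerivAt)
    (hΦ.hasDerivAt' _ (hmem hxA)) hspace
  have htime : 0 ≤ deriv (u₁ x) t - deriv (u₂ x) t := by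
    refine HasDerivAt.nonneg_of_eventually_le_left
      (((h₁.contDiff_time x hx0 t htpos).differentiableAt (by simp)).hasDerivAt.sub
        ((h₂.contDiff_time x hx0 t htpos).differentiableAt (by simp)).hasDerivAt) ?_
    filter_upwards [Ioo_mem_nhdsLT htpos] with s hs
    have := hmax' x hxA s ⟨hs.1.le, hs.2.le.trans ht.2⟩
    simp only [Pi.sub_apply]
    linarith
  have hu₂ := h₂.nonneg x hx0 t htpos
  have hpow : u₂ x t ^ p + Φ (‖x‖ ^ 2) ^ p < u₁ x t ^ p :=
    (Real.add_rpow_le_rpow_add hu₂ hΦpos.le hp).trans_lt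
      (Real.rpow_lt_rpow (by positivity) (by linarith) (by linarith))
  linarith [h₁.pde x hx0 t htpos, h₂.pde x hx0 t htpos, hΦ.le_rpow _ (hmem hxA)]

end Comparison

section Barrier

/-- A positive profile on `(0, ∞)` that blows up at `0`, vanishes at infinity and satisfies
`4 h'' + C |h'| ≤ h ^ p`. -/
structure IsBarrierProfile (p C : ℝ) (h h' h'' : ℝ → ℝ) : Prop where
  pos : ∀ s, 0 < s → 0 < h s
  hasDerivAt : ∀ s, 0 < s → HasDerivAt h (h' s) s
  hasDerivAt' : ∀ s, 0 < s → HasDerivAt h' (h'' s) s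
  le_rpow : ∀ s, 0 < s → 4 * h'' s + C * |h' s| ≤ h s ^ p
  tendsto_nhdsGT : Tendsto h (𝓝[>] 0) atTop
  tendsto_atTop : Tendsto h atTop (𝓝 0)

theorem Real.rpow_le_rpow_add_rpow {s x y z : ℝ} (hs : 0 < s) (hxy : x ≤ y) (hzx : z ≤ x) :
    s ^ x ≤ s ^ y + s ^ z := by
  have hy := Real.rpow_pos_of_pos hs y
  have hz := Real.rpow_pos_of_pos hs z
  rcases le_total 1 s with h | h
  · linarith [Real.rpow_le_rpow_of_exponent_le h hxy]
  · linarith [Real.rpow_le_rpow_of_exponent_ge hs h hzx]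

theorem exists_isBarrierProfile {γ : ℝ} (hγ : 0 < γ) {C : ℝ} (hC : 0 ≤ C) :
    ∃ h h' h'' : ℝ → ℝ, IsBarrierProfile (1 + 1 / γ) C h h' h'' := by
  set D : ℝ := 4 * γ * (γ + 1) + 8 * γ * (2 * γ + 1) + 3 * C * γ with hD
  have hDpos : 0 < D := by positivity
  set A : ℝ := D ^ γ with hA
  have hApos : 0 < A := Real.rpow_pos_of_pos hDpos γ
  have hAp : A ^ (1 + 1 / γ) = A * D := by
    rw [Real.rpow_add hApos, Real.rpow_one, hA, ← Real.rpow_mul hDpos.le,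
      mul_one_div_cancel hγ.ne', Real.rpow_one]
  refine ⟨fun s => A * (s ^ (-γ) + s ^ (-(2 * γ))),
    fun s => A * (-γ * s ^ (-γ - 1) + -(2 * γ) * s ^ (-(2 * γ) - 1)),
    fun s => A * (-γ * ((-γ - 1) * s ^ (-γ - 1 - 1)) +
      -(2 * γ) * ((-(2 * γ) - 1) * s ^ (-(2 * γ) - 1 - 1))), ?_, ?_, ?_, ?_, ?_, ?_⟩
  · intro s hs
    positivity
  · intro s hs
    exact ((Real.hasDerivAt_rpow_const (Or.inl hs.ne')).add
      (Real.hasDerivAt_rpow_const (Or.inl hs.ne'))).const_mul A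
  · intro s hs
    exact (((Real.hasDerivAt_rpow_const (Or.inl hs.ne')).const_mul _).add
      ((Real.hasDerivAt_rpow_const (Or.inl hs.ne')).const_mul _)).const_mul A
  · intro s hs
    have h₁ : s ^ (-γ - 1 - 1) ≤ s ^ (-γ - 1) + s ^ (-(2 * γ) - 1 - 1) :=
      Real.rpow_le_rpow_add_rpow hs (by linarith) (by linarith)
    have h₂ : s ^ (-(2 * γ) - 1) ≤ s ^ (-γ - 1) + s ^ (-(2 * γ) - 1 - 1) :=
      Real.rpow_le_rpow_add_rpow hs (by linarith) (by linarith)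
    have hpow : A * D * (s ^ (-γ - 1) + s ^ (-(2 * γ) - 1 - 1)) ≤
        (A * (s ^ (-γ) + s ^ (-(2 * γ)))) ^ (1 + 1 / γ) := by
      rw [Real.mul_rpow hApos.le (by positivity), hAp]
      refine mul_le_mul_of_nonneg_left ?_ (by positivity)
      have e₁ : s ^ (-γ - 1) = (s ^ (-γ)) ^ (1 + 1 / γ) := by
        rw [← Real.rpow_mul hs.le]
        congr 1
        field_simp
        ring
      have e₂ : s ^ (-(2 * γ) - 1 - 1) = (s ^ (-(2 * γ))) ^ (1 + 1 / γ) := by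
        rw [← Real.rpow_mul hs.le]
        congr 1
        field_simp
        ring
      rw [e₁, e₂]
      exact Real.add_rpow_le_rpow_add (by positivity) (by positivity)
        (by linarith [one_div_pos.2 hγ])
    refine le_trans ?_ hpow
    have hX : 0 < s ^ (-γ - 1) := by positivity
    have hY : 0 < s ^ (-(2 * γ) - 1 - 1) := by positivity
    have hZ : 0 < s ^ (-(2 * γ) - 1) := by positivity
    set X := s ^ (-γ - 1)
    set Y := s ^ (-(2 * γ) - 1 - 1)
    set Z := s ^ (-(2 * γ) - 1)
    set W := s ^ (-γ - 1 - 1)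
    have habs : |A * (-γ * X + -(2 * γ) * Z)| = A * (γ * X + 2 * γ * Z) := by
      rw [show A * (-γ * X + -(2 * γ) * Z) = -(A * (γ * X + 2 * γ * Z)) by ring, abs_neg,
        abs_of_pos (by positivity)]
    have hbound : 4 * (γ * (γ + 1)) * W + 4 * (2 * γ * (2 * γ + 1)) * Y +
        C * γ * X + C * (2 * γ) * Z ≤ D * (X + Y) := by
      have b₁ : 4 * (γ * (γ + 1)) * W ≤ 4 * (γ * (γ + 1)) * (X + Y) := by gcongr
      have b₂ : C * (2 * γ) * Z ≤ C * (2 * γ) * (X + Y) := by gcongr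
      have b₃ : 4 * (2 * γ * (2 * γ + 1)) * Y ≤ 4 * (2 * γ * (2 * γ + 1)) * (X + Y) := by
        gcongr
        linarith
      have b₄ : C * γ * X ≤ C * γ * (X + Y) := by
        gcongr
        linarith
      rw [hD]
      linarith
    rw [habs]
    calc _ = A * (4 * (γ * (γ + 1)) * W + 4 * (2 * γ * (2 * γ + 1)) * Y +
          C * γ * X + C * (2 * γ) * Z) := by ring
      _ ≤ A * (D * (X + Y)) := by gcongr
      _ = _ := by ring
  · refine Tendsto.const_mul_atTop hApos
      (tendsto_atTop_mono' _ ?_ (tendsto_rpow_neg_nhdsGT_zero (by linarith : -γ < 0)))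
    · filter_upwards [self_mem_nhdsWithin] with s hs
      exact le_add_of_nonneg_right (Real.rpow_nonneg (mem_Ioi.1 hs).le _)
  · simpa using ((tendsto_rpow_neg_atTop hγ).add
      (tendsto_rpow_neg_atTop (by linarith : 0 < 2 * γ))).const_mul A

/-- The barrier `‖x‖ ^ (-2γ) h (± log (‖x‖² / ρ²))` is a supersolution as soon as
`2γ = 2 / (p - 1) ≤ n - 2`. -/
theorem IsBarrierProfile.isRadialSupersolution {n : ℕ} {γ : ℝ} (hγ : 0 < γ)
    (hn : 2 * γ ≤ (n : ℝ) - 2) {h h' h'' : ℝ → ℝ}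
    (H : IsBarrierProfile (1 + 1 / γ) |2 * (n : ℝ) - 4 - 8 * γ| h h' h'')
    {σ : ℝ} (hσ : σ ^ 2 = 1) (l : ℝ) :
    ∃ Φ' Φ'' : ℝ → ℝ, IsRadialSupersolution n (1 + 1 / γ)
      {q | 0 < q ∧ 0 < σ * (Real.log q - l)}
      (fun q => Real.exp (-γ * Real.log q) * h (σ * (Real.log q - l))) Φ' Φ'' := by
  have hlog : ∀ q : ℝ, 0 < q → HasDerivAt Real.log q⁻¹ q := fun q hq =>
    Real.hasDerivAt_log hq.ne'
  have harg : ∀ q : ℝ, 0 < q →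
      HasDerivAt (fun q => σ * (Real.log q - l)) (σ * q⁻¹) q := fun q hq =>
    ((hlog q hq).sub_const l).const_mul σ
  have hexp : ∀ q : ℝ, 0 < q → HasDerivAt (fun q => Real.exp (-γ * Real.log q))
      (Real.exp (-γ * Real.log q) * (-γ * q⁻¹)) q := fun q hq =>
    ((hlog q hq).const_mul (-γ)).exp
  refine ⟨fun q => Real.exp (-γ * Real.log q) *
      (σ * h' (σ * (Real.log q - l)) - γ * h (σ * (Real.log q - l))) * q⁻¹,
    fun q => Real.exp (-γ * Real.log q) *
      (h'' (σ * (Real.log q - l)) - 2 * γ * σ * h' (σ * (Real.log q - l)) +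
        γ ^ 2 * h (σ * (Real.log q - l)) -
        (σ * h' (σ * (Real.log q - l)) - γ * h (σ * (Real.log q - l)))) * (q⁻¹) ^ 2,
    ?_, ?_, ?_, ?_⟩
  · rintro q ⟨-, hs⟩
    exact mul_pos (Real.exp_pos _) (H.pos _ hs)
  · rintro q ⟨hq, hs⟩
    have h₁ := (H.hasDerivAt _ hs).comp q (harg q hq)
    refine ((hexp q hq).mul h₁).congr_deriv ?_
    dsimp only [Function.comp_apply]
    ring
  · rintro q ⟨hq, hs⟩
    have h₁ := (H.hasDerivAt _ hs).comp q (harg q hq)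
    have h₂ := (H.hasDerivAt' _ hs).comp q (harg q hq)
    refine (((hexp q hq).mul ((h₂.const_mul σ).sub (h₁.const_mul γ))).mul
      (hasDerivAt_inv hq.ne')).congr_deriv ?_
    dsimp only [Function.comp_apply, Pi.sub_apply, Pi.mul_apply]
    rw [← inv_pow]
    linear_combination (Real.exp (-γ * Real.log q) * h'' (σ * (Real.log q - l)) *
      (q⁻¹) ^ 2) * hσ
  · rintro q ⟨hq, hs⟩
    have hle := H.le_rpow _ hs
    have hpos := H.pos _ hs
    set s := σ * (Real.log q - l)
    have hE : Real.exp (-γ * Real.log q) ^ (1 + 1 / γ) =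
        Real.exp (-γ * Real.log q) * q⁻¹ := by
      rw [← Real.exp_mul, ← Real.exp_log (inv_pos.2 hq), ← Real.exp_add, Real.log_inv]
      congr 1
      field_simp
      ring
    rw [Real.mul_rpow (Real.exp_pos _).le hpos.le, hE]
    have hσabs : |σ| = 1 := by
      rw [← abs_one, ← sq_eq_sq_iff_abs_eq_abs, hσ, one_pow]
    have hdrift : (2 * (n : ℝ) - 4 - 8 * γ) * (σ * h' s) ≤
        |2 * (n : ℝ) - 4 - 8 * γ| * |h' s| := by
      refine (le_abs_self _).trans_eq ?_
      rw [abs_mul, abs_mul, hσabs, one_mul]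
    have hzero : 2 * γ * (2 * γ - ((n : ℝ) - 2)) * h s ≤ 0 :=
      mul_nonpos_of_nonpos_of_nonneg
        (mul_nonpos_of_nonneg_of_nonpos (by positivity) (by linarith)) hpos.le
    calc _ = Real.exp (-γ * Real.log q) * q⁻¹ * (4 * h'' s +
          (2 * (n : ℝ) - 4 - 8 * γ) * (σ * h' s) +
          2 * γ * (2 * γ - ((n : ℝ) - 2)) * h s) := by
          field_simp
          ring
      _ ≤ Real.exp (-γ * Real.log q) * q⁻¹ * h s ^ (1 + 1 / γ) := by
          refine mul_le_mul_of_nonneg_left (by linarith) (by positivity)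
      _ = _ := by ring

theorem IsBarrierProfile.tendsto_atTop_of_tendsto_nhdsGT {p C γ : ℝ} {h h' h'' : ℝ → ℝ}
    (H : IsBarrierProfile p C h h' h'') {σ l : ℝ} {S : Set ℝ}
    (hS : ∀ q ∈ S, 0 < q ∧ 0 < σ * (Real.log q - l)) :
    Tendsto (fun q => Real.exp (-γ * Real.log q) * h (σ * (Real.log q - l)))
      (𝓝[S] (Real.exp l)) atTop := by
  have hlog : Tendsto Real.log (𝓝[S] (Real.exp l)) (𝓝 l) := by
    have := (Real.continuousAt_log (Real.exp_pos l).ne').tendsto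
    rw [Real.log_exp] at this
    exact this.mono_left nhdsWithin_le_nhds
  refine Tendsto.pos_mul_atTop (Real.exp_pos (-γ * l))
    ((Real.continuous_exp.tendsto _).comp (hlog.const_mul (-γ))) (H.tendsto_nhdsGT.comp ?_)
  refine tendsto_nhdsWithin_iff.2 ⟨by simpa using (hlog.sub_const l).const_mul σ, ?_⟩
  filter_upwards [self_mem_nhdsWithin] with q hq using (hS q hq).2

end Barrier

section Uniqueness

theorem IsClassicalSolution.le_of_same_initial {n : ℕ} {γ : ℝ} (hγ : 0 < γ)
    (hn : 2 * γ ≤ (n : ℝ) - 2) {g : EuclideanSpace ℝ (Fin n) → ℝ}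
    {u₁ u₂ : EuclideanSpace ℝ (Fin n) → ℝ → ℝ}
    (h₁ : IsClassicalSolution n (1 + 1 / γ) g u₁) (h₂ : IsClassicalSolution n (1 + 1 / γ) g u₂)
    {x : EuclideanSpace ℝ (Fin n)} (hx : x ≠ 0) {t : ℝ} (ht : 0 ≤ t) : u₁ x t ≤ u₂ x t := by
  obtain ⟨h, h', h'', H⟩ := exists_isBarrierProfile hγ (abs_nonneg (2 * (n : ℝ) - 4 - 8 * γ))
  have hp : 1 ≤ 1 + 1 / γ := by linarith [one_div_pos.2 hγ]
  have hq : 0 < ‖x‖ ^ 2 := by positivity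
  set B : ℝ → ℝ → ℝ → ℝ := fun σ l q =>
    Real.exp (-γ * Real.log q) * h (σ * (Real.log q - l)) with hB
  have hlim : Tendsto (fun k : ℝ => B 1 (-k) (‖x‖ ^ 2) + B (-1) k (‖x‖ ^ 2)) atTop (𝓝 0) := by
    simp only [hB]
    generalize Real.log (‖x‖ ^ 2) = L
    have e₁ : Tendsto (fun k : ℝ => 1 * (L - -k)) atTop atTop := by
      simpa using tendsto_atTop_add_const_left atTop L tendsto_id
    have e₂ : Tendsto (fun k : ℝ => -1 * (L - k)) atTop atTop := by
      simpa [sub_eq_add_neg] using tendsto_atTop_add_const_right atTop (-L) tendsto_id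
    have h₃ := ((H.tendsto_atTop.comp e₁).const_mul (Real.exp (-γ * L))).add
      ((H.tendsto_atTop.comp e₂).const_mul (Real.exp (-γ * L)))
    rw [mul_zero, add_zero] at h₃
    exact h₃
  refine sub_nonpos.1 (ge_of_tendsto hlim ?_)
  filter_upwards [eventually_gt_atTop |Real.log (‖x‖ ^ 2)|] with k hk
  obtain ⟨hk₁, hk₂⟩ := abs_lt.1 hk
  have hinner : ∀ q ∈ Ioi (Real.exp (-k)), 0 < q ∧ 0 < 1 * (Real.log q - -k) := by
    intro q hq
    have hq0 : 0 < q := (Real.exp_pos _).trans hq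
    have := (Real.lt_log_iff_exp_lt hq0).2 hq
    exact ⟨hq0, by linarith⟩
  have houter : ∀ q ∈ Ioo 0 (Real.exp k), 0 < q ∧ 0 < -1 * (Real.log q - k) := by
    intro q hq
    have := (Real.log_lt_iff_lt_exp hq.1).2 hq.2
    exact ⟨hq.1, by linarith⟩
  obtain ⟨Φ', Φ'', hΦ⟩ := H.isRadialSupersolution hγ hn (one_pow 2) (-k)
  obtain ⟨Ψ', Ψ'', hΨ⟩ := H.isRadialSupersolution hγ hn (by norm_num : (-1 : ℝ) ^ 2 = 1) k
  have hsum := hΦ.add hp hΨ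
  have hsub : ∀ q ∈ Ioo (Real.exp (-k)) (Real.exp k),
      (0 < q ∧ 0 < 1 * (Real.log q - -k)) ∧ (0 < q ∧ 0 < -1 * (Real.log q - k)) := fun q hq =>
    ⟨hinner q hq.1, houter q ⟨(hinner q hq.1).1, hq.2⟩⟩
  have hlt : Real.exp (-k) < Real.exp k := Real.exp_lt_exp.2 (by linarith)
  refine h₁.sub_le_of_isRadialSupersolution hp h₂ (Real.exp_pos (-k))
    ⟨fun q hq => hsum.pos q (hsub q hq), fun q hq => hsum.hasDerivAt q (hsub q hq),
      fun q hq => hsum.hasDerivAt' q (hsub q hq), fun q hq => hsum.le_rpow q (hsub q hq)⟩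
    ?_ ?_ ⟨(Real.lt_log_iff_exp_lt hq).1 hk₁, (Real.log_lt_iff_lt_exp hq).1 hk₂⟩ ht
  · refine tendsto_atTop_mono' _ ?_ (H.tendsto_atTop_of_tendsto_nhdsGT (γ := γ) hinner)
    filter_upwards [Ioo_mem_nhdsGT hlt] with q hq
    exact le_add_of_nonneg_right (hΨ.pos q (hsub q hq).2).le
  · have houter_lim := H.tendsto_atTop_of_tendsto_nhdsGT (γ := γ) houter
    rw [nhdsWithin_Ioo_eq_nhdsLT (Real.exp_pos k)] at houter_lim
    refine tendsto_atTop_mono' _ ?_ houter_lim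
    filter_upwards [Ioo_mem_nhdsLT hlt] with q hq
    exact le_add_of_nonneg_left (hΦ.pos q (hsub q hq).1).le

end Uniqueness

/-- if `n ≥ 3` and `p ≥ n/(n-2)`, the classical solution of (P) is
unique for every continuous nonnegative initial datum `g`. -/
theorem uniqueness_of_punctured_cauchy_problem
    (n : ℕ) (hn : 3 ≤ n) (p : ℝ) (hpn : (n : ℝ) / ((n : ℝ) - 2) ≤ p)
    (g : EuclideanSpace ℝ (Fin n) → ℝ)
    (hg_cont : ContinuousOn g {x : EuclideanSpace ℝ (Fin n) | x ≠ 0})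
    (hg_nonneg : ∀ x : EuclideanSpace ℝ (Fin n), x ≠ 0 → 0 ≤ g x)
    (u₁ u₂ : EuclideanSpace ℝ (Fin n) → ℝ → ℝ)
    (h₁ : IsClassicalSolution n p g u₁) (h₂ : IsClassicalSolution n p g u₂) :
    ∀ x : EuclideanSpace ℝ (Fin n), x ≠ 0 → ∀ t : ℝ, 0 ≤ t → u₁ x t = u₂ x t := by
  intro x hx t ht
  have hn2 : (0 : ℝ) < (n : ℝ) - 2 := by
    have : (3 : ℝ) ≤ n := by exact_mod_cast hn
    linarith
  have hp1 : 2 / ((n : ℝ) - 2) ≤ p - 1 := by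
    have : (n : ℝ) / ((n : ℝ) - 2) = 1 + 2 / ((n : ℝ) - 2) := by
      field_simp
      ring
    linarith
  have hp : 0 < p - 1 := lt_of_lt_of_le (by positivity) hp1
  obtain ⟨γ, hγ, hpγ⟩ : ∃ γ : ℝ, 0 < γ ∧ p = 1 + 1 / γ :=
    ⟨1 / (p - 1), by positivity, by rw [one_div_one_div]; ring⟩
  have hγn : 2 * γ ≤ (n : ℝ) - 2 := by
    rw [hpγ, add_sub_cancel_left, div_le_div_iff₀ hn2 hγ] at hp1
    linarith
  subst hpγ
  exact le_antisymm (h₁.le_of_same_initial hγ hγn h₂ hx ht)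
    (h₂.le_of_same_initial hγ hγn h₁ hx ht)
end

section
/- Let n ≥ 3 be an integer and let p ≥ n/(n−2). Then the only classical solution of the Cauchy problem (P) with initial data g ≡ 0 is the identically zero function: if u is a classical solution of (P) with u(x,0) = 0 for all x ≠ 0, then u(x,t) = 0 for all x ∈ ℝⁿ∖{0} and all t ≥ 0. -/
open scoped BigOperators

open Filter Topology

/-- The line restriction of a `C²` function has the expected second derivative. -/
theorem contDiffAt_line_and_deriv_deriv {E : Type*} [NormedAddCommGroup E] [NormedSpace ℝ E]
    {f : E → ℝ} {x : E} (hf : ContDiffAt ℝ 2 f x) (e : E) :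
    ContDiffAt ℝ 2 (fun s : ℝ => f (x + s • e)) 0 ∧
      deriv (deriv fun s : ℝ => f (x + s • e)) 0 = fderiv ℝ (fun y => fderiv ℝ f y e) x e := by
  have hx : x + (0 : ℝ) • e = x := by simp
  have hline : ∀ s : ℝ, HasDerivAt (fun s : ℝ => x + s • e) e s := fun s => by
    simpa using ((hasDerivAt_id s).smul_const e).const_add x
  have hcont : Tendsto (fun s : ℝ => x + s • e) (𝓝 0) (𝓝 x) := by
    simpa [hx] using (hline 0).continuousAt.tendsto
  refine ⟨?_, ?_⟩
  · have : ContDiffAt ℝ 2 f (x + (0 : ℝ) • e) := by rwa [hx]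
    exact this.comp (0 : ℝ) (by fun_prop)
  · have hd : ∀ᶠ y in 𝓝 x, DifferentiableAt ℝ f y := by
      filter_upwards [hf.eventually (by simp)] with y hy
      exact hy.differentiableAt (by simp)
    have hev : (deriv fun s : ℝ => f (x + s • e)) =ᶠ[𝓝 0]
        fun s => fderiv ℝ f (x + s • e) e := by
      filter_upwards [hcont.eventually hd] with s hs
      exact (hs.hasFDerivAt.comp_hasDerivAt s (hline s)).deriv
    rw [hev.deriv_eq]
    have h1 : DifferentiableAt ℝ (fun y => fderiv ℝ f y e) x :=
      ((hf.fderiv_right (m := 1) (by norm_num)).differentiableAt (by simp)).clm_apply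
        (differentiableAt_const e)
    have h2 : HasFDerivAt (fun y => fderiv ℝ f y e) (fderiv ℝ (fun y => fderiv ℝ f y e) x)
        (x + (0 : ℝ) • e) := by
      rw [hx]; exact h1.hasFDerivAt
    exact (h2.comp_hasDerivAt (0 : ℝ) (hline 0)).deriv

theorem deriv_deriv_nonpos_of_isLocalMax {g : ℝ → ℝ} {s : ℝ} (hg : IsLocalMax g s)
    (hc : ContinuousAt g s) : deriv (deriv g) s ≤ 0 := by
  by_contra! h
  have hmin := isLocalMin_of_deriv_deriv_pos h hg.deriv_eq_zero hc
  have hconst : g =ᶠ[𝓝 s] fun _ => g s := by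
    filter_upwards [hg, hmin] with y h1 h2 using le_antisymm h1 h2
  have h0 : deriv g =ᶠ[𝓝 s] fun _ => 0 := by
    simpa using hconst.deriv
  rw [h0.deriv_eq] at h
  simp at h

theorem laplacian_le_of_isLocalMax_sub {n : ℕ} {f g : EuclideanSpace ℝ (Fin n) → ℝ}
    {x : EuclideanSpace ℝ (Fin n)} (hf : ContDiffAt ℝ 2 f x) (hg : ContDiffAt ℝ 2 g x)
    (h : IsLocalMax (fun y => f y - g y) x) : laplacian f x ≤ laplacian g x := by
  refine Finset.sum_le_sum fun i _ => ?_
  set e : EuclideanSpace ℝ (Fin n) := EuclideanSpace.single i 1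
  obtain ⟨hs1, hs2⟩ := contDiffAt_line_and_deriv_deriv
    (show ContDiffAt ℝ 2 (f - g) x from hf.sub hg) e
  have hlin : fderiv ℝ (fun y => fderiv ℝ (f - g) y e) x e =
      fderiv ℝ (fun y => fderiv ℝ f y e) x e - fderiv ℝ (fun y => fderiv ℝ g y e) x e := by
    have hev : (fun y => fderiv ℝ (f - g) y e) =ᶠ[𝓝 x]
        fun y => fderiv ℝ f y e - fderiv ℝ g y e := by
      filter_upwards [hf.eventually (by simp), hg.eventually (by simp)] with y h1 h2
      rw [fderiv_sub (h1.differentiableAt (by simp)) (h2.differentiableAt (by simp))]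
      rfl
    have hd : ∀ {k : EuclideanSpace ℝ (Fin n) → ℝ}, ContDiffAt ℝ 2 k x →
        DifferentiableAt ℝ (fun y => fderiv ℝ k y e) x := fun hk =>
      ((hk.fderiv_right (m := 1) (by norm_num)).differentiableAt (by simp)).clm_apply
        (differentiableAt_const e)
    rw [hev.fderiv_eq, fderiv_fun_sub (hd hf) (hd hg)]
    rfl
  have hmax : IsLocalMax (fun s : ℝ => (f - g) (x + s • e)) 0 := by
    have ht : Tendsto (fun s : ℝ => x + s • e) (𝓝 0) (𝓝 x) := by
      have : Continuous fun s : ℝ => x + s • e := by fun_prop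
      simpa using this.tendsto 0
    have := ht.eventually h
    filter_upwards [this] with s hs
    simpa using hs
  have := deriv_deriv_nonpos_of_isLocalMax hmax hs1.continuousAt
  linarith [hs2.symm.trans_le this]

/-- Comparison of a solution with zero data and a stationary supersolution. -/
theorem IsClassicalSolution.le_of_supersolution {n : ℕ} {p : ℝ} (hp : 0 ≤ p)
    {u : EuclideanSpace ℝ (Fin n) → ℝ → ℝ} (hu : IsClassicalSolution n p (fun _ => 0) u)
    {K : Set (EuclideanSpace ℝ (Fin n))} (hK : IsCompact K)
    (hK0 : (0 : EuclideanSpace ℝ (Fin n)) ∉ K)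
    {T : ℝ} {W : EuclideanSpace ℝ (Fin n) → ℝ} (hWc : ContinuousOn W K)
    (hW0 : ∀ x ∈ K, 0 ≤ W x)
    (hW : ∀ x ∈ K, (∀ t, 0 ≤ t → t ≤ T → u x t ≤ W x) ∨
      (K ∈ 𝓝 x ∧ ContDiffAt ℝ 2 W x ∧ laplacian W x ≤ W x ^ p)) :
    ∀ x ∈ K, ∀ t, 0 ≤ t → t ≤ T → u x t ≤ W x := by
  have hne : ∀ x ∈ K, x ≠ 0 := fun x hx h => hK0 (h ▸ hx)
  have key : ∀ ε > 0, ∀ x ∈ K, ∀ t, 0 ≤ t → t ≤ T → u x t - W x - ε * t ≤ 0 := by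
    intro ε hε x hx t ht htT
    have hcont : ContinuousOn (fun q : EuclideanSpace ℝ (Fin n) × ℝ =>
        u q.1 q.2 - W q.1 - ε * q.2)
        (K ×ˢ Set.Icc 0 T) := by
      refine ContinuousOn.sub (ContinuousOn.sub ?_ ?_) (by fun_prop)
      · exact hu.continuousOn.mono fun q hq => ⟨hne _ hq.1, hq.2.1⟩
      · exact hWc.comp continuousOn_fst fun q hq => hq.1
    obtain ⟨⟨y, s⟩, ⟨hy, hs⟩, hmax⟩ := (hK.prod isCompact_Icc).exists_isMaxOn
      ⟨(x, t), hx, ht, htT⟩ hcont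
    simp only at hy hs
    have hle : ∀ z ∈ K, ∀ r ∈ Set.Icc 0 T, u z r - W z - ε * r ≤ u y s - W y - ε * s :=
      fun z hz r hr => hmax (show (z, r) ∈ K ×ˢ Set.Icc 0 T from ⟨hz, hr⟩)
    refine (hle x hx t ⟨ht, htT⟩).trans ?_
    by_contra! hpos
    have hεs : 0 ≤ ε * s := mul_nonneg hε.le hs.1
    have huW : W y < u y s := by linarith
    have hs0 : 0 < s := by
      refine lt_of_le_of_ne hs.1 fun h => ?_
      have := hu.initial y (hne y hy)
      rw [← h, this] at huW
      exact absurd (hW0 y hy) (not_le.2 huW)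
    rcases hW y hy with hb | ⟨hnhds, hWd, hWsup⟩
    · exact absurd (hb s hs.1 hs.2) (not_le.2 huW)
    · have hlap : laplacian (fun z => u z s) y ≤ laplacian W y := by
        refine laplacian_le_of_isLocalMax_sub (hu.contDiff_space y (hne y hy) s hs0) hWd ?_
        filter_upwards [hnhds] with z hz
        have := hle z hz s hs
        linarith
      have htime : ε ≤ deriv (u y) s := by
        have hd : HasDerivAt (fun r => u y r - ε * r) (deriv (u y) s - ε) s := by
          have := ((hu.contDiff_time y (hne y hy) s hs0).differentiableAt (by simp)).hasDerivAt
          simpa using this.fun_sub ((hasDerivAt_id s).const_mul ε)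
        have hlim := (hasDerivAt_iff_tendsto_slope.1 hd).mono_left
          (nhdsWithin_mono s (fun r (hr : r < s) => hr.ne) : 𝓝[<] s ≤ 𝓝[≠] s)
        have : 0 ≤ deriv (u y) s - ε := by
          refine ge_of_tendsto hlim ?_
          filter_upwards [Ioo_mem_nhdsLT hs0] with r hr
          rw [slope_def_field]
          refine div_nonneg_of_nonpos ?_ (by linarith [hr.2])
          have := hle y hy r ⟨hr.1.le, hr.2.le.trans hs.2⟩
          linarith
        linarith
      have hpow : W y ^ p ≤ u y s ^ p := Real.rpow_le_rpow (hW0 y hy) huW.le hp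
      have := hu.pde y (hne y hy) s hs0
      linarith
  intro x hx t ht htT
  have hlim : Tendsto (fun ε : ℝ => u x t - W x - ε * t) (𝓝[>] 0) (𝓝 (u x t - W x - 0 * t)) := by
    refine Tendsto.mono_left ?_ nhdsWithin_le_nhds
    exact (by fun_prop : Continuous fun ε : ℝ => u x t - W x - ε * t).tendsto 0
  have := le_of_tendsto hlim (by
    filter_upwards [self_mem_nhdsWithin] with ε hε using key ε hε x hx t ht htT)
  linarith

/-- The Laplacian of the radial function `F(|x - z|²)`. -/
theorem laplacian_radial {n : ℕ} {F F₁ : ℝ → ℝ} {F₂ : ℝ} (z x : EuclideanSpace ℝ (Fin n))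
    (hF : ContDiffAt ℝ 2 F (‖x - z‖ ^ 2))
    (h₁ : ∀ᶠ q in 𝓝 (‖x - z‖ ^ 2), HasDerivAt F (F₁ q) q)
    (h₂ : HasDerivAt F₁ F₂ (‖x - z‖ ^ 2)) :
    ContDiffAt ℝ 2 (fun y => F (‖y - z‖ ^ 2)) x ∧
    laplacian (fun y => F (‖y - z‖ ^ 2)) x =
      4 * ‖x - z‖ ^ 2 * F₂ + 2 * n * F₁ (‖x - z‖ ^ 2) := by
  have hC : ContDiffAt ℝ 2 (fun y => F (‖y - z‖ ^ 2)) x := by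
    refine ContDiffAt.comp x hF ?_
    exact ((contDiffAt_id.sub contDiffAt_const).norm_sq ℝ)
  refine ⟨hC, ?_⟩
  have hterm : ∀ i : Fin n, fderiv ℝ (fun y => fderiv ℝ (fun y => F (‖y - z‖ ^ 2)) y
      (EuclideanSpace.single i 1)) x (EuclideanSpace.single i 1) =
      4 * (x - z) i ^ 2 * F₂ + 2 * F₁ (‖x - z‖ ^ 2) := by
    intro i
    rw [← (contDiffAt_line_and_deriv_deriv hC (EuclideanSpace.single i 1)).2]
    set w := (x - z) i
    set Q : ℝ → ℝ := fun s => ‖x - z‖ ^ 2 + 2 * s * w + s ^ 2 with hQ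
    have hfun : (fun s : ℝ => F (‖x + s • EuclideanSpace.single i (1 : ℝ) - z‖ ^ 2)) =
        fun s => F (Q s) := by
      funext s
      congr 1
      rw [show x + s • EuclideanSpace.single i (1 : ℝ) - z =
        (x - z) + s • EuclideanSpace.single i (1 : ℝ) by abel, norm_add_sq_real,
        inner_smul_right, EuclideanSpace.inner_single_right, norm_smul]
      simp [hQ, w]
      ring
    rw [hfun]
    have hQd : ∀ s, HasDerivAt Q (2 * w + 2 * s) s := fun s => by
      have := ((((hasDerivAt_id s).const_mul 2).mul_const w).const_add (‖x - z‖ ^ 2)).fun_add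
        (hasDerivAt_pow 2 s)
      exact this.congr_deriv (by simp)
    have hQ0 : Q 0 = ‖x - z‖ ^ 2 := by simp [hQ]
    have hev : deriv (fun s => F (Q s)) =ᶠ[𝓝 0] fun s => F₁ (Q s) * (2 * w + 2 * s) := by
      have : Tendsto Q (𝓝 0) (𝓝 (‖x - z‖ ^ 2)) := hQ0 ▸ (hQd 0).continuousAt.tendsto
      filter_upwards [this.eventually h₁] with s hs
      exact (hs.comp s (hQd s)).deriv
    rw [hev.deriv_eq]
    have hl : HasDerivAt (fun s : ℝ => 2 * w + 2 * s) 2 0 := by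
      simpa using ((hasDerivAt_id (0 : ℝ)).const_mul 2).const_add (2 * w)
    have := ((hQ0.symm ▸ h₂ : HasDerivAt F₁ F₂ (Q 0)).comp (0 : ℝ) (hQd 0)).mul hl
    refine (this.deriv).trans ?_
    simp [hQ0]
    ring
  unfold laplacian
  simp only [hterm]
  rw [Finset.sum_add_distrib, ← Finset.sum_mul, ← Finset.mul_sum, ← EuclideanSpace.real_norm_sq_eq]
  simp
  ring

theorem hasDerivAt_const_mul_sub_rpow (A B b : ℝ) {q : ℝ} (hq : q < B) :
    HasDerivAt (fun q => A * (B - q) ^ (-b)) (A * b * (B - q) ^ (-(b + 1))) q := by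
  have := (((hasDerivAt_id q).const_sub B).rpow_const (p := -b)
    (Or.inl (by simp; linarith))).const_mul A
  refine this.congr_deriv ?_
  rw [show -b - 1 = -(b + 1) by ring]
  simp
  ring

/-- The function `A (R² - |y - z|²)^(-2/(p-1))`, blowing up on the sphere of radius `R` around `z`,
is a stationary supersolution. -/
theorem laplacian_blowup_barrier_le {n : ℕ} {p a R : ℝ} (ha : 0 < a) (hap : a * (p - 1) = 1)
    (hR : 0 < R) {z x : EuclideanSpace ℝ (Fin n)} (hx : ‖x - z‖ < R) {A L : ℝ}
    (hL : L = 2 * a * (4 * (2 * a + 1) + 2 * n)) (hA : A = (L * R ^ 2) ^ a) :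
    ContDiffAt ℝ 2 (fun y => A * (R ^ 2 - ‖y - z‖ ^ 2) ^ (-(2 * a))) x ∧
    laplacian (fun y => A * (R ^ 2 - ‖y - z‖ ^ 2) ^ (-(2 * a))) x ≤
      (A * (R ^ 2 - ‖x - z‖ ^ 2) ^ (-(2 * a))) ^ p := by
  have hq : ‖x - z‖ ^ 2 < R ^ 2 := by gcongr
  have hρ : 0 < R ^ 2 - ‖x - z‖ ^ 2 := by linarith
  have hLpos : 0 < L := by rw [hL]; positivity
  have hApos : 0 < A := by rw [hA]; positivity
  obtain ⟨h1, h2⟩ := laplacian_radial (F := fun q => A * (R ^ 2 - q) ^ (-(2 * a)))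
    (F₁ := fun q => A * (2 * a) * (R ^ 2 - q) ^ (-(2 * a + 1))) z x
    (contDiffAt_const.mul ((contDiffAt_const.sub contDiffAt_id).rpow_const_of_ne hρ.ne'))
    (by filter_upwards [eventually_lt_nhds hq] with q hq
        exact hasDerivAt_const_mul_sub_rpow _ _ _ hq)
    (hasDerivAt_const_mul_sub_rpow _ _ _ hq)
  refine ⟨h1, h2.trans_le ?_⟩
  have hq0 : 0 ≤ ‖x - z‖ ^ 2 := by positivity
  generalize ‖x - z‖ ^ 2 = q at *
  have e1 : (R ^ 2 - q) ^ (-(2 * a + 1)) = (R ^ 2 - q) ^ (-(2 * a + 1 + 1)) * (R ^ 2 - q) := by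
    rw [← Real.rpow_add_one hρ.ne']; congr 1; ring
  have e2 : (A * (R ^ 2 - q) ^ (-(2 * a))) ^ p =
      A * (L * R ^ 2) * (R ^ 2 - q) ^ (-(2 * a + 1 + 1)) := by
    rw [Real.mul_rpow hApos.le (by positivity), ← Real.rpow_mul hρ.le,
      show -(2 * a) * p = -(2 * a + 1 + 1) by linear_combination (-2) * hap]
    congr 1
    have : A ^ (p - 1) = L * R ^ 2 := by
      rw [hA, ← Real.rpow_mul (by positivity), hap, Real.rpow_one]
    rw [← this, ← Real.rpow_one_add' hApos.le]
    · congr 1; ring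
    · intro h
      have : p = 0 := by linarith
      subst this
      linarith
  rw [e1, e2]
  have hX : 0 < (R ^ 2 - q) ^ (-(2 * a + 1 + 1)) := by positivity
  generalize (R ^ 2 - q) ^ (-(2 * a + 1 + 1)) = X at *
  rw [hL]
  have hn : (0 : ℝ) ≤ n := Nat.cast_nonneg n
  have hmain : 4 * q * (2 * a + 1) + 2 * n * (R ^ 2 - q) ≤
      (4 * (2 * a + 1) + 2 * n) * R ^ 2 := by nlinarith
  have := mul_le_mul_of_nonneg_left hmain (show 0 ≤ A * (2 * a) * X by positivity)
  linarith

/-- Universal a priori bound of Keller–Osserman type for solutions with zero data. -/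
theorem IsClassicalSolution.exists_le_mul_norm_sq_rpow {n : ℕ} {p a : ℝ} (ha : 0 < a)
    (hap : a * (p - 1) = 1) {u : EuclideanSpace ℝ (Fin n) → ℝ → ℝ}
    (hu : IsClassicalSolution n p (fun _ => 0) u) :
    ∃ C > 0, ∀ x, x ≠ 0 → ∀ t, 0 ≤ t → u x t ≤ C * (‖x‖ ^ 2) ^ (-a) := by
  obtain ⟨L, hL⟩ : ∃ L : ℝ, L = 2 * a * (4 * (2 * a + 1) + 2 * n) := ⟨_, rfl⟩
  have hLpos : 0 < L := by rw [hL]; positivity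
  refine ⟨L ^ a * 4 ^ a, by positivity, fun x hx t ht => ?_⟩
  have hp : 0 ≤ p := by
    by_contra! h
    nlinarith
  have hxn : 0 < ‖x‖ := norm_pos_iff.2 hx
  set R : ℝ := ‖x‖ / 2 with hR
  have hRpos : 0 < R := by positivity
  obtain ⟨A, hA⟩ : ∃ A : ℝ, A = (L * R ^ 2) ^ a := ⟨_, rfl⟩
  have hApos : 0 < A := by rw [hA]; positivity
  have hball : ∀ y ∈ Metric.closedBall x R, y ≠ 0 := by
    rintro y hy rfl
    rw [Metric.mem_closedBall, dist_zero_left] at hy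
    linarith
  obtain ⟨M, hM⟩ : ∃ M, ∀ y ∈ Metric.closedBall x R, ∀ s ∈ Set.Icc 0 t, u y s ≤ M := by
    have hc : ContinuousOn (fun q : EuclideanSpace ℝ (Fin n) × ℝ => u q.1 q.2)
        (Metric.closedBall x R ×ˢ Set.Icc 0 t) :=
      hu.continuousOn.mono fun q hq => ⟨hball _ hq.1, hq.2.1⟩
    obtain ⟨M, hM⟩ := ((isCompact_closedBall x R).prod isCompact_Icc).bddAbove_image hc
    exact ⟨M, fun y hy s hs => hM ⟨(y, s), ⟨hy, hs⟩, rfl⟩⟩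
  obtain ⟨η, hη, hη0, hηR⟩ : ∃ η, M ≤ A * η ^ (-(2 * a)) ∧ 0 < η ∧ η < R ^ 2 := by
    have h1 := ((tendsto_rpow_neg_nhdsGT_zero (y := -(2 * a)) (by linarith)).const_mul_atTop
      hApos).eventually_ge_atTop M
    have h2 : ∀ᶠ η in 𝓝[>] (0 : ℝ), η ∈ Set.Ioo 0 (R ^ 2) :=
      Ioo_mem_nhdsGT (by positivity)
    exact (h1.and h2).exists
  set r := √(R ^ 2 - η) with hr
  have hr2 : r ^ 2 = R ^ 2 - η := Real.sq_sqrt (by linarith)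
  have hr0 : 0 ≤ r := Real.sqrt_nonneg _
  have hrR : r < R := by
    refine lt_of_pow_lt_pow_left₀ 2 hRpos.le ?_
    linarith
  have hρ : ∀ y ∈ Metric.closedBall x r, 0 < R ^ 2 - ‖y - x‖ ^ 2 := by
    intro y hy
    rw [Metric.mem_closedBall, dist_eq_norm] at hy
    have : ‖y - x‖ ^ 2 ≤ r ^ 2 := by gcongr
    linarith
  have hmain := hu.le_of_supersolution hp (isCompact_closedBall x r)
    (fun h => hball 0 (Metric.closedBall_subset_closedBall hrR.le h) rfl) (T := t)
    (W := fun y => A * (R ^ 2 - ‖y - x‖ ^ 2) ^ (-(2 * a)))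
    (continuousOn_const.mul (ContinuousOn.rpow_const (by fun_prop)
      fun y hy => Or.inl (hρ y hy).ne'))
    (fun y hy => by have := hρ y hy; positivity) ?_ x (Metric.mem_closedBall_self hr0) t ht le_rfl
  · refine hmain.trans_eq ?_
    simp only [sub_self, norm_zero, ne_eq, OfNat.ofNat_ne_zero, not_false_eq_true, zero_pow,
      sub_zero]
    have hx2 : ‖x‖ ^ 2 = 4 * R ^ 2 := by rw [hR]; ring
    have hR2 : 0 < R ^ 2 := by positivity
    rw [hx2, hA, Real.mul_rpow hLpos.le hR2.le, Real.mul_rpow (by norm_num) hR2.le,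
      Real.rpow_neg (by norm_num : (0 : ℝ) ≤ 4), mul_assoc, mul_assoc, ← Real.rpow_add hR2]
    rw [mul_inv_cancel_left₀ (by positivity)]
    congr 2
    ring
  · intro y hy
    rw [Metric.mem_closedBall, dist_eq_norm] at hy
    rcases hy.lt_or_eq with h | h
    · right
      refine ⟨Metric.closedBall_mem_nhds_of_mem (by rwa [Metric.mem_ball, dist_eq_norm]), ?_⟩
      exact laplacian_blowup_barrier_le ha hap hRpos (h.trans hrR) hL hA
    · left
      intro s hs hst
      simp only [h, hr2, sub_sub_cancel]
      exact (hM y (by rw [Metric.mem_closedBall, dist_eq_norm]; linarith) s ⟨hs, hst⟩).trans hη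

theorem hasDerivAt_rpow_mul_log_rpow (α β D : ℝ) {q : ℝ} (hq : 0 < q)
    (hτ : 0 < Real.log q / 2 + D) :
    HasDerivAt (fun q => q ^ (-α) * (Real.log q / 2 + D) ^ (-β))
      (-α * (q ^ (-(α + 1)) * (Real.log q / 2 + D) ^ (-β)) -
        β / 2 * (q ^ (-(α + 1)) * (Real.log q / 2 + D) ^ (-(β + 1)))) q := by
  have h1 := Real.hasDerivAt_rpow_const (p := -α) (Or.inl hq.ne')
  have h2 := (((Real.hasDerivAt_log hq.ne').div_const 2).add_const D).rpow_const (p := -β)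
    (Or.inl hτ.ne')
  refine (h1.mul h2).congr_deriv ?_
  have e1 : q ^ (-α) = q ^ (-(α + 1)) * q := by
    rw [← Real.rpow_add_one hq.ne']; congr 1; ring
  rw [show -α - 1 = -(α + 1) by ring, show -β - 1 = -(β + 1) by ring, e1]
  field_simp
  ring

/-- The function `c |x|^(-2m) (log |x| + D)^(-a) + ε`, where `n = 2m + 2` and `a = 1/(p-1)`,
is a stationary supersolution in an annulus, provided `c` is large. -/
theorem laplacian_log_barrier_le {n : ℕ} {p a m c κ D ε r : ℝ} (hm : 0 < m)
    (hnm : (n : ℝ) = 2 * m + 2) (ha : 0 < a) (hap : a * (p - 1) = 1) (hmp : m + 1 ≤ m * p)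
    (hc : 0 < c) (hε : 0 ≤ ε) (hκ : κ = (r ^ 2) ^ (m + 1 - m * p))
    (hcκ : a * (a + 1 + 2 * m) ≤ c ^ (p - 1) * κ)
    {x : EuclideanSpace ℝ (Fin n)} (hx : x ≠ 0) (hxr : ‖x‖ ≤ r)
    (hτ : 1 ≤ Real.log (‖x‖ ^ 2) / 2 + D) :
    ContDiffAt ℝ 2
      (fun y => c * ((‖y‖ ^ 2) ^ (-m) * (Real.log (‖y‖ ^ 2) / 2 + D) ^ (-a)) + ε) x ∧
    laplacian (fun y => c * ((‖y‖ ^ 2) ^ (-m) * (Real.log (‖y‖ ^ 2) / 2 + D) ^ (-a)) + ε) x ≤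
      (c * ((‖x‖ ^ 2) ^ (-m) * (Real.log (‖x‖ ^ 2) / 2 + D) ^ (-a)) + ε) ^ p := by
  have hxn : 0 < ‖x‖ := norm_pos_iff.2 hx
  have hq : 0 < ‖x‖ ^ 2 := by positivity
  have hτ0 : 0 < Real.log (‖x‖ ^ 2) / 2 + D := by linarith
  have hev : ∀ᶠ q in 𝓝 (‖x‖ ^ 2), 0 < q ∧ 0 < Real.log q / 2 + D := by
    have hcont : ContinuousAt (fun q => Real.log q / 2 + D) (‖x‖ ^ 2) :=
      ((Real.continuousAt_log hq.ne').div_const 2).add_const D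
    exact (eventually_gt_nhds hq).and (hcont.eventually_const_lt hτ0)
  have hd := fun α β => hasDerivAt_rpow_mul_log_rpow α β D hq hτ0
  have hlap := laplacian_radial
    (F := fun q => c * (q ^ (-m) * (Real.log q / 2 + D) ^ (-a)) + ε)
    (F₁ := fun q => c * (-m * (q ^ (-(m + 1)) * (Real.log q / 2 + D) ^ (-a)) -
        a / 2 * (q ^ (-(m + 1)) * (Real.log q / 2 + D) ^ (-(a + 1))))) 0 x
    (by
      rw [sub_zero]
      exact (contDiffAt_const.mul ((contDiffAt_id.rpow_const_of_ne hq.ne').mul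
        ((((contDiffAt_id.log hq.ne').div_const 2).add contDiffAt_const).rpow_const_of_ne
          hτ0.ne'))).add contDiffAt_const)
    (by
      rw [sub_zero]
      filter_upwards [hev] with q hq
      exact ((hasDerivAt_rpow_mul_log_rpow m a D hq.1 hq.2).const_mul c).add_const ε)
    (by
      rw [sub_zero]
      exact (((hd (m + 1) a).const_mul (-m)).fun_sub
        ((hd (m + 1) (a + 1)).const_mul (a / 2))).const_mul c)
  simp only [sub_zero] at hlap
  refine ⟨hlap.1, hlap.2.trans_le ?_⟩
  have hqr : ‖x‖ ^ 2 ≤ r ^ 2 := by gcongr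
  generalize ‖x‖ ^ 2 = q at *
  generalize Real.log q / 2 + D = τ at *
  have hp : 0 ≤ p := by
    by_contra! h
    nlinarith
  have hpow : (c * (q ^ (-m) * τ ^ (-a))) ^ p ≤ (c * (q ^ (-m) * τ ^ (-a)) + ε) ^ p :=
    Real.rpow_le_rpow (by positivity) (by linarith) hp
  refine le_trans ?_ hpow
  have e1 : q ^ (-(m + 1)) = q ^ (-(m + 1 + 1)) * q := by
    rw [← Real.rpow_add_one hq.ne']; congr 1; ring
  have e2 : τ ^ (-(a + 1 + 1)) ≤ τ ^ (-(a + 1)) :=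
    Real.rpow_le_rpow_of_exponent_le hτ (by linarith)
  have e3 : (c * (q ^ (-m) * τ ^ (-a))) ^ p =
      c * c ^ (p - 1) * (q ^ (m + 1 - m * p) * q ^ (-(m + 1)) * τ ^ (-(a + 1))) := by
    rw [Real.mul_rpow hc.le (by positivity), Real.mul_rpow (by positivity) (by positivity),
      ← Real.rpow_mul hq.le, ← Real.rpow_mul hτ0.le, ← Real.rpow_add hq,
      show -a * p = -(a + 1) by linear_combination -hap,
      show m + 1 - m * p + -(m + 1) = -m * p by ring,
      show c * c ^ (p - 1) = c ^ p by
        nth_rewrite 1 [← Real.rpow_one c]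
        rw [← Real.rpow_add hc]; congr 1; ring]
  have e4 : κ ≤ q ^ (m + 1 - m * p) := by
    rw [hκ]
    exact Real.rpow_le_rpow_of_nonpos hq hqr (by linarith)
  have hlhs : 4 * q * (c * (-m * (-(m + 1) * (q ^ (-(m + 1 + 1)) * τ ^ (-a)) -
        a / 2 * (q ^ (-(m + 1 + 1)) * τ ^ (-(a + 1)))) -
        a / 2 * (-(m + 1) * (q ^ (-(m + 1 + 1)) * τ ^ (-(a + 1))) -
        (a + 1) / 2 * (q ^ (-(m + 1 + 1)) * τ ^ (-(a + 1 + 1)))))) +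
      2 * n * (c * (-m * (q ^ (-(m + 1)) * τ ^ (-a)) -
        a / 2 * (q ^ (-(m + 1)) * τ ^ (-(a + 1))))) =
      c * q ^ (-(m + 1)) * (a * (2 * m) * τ ^ (-(a + 1)) + a * (a + 1) * τ ^ (-(a + 1 + 1))) := by
    rw [e1, hnm]
    ring
  refine hlhs.trans_le ?_
  rw [e3]
  have hQ : 0 < q ^ (-(m + 1)) := by positivity
  have hT : 0 < τ ^ (-(a + 1)) := by positivity
  calc c * q ^ (-(m + 1)) * (a * (2 * m) * τ ^ (-(a + 1)) + a * (a + 1) * τ ^ (-(a + 1 + 1)))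
      ≤ c * q ^ (-(m + 1)) * (a * (2 * m) * τ ^ (-(a + 1)) + a * (a + 1) * τ ^ (-(a + 1))) := by
        gcongr
    _ = c * q ^ (-(m + 1)) * τ ^ (-(a + 1)) * (a * (a + 1 + 2 * m)) := by ring
    _ ≤ c * q ^ (-(m + 1)) * τ ^ (-(a + 1)) * (c ^ (p - 1) * q ^ (m + 1 - m * p)) := by
        exact mul_le_mul_of_nonneg_left (hcκ.trans (by gcongr)) (by positivity)
    _ = _ := by ring

/-- Comparison with the logarithmic barrier in the annulus `δ ≤ |x| ≤ r`. -/
theorem IsClassicalSolution.le_log_barrier {n : ℕ} {p a m C c ε r δ : ℝ} (hm : 0 < m)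
    (hnm : (n : ℝ) = 2 * m + 2) (ha : 0 < a) (hap : a * (p - 1) = 1) (hmp : m + 1 ≤ m * p)
    {u : EuclideanSpace ℝ (Fin n) → ℝ → ℝ} (hu : IsClassicalSolution n p (fun _ => 0) u)
    (hC : 0 < C) (hbound : ∀ x, x ≠ 0 → ∀ t, 0 ≤ t → u x t ≤ C * (‖x‖ ^ 2) ^ (-a))
    (hε : 0 ≤ ε) (hr : C * (r ^ 2) ^ (-a) ≤ ε) (hCc : C ≤ c)
    (hcr : a * (a + 1 + 2 * m) ≤ c ^ (p - 1) * (r ^ 2) ^ (m + 1 - m * p))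
    (hδ : 0 < δ) (hδ1 : δ ≤ 1) {x : EuclideanSpace ℝ (Fin n)} (hδx : δ ≤ ‖x‖) (hxr : ‖x‖ ≤ r)
    {t : ℝ} (ht : 0 ≤ t) :
    u x t ≤ c * ((‖x‖ ^ 2) ^ (-m) *
      (Real.log (‖x‖ ^ 2) / 2 + (1 - Real.log δ)) ^ (-a)) + ε := by
  have hc : 0 < c := hC.trans_le hCc
  have hp : 0 ≤ p := by
    by_contra! h
    nlinarith
  have ham : a ≤ m := by
    have : a * (m + 1) ≤ a * (m * p) := by gcongr
    linear_combination this + m * hap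
  set K : Set (EuclideanSpace ℝ (Fin n)) := {y | δ ≤ ‖y‖ ∧ ‖y‖ ≤ r} with hK
  have hKc : IsCompact K := by
    refine (isCompact_closedBall (0 : EuclideanSpace ℝ (Fin n)) r).of_isClosed_subset
      ((isClosed_le continuous_const continuous_norm).inter
        (isClosed_le continuous_norm continuous_const)) fun y hy => ?_
    simpa using hy.2
  have hne : ∀ y ∈ K, y ≠ 0 := fun y hy => norm_pos_iff.1 (hδ.trans_le hy.1)
  have hτ : ∀ y ∈ K, 1 ≤ Real.log (‖y‖ ^ 2) / 2 + (1 - Real.log δ) := by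
    intro y hy
    have := Real.log_le_log hδ hy.1
    rw [Real.log_pow]
    push_cast
    linarith
  have hbar : ∀ y ∈ K, _ := fun y hy =>
    laplacian_log_barrier_le hm hnm ha hap hmp hc hε rfl hcr (hne y hy) hy.2 (hτ y hy)
  refine hu.le_of_supersolution hp hKc (fun h => hne 0 h rfl) (T := t)
    (W := fun y => c * ((‖y‖ ^ 2) ^ (-m) *
      (Real.log (‖y‖ ^ 2) / 2 + (1 - Real.log δ)) ^ (-a)) + ε)
    (fun y hy => (hbar y hy).1.continuousAt.continuousWithinAt)
    (fun y hy => by have := hτ y hy; positivity) ?_ x ⟨hδx, hxr⟩ t ht le_rfl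
  intro y hy
  have hτy := hτ y hy
  rcases hy.1.eq_or_lt with h | h
  · left
    intro s hs _
    have hlog : Real.log (‖y‖ ^ 2) / 2 + (1 - Real.log δ) = 1 := by
      rw [← h, Real.log_pow]
      push_cast
      ring
    have hpow : (‖y‖ ^ 2) ^ (-a) ≤ (‖y‖ ^ 2) ^ (-m) := by
      rw [← h]
      exact Real.rpow_le_rpow_of_exponent_ge (by positivity) (pow_le_one₀ hδ.le hδ1) (by linarith)
    simp only [hlog, Real.one_rpow, mul_one]
    calc u y s ≤ C * (‖y‖ ^ 2) ^ (-a) := hbound y (hne y hy) s hs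
      _ ≤ c * (‖y‖ ^ 2) ^ (-m) := by gcongr
      _ ≤ c * (‖y‖ ^ 2) ^ (-m) + ε := by linarith
  rcases hy.2.eq_or_lt with h' | h'
  · left
    intro s hs _
    have : 0 ≤ c * ((‖y‖ ^ 2) ^ (-m) *
      (Real.log (‖y‖ ^ 2) / 2 + (1 - Real.log δ)) ^ (-a)) := by positivity
    have hb := hbound y (hne y hy) s hs
    rw [h'] at hb
    linarith
  · right
    refine ⟨?_, hbar y hy⟩
    have hopen : IsOpen {z : EuclideanSpace ℝ (Fin n) | δ < ‖z‖ ∧ ‖z‖ < r} :=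
      (isOpen_lt continuous_const continuous_norm).inter
        (isOpen_lt continuous_norm continuous_const)
    exact mem_of_superset (hopen.mem_nhds ⟨h, h'⟩) fun z hz => ⟨hz.1.le, hz.2.le⟩

/-- if `n ≥ 3` and `p ≥ n/(n-2)`, the only classical solution of (P)
with vanishing initial data is the identically zero function. -/
theorem triviality_of_solutions_with_zero_data
    (n : ℕ) (hn : 3 ≤ n) (p : ℝ) (hpn : (n : ℝ) / ((n : ℝ) - 2) ≤ p)
    (u : EuclideanSpace ℝ (Fin n) → ℝ → ℝ)
    (hu : IsClassicalSolution n p (fun _ => 0) u) :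
    ∀ x : EuclideanSpace ℝ (Fin n), x ≠ 0 → ∀ t : ℝ, 0 ≤ t → u x t = 0 := by
  have hn3 : (3 : ℝ) ≤ n := by exact_mod_cast hn
  obtain ⟨m, hnm⟩ : ∃ m : ℝ, (n : ℝ) = 2 * m + 2 := ⟨((n : ℝ) - 2) / 2, by ring⟩
  have hm : 0 < m := by linarith
  have hmp : m + 1 ≤ m * p := by
    rw [div_le_iff₀ (by linarith)] at hpn
    rw [hnm] at hpn
    linarith
  have hp1 : 0 < p - 1 := by
    by_contra! h
    nlinarith
  obtain ⟨a, ha, hap⟩ : ∃ a : ℝ, 0 < a ∧ a * (p - 1) = 1 :=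
    ⟨(p - 1)⁻¹, inv_pos.2 hp1, inv_mul_cancel₀ hp1.ne'⟩
  obtain ⟨C, hC, hbound⟩ := hu.exists_le_mul_norm_sq_rpow ha hap
  intro x hx t ht
  rcases ht.eq_or_lt with rfl | htpos
  · exact hu.initial x hx
  refine le_antisymm (le_of_forall_pos_le_add fun ε hε => ?_) (hu.nonneg x hx t htpos)
  rw [zero_add]
  obtain ⟨r, hxr, hr0, hr⟩ : ∃ r, ‖x‖ ≤ r ∧ 0 < r ∧ C * (r ^ 2) ^ (-a) ≤ ε := by
    have hlim : Tendsto (fun r : ℝ => C * (r ^ 2) ^ (-a)) atTop (𝓝 (C * 0)) :=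
      ((tendsto_rpow_neg_atTop ha).comp (tendsto_pow_atTop two_ne_zero)).const_mul C
    rw [mul_zero] at hlim
    exact ((eventually_ge_atTop ‖x‖).and ((eventually_gt_atTop 0).and
      (hlim.eventually_le_const hε))).exists
  obtain ⟨c, hCc, hcr⟩ : ∃ c, C ≤ c ∧
      a * (a + 1 + 2 * m) ≤ c ^ (p - 1) * (r ^ 2) ^ (m + 1 - m * p) :=
    ((eventually_ge_atTop C).and (((tendsto_rpow_atTop hp1).atTop_mul_const
      (by positivity)).eventually_ge_atTop _)).exists
  have hlim : Tendsto (fun δ : ℝ => c * ((‖x‖ ^ 2) ^ (-m) *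
      (Real.log (‖x‖ ^ 2) / 2 + (1 - Real.log δ)) ^ (-a)) + ε) (𝓝[>] 0)
      (𝓝 (c * ((‖x‖ ^ 2) ^ (-m) * 0) + ε)) := by
    refine ((((tendsto_rpow_neg_atTop ha).comp ?_).const_mul _).const_mul c).add_const ε
    refine tendsto_atTop_add_const_left _ _ ?_
    simp only [sub_eq_add_neg]
    exact tendsto_atTop_add_const_left _ _
      (tendsto_neg_atBot_atTop.comp Real.tendsto_log_nhdsGT_zero)
  rw [mul_zero, mul_zero, zero_add] at hlim
  refine ge_of_tendsto hlim ?_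
  filter_upwards [Ioo_mem_nhdsGT (show (0 : ℝ) < min 1 ‖x‖ from
    lt_min one_pos (norm_pos_iff.2 hx))] with δ hδ
  exact hu.le_log_barrier hm hnm ha hap hmp hC hbound hε.le hr hCc hcr hδ.1
    (hδ.2.le.trans (min_le_left _ _)) (hδ.2.le.trans (min_le_right _ _)) hxr ht
end

section
/- Let n = 2 and let p > 1 be arbitrary. Then there exists a nontrivial classical solution of the Cauchy problem (P) in the punctured plane with initial data g ≡ 0; that is, there exists a function u : (ℝ²∖{0}) × [0,∞) → ℝ, continuous on (ℝ²∖{0}) × [0,∞), C² in x and C¹ in t on (ℝ²∖{0}) × (0,∞), satisfying u_t = Δu − u^p and u ≥ 0 on (ℝ²∖{0}) × (0,∞), with u(x,0) = 0 for all x ≠ 0, such that u is not identically zero. -/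
open scoped BigOperators

section

open Set Filter Topology MeasureTheory
open scoped BoundedContinuousFunction

section TailIntegral

variable {g h : ℝ → ℝ}

theorem hasDerivAt_integral_Ioi (hc : Continuous g) (hi : ∀ a, IntegrableOn g (Ioi a)) (s : ℝ) :
    HasDerivAt (fun a => ∫ x in Ioi a, g x) (-g s) s := by
  have h0 : HasDerivAt (fun a => (∫ x in Ioi (0 : ℝ), g x) - ∫ x in (0 : ℝ)..a, g x) (-g s) s :=
    (intervalIntegral.integral_hasDerivAt_right (hc.intervalIntegrable _ _)
      (hc.stronglyMeasurableAtFilter _ _) hc.continuousAt).const_sub _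
  refine h0.congr_of_eventuallyEq (Eventually.of_forall fun a => ?_)
  have := intervalIntegral.integral_Ioi_sub_Ioi' (hi 0) (hi a)
  simp only
  linarith

theorem abs_integral_Ioi_le {s : ℝ} (hh : IntegrableOn h (Ioi s))
    (hgh : ∀ x, s < x → |g x| ≤ h x) : |∫ x in Ioi s, g x| ≤ ∫ x in Ioi s, h x :=
  norm_integral_le_of_norm_le (f := g) hh
    ((ae_restrict_iff' measurableSet_Ioi).2 (Eventually.of_forall hgh))

theorem integrableOn_Ioi_of_abs_le {s : ℝ} (hg : Continuous g) (hh : IntegrableOn h (Ioi s))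
    (hgh : ∀ x, s < x → |g x| ≤ h x) : IntegrableOn g (Ioi s) :=
  Integrable.mono' hh hg.aestronglyMeasurable
    ((ae_restrict_iff' measurableSet_Ioi).2 (Eventually.of_forall hgh))

end TailIntegral

/-- A positive weight `ρ` on the line such that `1/ρ` is integrable near `+∞` with tail integral
`W`, and `ρ W` is integrable near `+∞` with tail integral `K`. -/
structure TailWeight (ρ W K : ℝ → ℝ) : Prop where
  continuous : Continuous ρ
  pos : ∀ s, 0 < ρ s
  hasDerivAt_W : ∀ s, HasDerivAt W (-(ρ s)⁻¹) s
  tendsto_W : Tendsto W atTop (𝓝 0)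
  hasDerivAt_K : ∀ s, HasDerivAt K (-(ρ s * W s)) s
  tendsto_K : Tendsto K atTop (𝓝 0)

namespace TailWeight

variable {ρ W K N : ℝ → ℝ} {L : ℝ}

theorem antitone_W (h : TailWeight ρ W K) : Antitone W :=
  antitone_of_hasDerivAt_nonpos h.hasDerivAt_W fun s => by
    have := h.pos s
    simp only [Pi.zero_apply]
    have : 0 < (ρ s)⁻¹ := by positivity
    linarith

theorem W_nonneg (h : TailWeight ρ W K) (s : ℝ) : 0 ≤ W s :=
  h.antitone_W.le_of_tendsto h.tendsto_W s

theorem W_pos (h : TailWeight ρ W K) (s : ℝ) : 0 < W s := by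
  have hs : StrictAnti W := strictAnti_of_hasDerivAt_neg h.hasDerivAt_W fun s => by
    have := h.pos s
    have : 0 < (ρ s)⁻¹ := by positivity
    linarith
  exact (h.W_nonneg (s + 1)).trans_lt (hs (by linarith))

theorem antitone_K (h : TailWeight ρ W K) : Antitone K :=
  antitone_of_hasDerivAt_nonpos h.hasDerivAt_K fun s => by
    have h1 := h.pos s
    have h2 := h.W_nonneg s
    simp only [Pi.zero_apply]
    have : 0 ≤ ρ s * W s := by positivity
    linarith

theorem K_nonneg (h : TailWeight ρ W K) (s : ℝ) : 0 ≤ K s :=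
  h.antitone_K.le_of_tendsto h.tendsto_K s

theorem continuous_W (h : TailWeight ρ W K) : Continuous W :=
  continuous_iff_continuousAt.2 fun s => (h.hasDerivAt_W s).continuousAt

theorem continuous_K (h : TailWeight ρ W K) : Continuous K :=
  continuous_iff_continuousAt.2 fun s => (h.hasDerivAt_K s).continuousAt

theorem continuous_inv (h : TailWeight ρ W K) : Continuous fun s => (ρ s)⁻¹ :=
  h.continuous.inv₀ fun s => (h.pos s).ne'

theorem integrableOn_inv (h : TailWeight ρ W K) (s : ℝ) :
    IntegrableOn (fun x => (ρ x)⁻¹) (Ioi s) := by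
  have := integrableOn_Ioi_deriv_of_nonpos' (a := s) (fun x _ => h.hasDerivAt_W x)
    (fun x _ => neg_nonpos.2 (inv_nonneg.2 (h.pos x).le)) h.tendsto_W
  simpa using this.neg

theorem integral_inv (h : TailWeight ρ W K) (s : ℝ) : ∫ x in Ioi s, (ρ x)⁻¹ = W s := by
  have := integral_Ioi_of_hasDerivAt_of_tendsto' (a := s) (fun x _ => h.hasDerivAt_W x)
    (h.integrableOn_inv s).neg h.tendsto_W
  rw [integral_neg] at this
  linarith

theorem hasDerivAt_exp_K (h : TailWeight ρ W K) (l s : ℝ) :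
    HasDerivAt (fun x => Real.exp (l * K x)) (-(l * (ρ s * W s * Real.exp (l * K s)))) s := by
  have := ((h.hasDerivAt_K s).const_mul l).exp
  convert this using 1
  ring

theorem tendsto_exp_K (h : TailWeight ρ W K) (l : ℝ) :
    Tendsto (fun x => Real.exp (l * K x)) atTop (𝓝 1) := by
  have := (Real.continuous_exp.tendsto _).comp (h.tendsto_K.const_mul l)
  simpa [Function.comp_def] using this

theorem integrableOn_exp_K (h : TailWeight ρ W K) {l : ℝ} (hl : 0 < l) (s : ℝ) :
    IntegrableOn (fun x => l * (ρ x * W x * Real.exp (l * K x))) (Ioi s) := by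
  have := integrableOn_Ioi_deriv_of_nonpos' (a := s) (fun x _ => h.hasDerivAt_exp_K l x)
    (fun x _ => neg_nonpos.2 (by have := h.pos x; have := h.W_nonneg x; positivity))
    (h.tendsto_exp_K l)
  simpa using this.neg

theorem integral_exp_K_le (h : TailWeight ρ W K) {l : ℝ} (hl : 0 < l) (s : ℝ) :
    ∫ x in Ioi s, l * (ρ x * W x * Real.exp (l * K x)) ≤ Real.exp (l * K s) := by
  have := integral_Ioi_of_hasDerivAt_of_tendsto' (a := s) (fun x _ => h.hasDerivAt_exp_K l x)
    (h.integrableOn_exp_K hl s).neg (h.tendsto_exp_K l)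
  rw [integral_neg] at this
  linarith

/-- The momentum with rescaled profile `n`. -/
noncomputable def momentum (K : ℝ → ℝ) (L : ℝ) (n : ℝ →ᵇ ℝ) (s : ℝ) : ℝ :=
  Real.exp (2 * L * K s) * n s

/-- The position, that is, the tail integral of the momentum divided by `ρ`. -/
noncomputable def position (ρ K : ℝ → ℝ) (L : ℝ) (n : ℝ →ᵇ ℝ) (s : ℝ) : ℝ :=
  ∫ x in Ioi s, momentum K L n x * (ρ x)⁻¹

/-- The total force `∫_s^∞ ρ N(w)`. -/
noncomputable def impulse (ρ K N : ℝ → ℝ) (L : ℝ) (n : ℝ →ᵇ ℝ) (s : ℝ) : ℝ :=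
  ∫ x in Ioi s, ρ x * N (position ρ K L n x)

theorem continuous_momentum (h : TailWeight ρ W K) (n : ℝ →ᵇ ℝ) :
    Continuous (momentum K L n) := by
  have := h.continuous_K
  unfold momentum
  fun_prop

theorem abs_momentum_le (h : TailWeight ρ W K) (hL : 0 < L) (n : ℝ →ᵇ ℝ) {s x : ℝ} (hx : s ≤ x) :
    |momentum K L n x| ≤ Real.exp (2 * L * K s) * ‖n‖ := by
  rw [momentum, abs_mul, Real.abs_exp]
  have h1 : K x ≤ K s := h.antitone_K hx
  have h2 : |n x| ≤ ‖n‖ := n.norm_coe_le_norm x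
  gcongr

theorem momentum_sub (n₁ n₂ : ℝ →ᵇ ℝ) (s : ℝ) :
    momentum K L n₁ s - momentum K L n₂ s = momentum K L (n₁ - n₂) s := by
  simp [momentum, mul_sub]

theorem integrableOn_position (h : TailWeight ρ W K) (hL : 0 < L) (n : ℝ →ᵇ ℝ) (s : ℝ) :
    IntegrableOn (fun x => momentum K L n x * (ρ x)⁻¹) (Ioi s) := by
  refine integrableOn_Ioi_of_abs_le ((h.continuous_momentum n).mul h.continuous_inv)
    ((h.integrableOn_inv s).const_mul (Real.exp (2 * L * K s) * ‖n‖)) fun x hx => ?_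
  have := h.pos x
  rw [abs_mul, abs_of_pos (inv_pos.2 this)]
  have := h.abs_momentum_le hL n hx.le
  gcongr

theorem abs_position_le (h : TailWeight ρ W K) (hL : 0 < L) (n : ℝ →ᵇ ℝ) (s : ℝ) :
    |position ρ K L n s| ≤ Real.exp (2 * L * K s) * ‖n‖ * W s := by
  rw [← h.integral_inv s, ← integral_const_mul]
  refine abs_integral_Ioi_le ((h.integrableOn_inv s).const_mul _) fun x hx => ?_
  have := h.pos x
  rw [abs_mul, abs_of_pos (inv_pos.2 this)]
  have := h.abs_momentum_le hL n hx.le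
  gcongr

theorem position_sub (h : TailWeight ρ W K) (hL : 0 < L) (n₁ n₂ : ℝ →ᵇ ℝ) (s : ℝ) :
    position ρ K L n₁ s - position ρ K L n₂ s = position ρ K L (n₁ - n₂) s := by
  rw [position, position, position, ← integral_sub (h.integrableOn_position hL n₁ s)
    (h.integrableOn_position hL n₂ s)]
  simp only [← momentum_sub, sub_mul]

theorem hasDerivAt_position (h : TailWeight ρ W K) (hL : 0 < L) (n : ℝ →ᵇ ℝ) (s : ℝ) :
    HasDerivAt (position ρ K L n) (-(momentum K L n s * (ρ s)⁻¹)) s :=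
  hasDerivAt_integral_Ioi ((h.continuous_momentum n).mul h.continuous_inv)
    (h.integrableOn_position hL n) s

theorem continuous_force (h : TailWeight ρ W K) (hL : 0 < L) (hN : Continuous N) (n : ℝ →ᵇ ℝ) :
    Continuous fun x => ρ x * N (position ρ K L n x) :=
  h.continuous.mul (hN.comp
    (continuous_iff_continuousAt.2 fun s => (h.hasDerivAt_position hL n s).continuousAt))

theorem abs_force_sub_le (h : TailWeight ρ W K) (hL : 0 < L)
    (hLip : ∀ a b, |N a - N b| ≤ L * |a - b|) (n₁ n₂ : ℝ →ᵇ ℝ) (s : ℝ) :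
    |ρ s * N (position ρ K L n₁ s) - ρ s * N (position ρ K L n₂ s)| ≤
      ‖n₁ - n₂‖ / 2 * (2 * L * (ρ s * W s * Real.exp (2 * L * K s))) := by
  have h0 := h.pos s
  have h1 := h.abs_position_le hL (n₁ - n₂) s
  rw [← h.position_sub hL] at h1
  rw [← mul_sub, abs_mul, abs_of_pos h0]
  calc _ ≤ ρ s * (L * (Real.exp (2 * L * K s) * ‖n₁ - n₂‖ * W s)) := by
        gcongr
        exact (hLip _ _).trans (by gcongr)
    _ = _ := by ring

theorem position_zero (s : ℝ) : position ρ K L 0 s = 0 := by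
  simp [position, momentum]

theorem integrableOn_force (h : TailWeight ρ W K) (hL : 0 < L) (hN : Continuous N)
    (hLip : ∀ a b, |N a - N b| ≤ L * |a - b|) (h0 : N 0 = 0) (n : ℝ →ᵇ ℝ) (s : ℝ) :
    IntegrableOn (fun x => ρ x * N (position ρ K L n x)) (Ioi s) := by
  refine integrableOn_Ioi_of_abs_le (h.continuous_force hL hN n)
    ((h.integrableOn_exp_K (mul_pos two_pos hL) s).const_mul (‖n‖ / 2)) fun x _ => ?_
  simpa [position_zero, h0] using h.abs_force_sub_le hL hLip n 0 x

theorem abs_impulse_sub_le (h : TailWeight ρ W K) (hL : 0 < L) (hN : Continuous N)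
    (hLip : ∀ a b, |N a - N b| ≤ L * |a - b|) (h0 : N 0 = 0) (n₁ n₂ : ℝ →ᵇ ℝ) (s : ℝ) :
    |impulse ρ K N L n₁ s - impulse ρ K N L n₂ s| ≤
      Real.exp (2 * L * K s) * (‖n₁ - n₂‖ / 2) := by
  have hl := mul_pos two_pos hL
  rw [impulse, impulse, ← integral_sub (h.integrableOn_force hL hN hLip h0 n₁ s)
    (h.integrableOn_force hL hN hLip h0 n₂ s)]
  refine (abs_integral_Ioi_le ((h.integrableOn_exp_K hl s).const_mul (‖n₁ - n₂‖ / 2))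
    fun x _ => h.abs_force_sub_le hL hLip n₁ n₂ x).trans ?_
  rw [integral_const_mul, mul_comm]
  have := h.integral_exp_K_le hl s
  gcongr

theorem hasDerivAt_impulse (h : TailWeight ρ W K) (hL : 0 < L) (hN : Continuous N)
    (hLip : ∀ a b, |N a - N b| ≤ L * |a - b|) (h0 : N 0 = 0) (n : ℝ →ᵇ ℝ) (s : ℝ) :
    HasDerivAt (impulse ρ K N L n) (-(ρ s * N (position ρ K L n s))) s :=
  hasDerivAt_integral_Ioi (h.continuous_force hL hN n) (h.integrableOn_force hL hN hLip h0 n) s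

theorem abs_exp_neg_mul_le (h : TailWeight ρ W K) (hL : 0 < L) {A a e s : ℝ}
    (ha : |a| ≤ Real.exp (2 * L * K s) * e) :
    |Real.exp (-(2 * L * K s)) * (A - a)| ≤ |A| + e := by
  rw [abs_mul, Real.abs_exp]
  have h1 : Real.exp (-(2 * L * K s)) ≤ 1 := by
    rw [Real.exp_le_one_iff]
    have := h.K_nonneg s
    have : 0 ≤ 2 * L * K s := by positivity
    linarith
  have h2 : Real.exp (-(2 * L * K s)) * Real.exp (2 * L * K s) = 1 := by
    rw [← Real.exp_add]; simp
  calc Real.exp (-(2 * L * K s)) * |A - a|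
      ≤ Real.exp (-(2 * L * K s)) * (|A| + Real.exp (2 * L * K s) * e) := by
        gcongr
        exact (abs_sub _ _).trans (by gcongr)
    _ = Real.exp (-(2 * L * K s)) * |A| + e := by
        rw [mul_add, ← mul_assoc, h2, one_mul]
    _ ≤ 1 * |A| + e := by gcongr
    _ = _ := by rw [one_mul]

/-- The Picard map for the terminal value problem with momentum `A` at `+∞`. -/
theorem exists_picard (h : TailWeight ρ W K) (hL : 0 < L) (hN : Continuous N)
    (hLip : ∀ a b, |N a - N b| ≤ L * |a - b|) (h0 : N 0 = 0) :
    ∃ Φ : ℝ → (ℝ →ᵇ ℝ) → (ℝ →ᵇ ℝ),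
      (∀ A n s, Φ A n s = Real.exp (-(2 * L * K s)) * (A - impulse ρ K N L n s)) ∧
      ∀ A B n₁ n₂, dist (Φ A n₁) (Φ B n₂) ≤ |A - B| + dist n₁ n₂ / 2 := by
  have himp0 : ∀ s, impulse ρ K N L 0 s = 0 := fun s => by simp [impulse, position_zero, h0]
  refine ⟨fun A n => BoundedContinuousFunction.ofNormedAddCommGroup
    (fun s => Real.exp (-(2 * L * K s)) * (A - impulse ρ K N L n s)) ?_ (|A| + ‖n‖ / 2) ?_,
    fun A n s => rfl, fun A B n₁ n₂ => ?_⟩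
  · have h1 : Continuous (impulse ρ K N L n) := continuous_iff_continuousAt.2 fun s =>
      (h.hasDerivAt_impulse hL hN hLip h0 n s).continuousAt
    have := h.continuous_K
    fun_prop
  · intro s
    refine h.abs_exp_neg_mul_le hL ?_
    simpa [himp0] using h.abs_impulse_sub_le hL hN hLip h0 n 0 s
  · rw [BoundedContinuousFunction.dist_le (by positivity)]
    intro s
    rw [Real.dist_eq, dist_eq_norm n₁ n₂]
    simp only [BoundedContinuousFunction.coe_ofNormedAddCommGroup]
    have := h.abs_exp_neg_mul_le hL (A := A - B) (h.abs_impulse_sub_le hL hN hLip h0 n₁ n₂ s)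
    convert this using 2
    ring

/-- Solutions of `dw/ds = -m / ρ`, `dm/ds = ρ N(w)` with `w(+∞) = 0`, `m(+∞) = A` exist on the whole
line and depend continuously on `A`. -/
theorem exists_solution_family (h : TailWeight ρ W K) (hL : 0 < L)
    (hLip : ∀ a b, |N a - N b| ≤ L * |a - b|) (h0 : N 0 = 0) :
    ∃ w m : ℝ → ℝ → ℝ,
      (∀ A s, HasDerivAt (w A) (-(m A s * (ρ s)⁻¹)) s) ∧
      (∀ A s, HasDerivAt (m A) (ρ s * N (w A s)) s) ∧
      (∀ A, Tendsto (w A) atTop (𝓝 0)) ∧ (∀ A, Tendsto (m A) atTop (𝓝 A)) ∧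
      (∀ s, Continuous fun A => w A s) ∧ ∀ s, Continuous fun A => m A s := by
  have hN : Continuous N :=
    (LipschitzWith.of_dist_le' (K := L) hLip).continuous
  obtain ⟨Φ, hΦ, hdist⟩ := h.exists_picard hL hN hLip h0
  have hcontr : ∀ A, ContractingWith (1 / 2) (Φ A) := fun A => by
    refine ⟨by
      rw [← NNReal.coe_lt_coe]; norm_num, LipschitzWith.of_dist_le_mul fun n₁ n₂ => ?_⟩
    have := hdist A A n₁ n₂
    simp only [sub_self, abs_zero, zero_add] at this
    push_cast
    linarith
  have hfix : ∀ A, ∃ n, Φ A n = n := fun A => ⟨_, (hcontr A).fixedPoint_isFixedPt⟩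
  choose n hn using hfix
  have hnlip : ∀ A B, ‖n A - n B‖ ≤ 2 * |A - B| := fun A B => by
    have := hdist A B (n A) (n B)
    rw [hn, hn, dist_eq_norm] at this
    linarith
  have hm : ∀ A s, momentum K L (n A) s = A - impulse ρ K N L (n A) s := fun A s => by
    rw [momentum, ← hn A, hΦ, ← mul_assoc, ← Real.exp_add, hn A]
    simp
  have hcont : ∀ (f : ℝ → ℝ) (C : ℝ), 0 ≤ C → (∀ A B, |f A - f B| ≤ C * ‖n A - n B‖) →
      Continuous f := fun f C hC hf => by
    refine (LipschitzWith.of_dist_le' (K := C * 2) fun A B => ?_).continuous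
    refine (hf A B).trans ?_
    rw [Real.dist_eq, mul_assoc]
    exact mul_le_mul_of_nonneg_left (hnlip A B) hC
  refine ⟨fun A => position ρ K L (n A), fun A => momentum K L (n A),
    fun A s => h.hasDerivAt_position hL (n A) s, fun A s => ?_,
    fun A => tendsto_integral_Ioi_zero tendsto_id, fun A => ?_, fun s => ?_, fun s => ?_⟩
  · have := (h.hasDerivAt_impulse hL hN hLip h0 (n A) s).const_sub A
    rw [neg_neg] at this
    exact this.congr_of_eventuallyEq (Eventually.of_forall (hm A))
  · have : Tendsto (impulse ρ K N L (n A)) atTop (𝓝 0) := tendsto_integral_Ioi_zero tendsto_id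
    have := this.const_sub A
    rw [sub_zero] at this
    exact this.congr fun s => (hm A s).symm
  · have := h.W_nonneg s
    refine hcont _ (Real.exp (2 * L * K s) * W s) (by positivity) fun A B => ?_
    rw [h.position_sub hL]
    refine (h.abs_position_le hL _ s).trans_eq (by ring)
  · refine hcont _ (Real.exp (2 * L * K s)) (by positivity) fun A B => ?_
    rw [momentum_sub]
    exact h.abs_momentum_le hL _ le_rfl

/-- A solution decaying at `+∞` that exceeds the level `c`, above which the force vanishes, has
nonnegative momentum. -/
theorem momentum_nonneg_of_exceeds (h : TailWeight ρ W K) {c : ℝ} (hc : 0 < c)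
    (hN : ∀ a, 0 ≤ N a) (hNc : ∀ a, c ≤ a → N a = 0) {w m : ℝ → ℝ}
    (hw : ∀ s, HasDerivAt w (-(m s * (ρ s)⁻¹)) s) (hm : ∀ s, HasDerivAt m (ρ s * N (w s)) s)
    (hw0 : Tendsto w atTop (𝓝 0)) {s₂ : ℝ} (hs₂ : c < w s₂) (s₁ : ℝ) : 0 ≤ m s₁ := by
  by_contra! hs₁
  have hwc : Continuous w := continuous_iff_continuousAt.2 fun s => (hw s).continuousAt
  have hmc : Continuous m := continuous_iff_continuousAt.2 fun s => (hm s).continuousAt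
  have hmono : Monotone m := monotone_of_hasDerivAt_nonneg hm fun s =>
    mul_nonneg (h.pos s).le (hN _)
  obtain ⟨b, hb₁, hb₂⟩ := ((hw0.eventually_lt_const hc).and (eventually_ge_atTop s₂)).exists
  obtain ⟨s₃, hs₃, hs₃c⟩ := intermediate_value_Icc' hb₂ hwc.continuousOn ⟨hb₁.le, hs₂.le⟩
  have hlt : s₂ < s₃ := lt_of_le_of_ne hs₃.1 fun he => by rw [he, hs₃c] at hs₂; exact hs₂.false
  obtain ⟨ξ, hξ, hξ'⟩ := exists_hasDerivAt_eq_slope w _ hlt hwc.continuousOn fun x _ => hw x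
  have hmξ : 0 < m ξ := by
    have h1 : (w s₃ - w s₂) / (s₃ - s₂) < 0 :=
      div_neg_of_neg_of_pos (by linarith) (by linarith)
    rw [← hξ', neg_lt_zero] at h1
    exact pos_of_mul_pos_left h1 (inv_nonneg.2 (h.pos ξ).le)
  have hs₁ξ : s₁ ≤ ξ := by
    by_contra! hcon
    linarith [hmono hcon.le]
  obtain ⟨σ, hσ, hσ0⟩ := intermediate_value_Icc hs₁ξ hmc.continuousOn ⟨hs₁.le, hmξ.le⟩
  have hσ₄ : σ ≤ s₃ := hσ.2.trans hξ.2.le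
  have hanti : AntitoneOn w (Ici σ) := by
    refine antitoneOn_of_deriv_nonpos (convex_Ici σ) hwc.continuousOn
      (fun x _ => (hw x).differentiableAt.differentiableWithinAt) fun x hx => ?_
    rw [interior_Ici] at hx
    rw [(hw x).deriv, neg_nonpos]
    exact mul_nonneg (hσ0 ▸ hmono (mem_Ioi.1 hx).le) (inv_nonneg.2 (h.pos x).le)
  have hconst := constant_of_has_deriv_right_zero (f := m) (a := σ) (b := s₃) hmc.continuousOn
    fun x hx => by
      have h1 : c ≤ w x := hs₃c ▸ hanti hx.1 hσ₄ hx.2.le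
      have h2 := (hm x).hasDerivWithinAt (s := Ici x)
      rwa [hNc _ h1, mul_zero] at h2
  have := hconst s₃ ⟨hσ₄, le_rfl⟩
  linarith [hmono hξ.2.le]

/-- Shooting from `+∞`: for a force supported in `[0, c]` there is a nontrivial decaying solution
with values in `[0, c]`. -/
theorem exists_solution_mem_Icc (h : TailWeight ρ W K) (hL : 0 < L)
    (hLip : ∀ a b, |N a - N b| ≤ L * |a - b|) {c B : ℝ} (hc : 0 < c) (hN : ∀ a, 0 ≤ N a)
    (hN0 : ∀ a, a ≤ 0 → N a = 0) (hNc : ∀ a, c ≤ a → N a = 0) (hB : ∀ s, W s ≤ B) :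
    ∃ w m : ℝ → ℝ,
      (∀ s, HasDerivAt w (-(m s * (ρ s)⁻¹)) s) ∧ (∀ s, HasDerivAt m (ρ s * N (w s)) s) ∧
      Tendsto w atTop (𝓝 0) ∧ (∀ s, w s ∈ Icc 0 c) ∧ ∃ s, w s ≠ 0 := by
  obtain ⟨w, m, hw, hm, hw0, hmA, hwc, hmc⟩ :=
    h.exists_solution_family hL hLip (hN0 0 le_rfl)
  have hmono : ∀ A, Monotone (m A) := fun A => monotone_of_hasDerivAt_nonneg (hm A) fun s =>
    mul_nonneg (h.pos s).le (hN _)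
  have hmle : ∀ A s, m A s ≤ A := fun A s => (hmono A).ge_of_tendsto (hmA A) s
  have hwle : ∀ A s, w A s ≤ A * W s := fun A s => by
    have hd : ∀ x, HasDerivAt (fun x => w A x - A * W x) ((A - m A x) * (ρ x)⁻¹) x := fun x => by
      refine ((hw A x).sub ((h.hasDerivAt_W x).const_mul A)).congr_deriv ?_
      ring
    have hmon := monotone_of_hasDerivAt_nonneg hd fun x =>
      mul_nonneg (sub_nonneg.2 (hmle A x)) (inv_nonneg.2 (h.pos x).le)
    have hlim : Tendsto (fun x => w A x - A * W x) atTop (𝓝 0) := by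
      simpa using (hw0 A).sub (h.tendsto_W.const_mul A)
    linarith [hmon.ge_of_tendsto hlim s]
  have hmge : ∀ A, 0 ≤ A → ∀ s, A * (1 - L * K s) ≤ m A s := fun A hA s => by
    have hd : ∀ x, HasDerivAt (fun x => m A x + L * A * K x)
        (ρ x * N (w A x) - L * A * (ρ x * W x)) x := fun x => by
      refine ((hm A x).add ((h.hasDerivAt_K x).const_mul (L * A))).congr_deriv ?_
      ring
    have hanti := antitone_of_hasDerivAt_nonpos hd fun x => by
      have h1 : N (w A x) ≤ L * (A * W x) := by
        rcases le_total (w A x) 0 with hx | hx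
        · rw [hN0 _ hx]
          have := h.W_nonneg x
          positivity
        · have := hLip (w A x) 0
          rw [hN0 0 le_rfl, sub_zero, sub_zero, abs_of_nonneg (hN _), abs_of_nonneg hx] at this
          exact this.trans (by gcongr; exact hwle A x)
      have := mul_le_mul_of_nonneg_left h1 (h.pos x).le
      simp only [Pi.zero_apply]
      linarith
    have hlim : Tendsto (fun x => m A x + L * A * K x) atTop (𝓝 A) := by
      simpa using (hmA A).add (h.tendsto_K.const_mul (L * A))
    linarith [hanti.le_of_tendsto hlim s]
  obtain ⟨s₀, hs₀⟩ : ∃ s, L * K s < 1 / 2 := by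
    have := h.tendsto_K.const_mul L
    rw [mul_zero] at this
    exact (this.eventually_lt_const (by norm_num)).exists
  have hwge : ∀ A, 0 ≤ A → A / 2 * W s₀ ≤ w A s₀ := fun A hA => by
    have hd : ∀ x, HasDerivAt (fun x => w A x - A / 2 * W x) ((A / 2 - m A x) * (ρ x)⁻¹) x :=
      fun x => by
        refine ((hw A x).sub ((h.hasDerivAt_W x).const_mul (A / 2))).congr_deriv ?_
        ring
    have hanti : AntitoneOn (fun x => w A x - A / 2 * W x) (Ici s₀) := by
      refine antitoneOn_of_deriv_nonpos (convex_Ici s₀)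
        (fun x _ => (hd x).continuousAt.continuousWithinAt)
        (fun x _ => (hd x).differentiableAt.differentiableWithinAt) fun x hx => ?_
      rw [interior_Ici] at hx
      rw [(hd x).deriv]
      refine mul_nonpos_of_nonpos_of_nonneg ?_ (inv_nonneg.2 (h.pos x).le)
      have h1 := hmge A hA s₀
      have h2 := hmono A (mem_Ioi.1 hx).le
      nlinarith
    have hlim : Tendsto (fun x => w A x - A / 2 * W x) atTop (𝓝 0) := by
      simpa using (hw0 A).sub (h.tendsto_W.const_mul (A / 2))
    have := le_of_tendsto hlim ((eventually_ge_atTop s₀).mono fun x hx =>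
      hanti self_mem_Ici hx hx)
    linarith
  have hB0 : 0 < B := (h.W_pos 0).trans_le (hB 0)
  obtain ⟨A, hA, hA₁, hA₂⟩ : ∃ A, 0 < A ∧ (∀ s, 0 ≤ m A s) ∧ ∀ s, w A s ≤ c := by
    by_contra! hcon
    have hU₁ : IsOpen {A | ∃ s, m A s < 0} := by
      rw [ofPred_exists]
      exact isOpen_iUnion fun s => isOpen_lt (hmc s) continuous_const
    have hU₂ : IsOpen {A | ∃ s, c < w A s} := by
      rw [ofPred_exists]
      exact isOpen_iUnion fun s => isOpen_lt continuous_const (hwc s)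
    have hcov : Ioi (0 : ℝ) ⊆ {A | ∃ s, m A s < 0} ∪ {A | ∃ s, c < w A s} := fun A hA => by
      by_cases hA₁ : ∀ s, 0 ≤ m A s
      · exact Or.inr (hcon A hA hA₁)
      · push Not at hA₁
        exact Or.inl hA₁
    have hne₁ : (Ioi (0 : ℝ) ∩ {A | ∃ s, m A s < 0}).Nonempty := by
      refine ⟨c / B, div_pos hc hB0, (hcov (mem_Ioi.2 (div_pos hc hB0))).resolve_right ?_⟩
      rintro ⟨s, hs⟩
      have h1 : c / B * W s ≤ c / B * B := by gcongr; exact hB s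
      rw [div_mul_cancel₀ _ hB0.ne'] at h1
      linarith [hwle (c / B) s]
    have hne₂ : (Ioi (0 : ℝ) ∩ {A | ∃ s, c < w A s}).Nonempty := by
      have hW := h.W_pos s₀
      have hpos : 0 < 4 * c / W s₀ := by positivity
      refine ⟨4 * c / W s₀, hpos, s₀, lt_of_lt_of_le ?_ (hwge _ hpos.le)⟩
      have : 4 * c / W s₀ / 2 * W s₀ = 2 * c := by field_simp; norm_num
      linarith
    obtain ⟨A, _, ⟨s₁, hs₁⟩, s₂, hs₂⟩ := isPreconnected_Ioi _ _ hU₁ hU₂ hcov hne₁ hne₂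
    exact hs₁.not_ge (h.momentum_nonneg_of_exceeds hc hN hNc (hw A) (hm A) (hw0 A) hs₂ s₁)
  have hanti : Antitone (w A) := antitone_of_hasDerivAt_nonpos (hw A) fun s =>
    neg_nonpos.2 (mul_nonneg (hA₁ s) (inv_nonneg.2 (h.pos s).le))
  refine ⟨w A, m A, hw A, hm A, hw0 A, fun s => ⟨hanti.le_of_tendsto (hw0 A) s, hA₂ s⟩, ?_⟩
  by_contra! hzero
  have hm0 : ∀ s, m A s = 0 := fun s => by
    have h1 : w A = fun _ => 0 := funext hzero
    have h2 := hw A s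
    rw [h1] at h2
    have h3 := h2.unique (hasDerivAt_const s (0 : ℝ))
    have h4 := (h.pos s).ne'
    simpa [h4] using h3
  have := tendsto_nhds_unique (hmA A) (tendsto_const_nhds.congr fun s => (hm0 s).symm)
  exact hA.ne' this

end TailWeight

/-- The weight of the self-similar equation in the logarithmic variable. -/
noncomputable def selfSimilarWeight (α s : ℝ) : ℝ := Real.exp (Real.exp (2 * s) / 4 - 2 * α * s)

section SelfSimilarWeight

variable {α : ℝ}

theorem continuous_selfSimilarWeight : Continuous (selfSimilarWeight α) := by
  unfold selfSimilarWeight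
  fun_prop

theorem selfSimilarWeight_pos (s : ℝ) : 0 < selfSimilarWeight α s := Real.exp_pos _

theorem hasDerivAt_inv_selfSimilarWeight (s : ℝ) :
    HasDerivAt (fun x => (selfSimilarWeight α x)⁻¹)
      ((2 * α - Real.exp (2 * s) / 2) * (selfSimilarWeight α s)⁻¹) s := by
  have h1 : HasDerivAt (fun x => 2 * α * x - Real.exp (2 * x) / 4)
      (2 * α - Real.exp (2 * s) / 2) s := by
    refine (((hasDerivAt_id s).const_mul (2 * α)).sub
      (((hasDerivAt_id s).const_mul 2).exp.div_const 4)).congr_deriv ?_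
    simp only [id]
    ring
  have h2 : ∀ x, (selfSimilarWeight α x)⁻¹ = Real.exp (2 * α * x - Real.exp (2 * x) / 4) :=
    fun x => by rw [selfSimilarWeight, ← Real.exp_neg, neg_sub]
  simp only [h2]
  refine h1.exp.congr_deriv ?_
  ring

theorem inv_selfSimilarWeight_le (hα : 0 < α) (s : ℝ) :
    (selfSimilarWeight α s)⁻¹ ≤ Real.exp ((2 * α + 1) ^ 2 / 2) * Real.exp (-s) := by
  rw [selfSimilarWeight, ← Real.exp_neg, ← Real.exp_add, Real.exp_le_exp]
  rcases le_total s 0 with hs | hs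
  · have := Real.exp_pos (2 * s)
    nlinarith [sq_nonneg (2 * α + 1)]
  · have := Real.quadratic_le_exp_of_nonneg (x := 2 * s) (by linarith)
    nlinarith [sq_nonneg (2 * α + 1 - s)]

theorem inv_selfSimilarWeight_le_exp (s : ℝ) :
    (selfSimilarWeight α s)⁻¹ ≤ Real.exp (2 * α * s) := by
  rw [selfSimilarWeight, ← Real.exp_neg, Real.exp_le_exp]
  have := Real.exp_pos (2 * s)
  linarith

theorem integrableOn_inv_selfSimilarWeight (hα : 0 < α) (a : ℝ) :
    IntegrableOn (fun x => (selfSimilarWeight α x)⁻¹) (Ioi a) := by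
  refine integrableOn_Ioi_of_abs_le
    (continuous_selfSimilarWeight.inv₀ fun s => (selfSimilarWeight_pos s).ne')
    ((integrableOn_exp_neg_Ioi a).const_mul (Real.exp ((2 * α + 1) ^ 2 / 2))) fun x _ => ?_
  rw [abs_of_pos (inv_pos.2 (selfSimilarWeight_pos x))]
  exact inv_selfSimilarWeight_le hα x

theorem tendsto_inv_selfSimilarWeight (hα : 0 < α) :
    Tendsto (fun x => (selfSimilarWeight α x)⁻¹) atTop (𝓝 0) := by
  refine squeeze_zero (fun x => (inv_pos.2 (selfSimilarWeight_pos x)).le)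
    (inv_selfSimilarWeight_le hα) ?_
  simpa using Real.tendsto_exp_neg_atTop_nhds_zero.const_mul (Real.exp ((2 * α + 1) ^ 2 / 2))

/-- The self-similar weight has a bounded tail integral. -/
theorem exists_tailWeight_selfSimilarWeight (hα : 0 < α) :
    ∃ W K : ℝ → ℝ, TailWeight (selfSimilarWeight α) W K ∧ ∃ B, ∀ s, W s ≤ B := by
  set ρ := selfSimilarWeight α
  have hpos : ∀ s, 0 < (ρ s)⁻¹ := fun s => inv_pos.2 (selfSimilarWeight_pos s)
  set W : ℝ → ℝ := fun s => ∫ x in Ioi s, (ρ x)⁻¹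
  have hW : ∀ s, HasDerivAt W (-(ρ s)⁻¹) s := hasDerivAt_integral_Ioi
    (continuous_selfSimilarWeight.inv₀ fun s => (selfSimilarWeight_pos s).ne')
    (integrableOn_inv_selfSimilarWeight hα)
  have hW0 : Tendsto W atTop (𝓝 0) := tendsto_integral_Ioi_zero tendsto_id
  have hWanti : Antitone W := antitone_of_hasDerivAt_nonpos hW fun s => neg_nonpos.2 (hpos s).le
  have hWnn : ∀ s, 0 ≤ W s := hWanti.le_of_tendsto hW0
  have hWc : Continuous W := continuous_iff_continuousAt.2 fun s => (hW s).continuousAt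
  have hρWc : Continuous fun x => ρ x * W x := continuous_selfSimilarWeight.mul hWc
  have hdecay : ∀ s, Real.log (8 * α + 1) ≤ 2 * s → W s ≤ 4 * Real.exp (-2 * s) * (ρ s)⁻¹ := by
    intro s₀ hs₀
    have hd : ∀ s, HasDerivAt (fun x => 4 * Real.exp (-2 * x) * (ρ x)⁻¹ - W x)
        ((8 * (α - 1) * Real.exp (-2 * s) - 1) * (ρ s)⁻¹) s := fun s => by
      have h1 : HasDerivAt (fun x : ℝ => 4 * Real.exp (-2 * x)) (4 * (Real.exp (-2 * s) * -2)) s := by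
        simpa using ((hasDerivAt_id s).const_mul (-2)).exp.const_mul 4
      refine ((h1.mul (hasDerivAt_inv_selfSimilarWeight s)).sub (hW s)).congr_deriv ?_
      have h2 : Real.exp (-2 * s) * Real.exp (2 * s) = 1 := by rw [← Real.exp_add]; simp
      linear_combination (-2 * (ρ s)⁻¹) * h2
    have hanti : AntitoneOn (fun x => 4 * Real.exp (-2 * x) * (ρ x)⁻¹ - W x) (Ici s₀) := by
      refine antitoneOn_of_deriv_nonpos (convex_Ici s₀)
        (fun x _ => (hd x).continuousAt.continuousWithinAt)
        (fun x _ => (hd x).differentiableAt.differentiableWithinAt) fun x hx => ?_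
      rw [interior_Ici] at hx
      rw [(hd x).deriv]
      refine mul_nonpos_of_nonpos_of_nonneg ?_ (hpos x).le
      have h1 : 8 * α + 1 ≤ Real.exp (2 * x) := by
        rw [← Real.log_le_iff_le_exp (by linarith)]
        linarith [mem_Ioi.1 hx]
      have h2 : Real.exp (-2 * x) * Real.exp (2 * x) = 1 := by rw [← Real.exp_add]; simp
      nlinarith [Real.exp_pos (-2 * x)]
    have hlim : Tendsto (fun x => 4 * Real.exp (-2 * x) * (ρ x)⁻¹ - W x) atTop (𝓝 0) := by
      have h1 : Tendsto (fun x : ℝ => Real.exp (-2 * x)) atTop (𝓝 0) :=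
        Real.tendsto_exp_atBot.comp (tendsto_id.const_mul_atTop_of_neg (by norm_num))
      simpa using ((h1.const_mul 4).mul (tendsto_inv_selfSimilarWeight hα)).sub hW0
    have := le_of_tendsto hlim ((eventually_ge_atTop s₀).mono fun x hx =>
      hanti self_mem_Ici hx hx)
    linarith
  have hint : ∀ a, IntegrableOn (fun x => ρ x * W x) (Ioi a) := fun a => by
    refine integrable_of_isBigO_exp_neg (b := 2) two_pos hρWc.continuousOn ?_
    refine Asymptotics.IsBigO.of_bound 4 ?_
    filter_upwards [eventually_ge_atTop (Real.log (8 * α + 1) / 2)] with s hs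
    have h1 := hdecay s (by linarith)
    have h2 : 0 < ρ s := selfSimilarWeight_pos s
    rw [Real.norm_eq_abs, Real.norm_eq_abs, Real.abs_exp, abs_of_nonneg (mul_nonneg h2.le (hWnn s))]
    calc ρ s * W s ≤ ρ s * (4 * Real.exp (-2 * s) * (ρ s)⁻¹) := by gcongr
      _ = 4 * Real.exp (-2 * s) := by field_simp
  refine ⟨W, fun s => ∫ x in Ioi s, ρ x * W x, ⟨continuous_selfSimilarWeight, selfSimilarWeight_pos,
    hW, hW0, hasDerivAt_integral_Ioi hρWc hint, tendsto_integral_Ioi_zero tendsto_id⟩,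
    W 0 + (2 * α)⁻¹, fun s => ?_⟩
  have h2α : 0 < (2 * α)⁻¹ := by positivity
  rcases le_total 0 s with hs | hs
  · linarith [hWanti hs]
  · have hd : ∀ x, HasDerivAt (fun x => W x + (2 * α)⁻¹ * Real.exp (2 * α * x))
        (Real.exp (2 * α * x) - (ρ x)⁻¹) x := fun x => by
      refine ((hW x).add (((hasDerivAt_id x).const_mul (2 * α)).exp.const_mul
        (2 * α)⁻¹)).congr_deriv ?_
      simp only [id]
      field_simp
      ring
    have := monotone_of_hasDerivAt_nonneg hd
      (fun x => sub_nonneg.2 (inv_selfSimilarWeight_le_exp x)) hs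
    simp only [mul_zero, Real.exp_zero, mul_one] at this
    have h3 : 0 < (2 * α)⁻¹ * Real.exp (2 * α * s) := by positivity
    linarith

end SelfSimilarWeight

/-- The reaction term `α² a - aᵖ`, extended by zero outside the interval `[0, c]`. -/
noncomputable def clippedForce (α p c a : ℝ) : ℝ :=
  α ^ 2 * max 0 (min a c) - max 0 (min a c) ^ p

section ClippedForce

variable {α p c : ℝ}

theorem clippedForce_of_mem {a : ℝ} (ha : a ∈ Icc 0 c) :
    clippedForce α p c a = α ^ 2 * a - a ^ p := by
  rw [clippedForce, min_eq_left ha.2, max_eq_right ha.1]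

theorem clippedForce_of_nonpos (hp : 1 < p) {a : ℝ} (ha : a ≤ 0) : clippedForce α p c a = 0 := by
  rw [clippedForce, max_eq_left ((min_le_left _ _).trans ha), Real.zero_rpow (by linarith)]
  simp

theorem clippedForce_of_ge (hc : 0 < c) (hcp : c ^ (p - 1) = α ^ 2) {a : ℝ} (ha : c ≤ a) :
    clippedForce α p c a = 0 := by
  rw [clippedForce, min_eq_right ha, max_eq_right hc.le, ← hcp, Real.rpow_sub_one hc.ne']
  field_simp
  ring

theorem clippedForce_nonneg (hp : 1 < p) (hc : 0 < c) (hcp : c ^ (p - 1) = α ^ 2) (a : ℝ) :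
    0 ≤ clippedForce α p c a := by
  rcases le_total a 0 with ha | ha
  · exact (clippedForce_of_nonpos hp ha).ge
  rcases le_total c a with hca | hca
  · exact (clippedForce_of_ge hc hcp hca).ge
  rcases ha.eq_or_lt with rfl | ha
  · exact (clippedForce_of_nonpos hp le_rfl).ge
  rw [clippedForce_of_mem ⟨ha.le, hca⟩, ← hcp]
  have h1 : a ^ (p - 1) ≤ c ^ (p - 1) := Real.rpow_le_rpow ha.le hca (by linarith)
  have h2 : a ^ p = a ^ (p - 1) * a := by
    rw [Real.rpow_sub_one ha.ne']
    field_simp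
  rw [h2, ← sub_mul]
  exact mul_nonneg (sub_nonneg.2 h1) ha.le

theorem abs_clippedForce_sub_le (hp : 1 < p) (hc : 0 < c) (a b : ℝ) :
    |clippedForce α p c a - clippedForce α p c b| ≤ (α ^ 2 + p * c ^ (p - 1)) * |a - b| := by
  set k : ℝ → ℝ := fun a => max 0 (min a c)
  have hk : ∀ a, k a ∈ Icc 0 c := fun a =>
    ⟨le_max_left _ _, max_le hc.le (min_le_right _ _)⟩
  have hkl : |k a - k b| ≤ |a - b| := by
    simp only [k]
    grind
  have hpow : |k a ^ p - k b ^ p| ≤ p * c ^ (p - 1) * |k a - k b| := by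
    refine Convex.norm_image_sub_le_of_norm_hasDerivWithin_le (f := fun x : ℝ => x ^ p)
      (f' := fun x => p * x ^ (p - 1)) (s := Icc 0 c) (fun x _ =>
      (Real.hasDerivAt_rpow_const (Or.inr hp.le)).hasDerivWithinAt) (fun x hx => ?_)
      (convex_Icc _ _) (hk b) (hk a)
    rw [Real.norm_eq_abs, abs_of_nonneg (mul_nonneg (by linarith) (Real.rpow_nonneg hx.1 _))]
    have := Real.rpow_le_rpow hx.1 hx.2 (by linarith : 0 ≤ p - 1)
    gcongr
  have hcp := Real.rpow_nonneg hc.le (p - 1)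
  calc |clippedForce α p c a - clippedForce α p c b|
      = |α ^ 2 * (k a - k b) - (k a ^ p - k b ^ p)| := by
        congr 1
        simp only [clippedForce, k]
        ring
    _ ≤ |α ^ 2 * (k a - k b)| + |k a ^ p - k b ^ p| := abs_sub _ _
    _ ≤ α ^ 2 * |k a - k b| + p * c ^ (p - 1) * |k a - k b| := by
        rw [abs_mul, abs_of_nonneg (sq_nonneg α)]
        gcongr
    _ = (α ^ 2 + p * c ^ (p - 1)) * |k a - k b| := by ring
    _ ≤ _ := by gcongr

end ClippedForce

/-- Existence of a nontrivial bounded self-similar profile in the logarithmic variable which decays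
at `+∞`. -/
theorem exists_selfSimilar_profile {α p : ℝ} (hα : 0 < α) (hp : 1 < p) :
    ∃ w w₁ w₂ : ℝ → ℝ,
      (∀ s, HasDerivAt w (w₁ s) s) ∧ (∀ s, HasDerivAt w₁ (w₂ s) s) ∧ Continuous w₂ ∧
      (∀ s, w₂ s + (Real.exp (2 * s) / 2 - 2 * α) * w₁ s + α ^ 2 * w s - w s ^ p = 0) ∧
      (∀ s, 0 ≤ w s) ∧ Tendsto w atTop (𝓝 0) ∧ ∃ s, w s ≠ 0 := by
  obtain ⟨W, K, hWK, B, hB⟩ := exists_tailWeight_selfSimilarWeight hα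
  obtain ⟨c, hc, hcp⟩ : ∃ c : ℝ, 0 < c ∧ c ^ (p - 1) = α ^ 2 := by
    refine ⟨(α ^ 2) ^ (p - 1)⁻¹, by positivity, ?_⟩
    exact Real.rpow_inv_rpow (sq_nonneg α) (by linarith)
  have hcp' := Real.rpow_nonneg hc.le (p - 1)
  obtain ⟨w, m, hw, hm, hw0, hmem, hne⟩ := hWK.exists_solution_mem_Icc
    (L := α ^ 2 + p * c ^ (p - 1)) (by positivity) (abs_clippedForce_sub_le hp hc) hc
    (clippedForce_nonneg hp hc hcp) (fun a => clippedForce_of_nonpos hp)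
    (fun a => clippedForce_of_ge hc hcp) hB
  set ρ := selfSimilarWeight α
  have hwc : Continuous w := continuous_iff_continuousAt.2 fun s => (hw s).continuousAt
  have hmc : Continuous m := continuous_iff_continuousAt.2 fun s => (hm s).continuousAt
  have hinv := hWK.continuous_inv
  refine ⟨w, fun s => -(m s * (ρ s)⁻¹), fun s => -(Real.exp (2 * s) / 2 - 2 * α) *
    (-(m s * (ρ s)⁻¹)) - α ^ 2 * w s + w s ^ p, hw, fun s => ?_, ?_, fun s => by ring,
    fun s => (hmem s).1, hw0, hne⟩
  · refine ((hm s).mul (hasDerivAt_inv_selfSimilarWeight s)).neg.congr_deriv ?_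
    rw [clippedForce_of_mem (hmem s)]
    have hρ : selfSimilarWeight α s ≠ 0 := (selfSimilarWeight_pos s).ne'
    simp only [ρ]
    field_simp
    ring
  · have : Continuous fun s => w s ^ p := hwc.rpow_const fun _ => Or.inr (by linarith)
    fun_prop

section RadialFunctions

variable {ψ ψ₁ ψ₂ : ℝ → ℝ}

theorem hasFDerivAt_log_norm {E : Type*} [NormedAddCommGroup E] [InnerProductSpace ℝ E] {x : E}
    (hx : x ≠ 0) : HasFDerivAt (fun y : E => Real.log ‖y‖) ((‖x‖ ^ 2)⁻¹ • innerSL ℝ x) x := by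
  have hx' : ‖x‖ ^ 2 ≠ 0 := pow_ne_zero 2 (norm_ne_zero_iff.2 hx)
  have h1 := ((hasStrictFDerivAt_norm_sq x).hasFDerivAt.log hx').const_mul (1 / 2)
  have h2 : (fun y : E => 1 / 2 * Real.log (‖y‖ ^ 2)) = fun y => Real.log ‖y‖ := by
    funext y
    rw [Real.log_pow]
    push_cast
    ring
  rw [h2] at h1
  refine h1.congr_fderiv ?_
  ext v
  simp
  ring

theorem fderiv_radial_log {n : ℕ} (h₁ : ∀ l, HasDerivAt ψ (ψ₁ l) l)
    {x : EuclideanSpace ℝ (Fin n)} (hx : x ≠ 0) (i : Fin n) :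
    fderiv ℝ (fun y : EuclideanSpace ℝ (Fin n) => ψ (Real.log ‖y‖)) x (EuclideanSpace.single i 1) =
      ψ₁ (Real.log ‖x‖) * (‖x‖ ^ 2)⁻¹ * x i := by
  have := ((h₁ _).comp_hasFDerivAt x (hasFDerivAt_log_norm hx)).fderiv
  simp only [Function.comp_def] at this
  rw [this]
  simp [EuclideanSpace.inner_single_right]
  ring

/-- The Laplacian of a radial function in the plane, in the logarithmic radial variable. -/
theorem laplacian_radial_log (h₁ : ∀ l, HasDerivAt ψ (ψ₁ l) l) (h₂ : ∀ l, HasDerivAt ψ₁ (ψ₂ l) l)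
    {x : EuclideanSpace ℝ (Fin 2)} (hx : x ≠ 0) :
    laplacian (fun y : EuclideanSpace ℝ (Fin 2) => ψ (Real.log ‖y‖)) x =
      ψ₂ (Real.log ‖x‖) * (‖x‖ ^ 2)⁻¹ := by
  have hx' : ‖x‖ ^ 2 ≠ 0 := pow_ne_zero 2 (norm_ne_zero_iff.2 hx)
  have key : ∀ i : Fin 2,
      fderiv ℝ (fun y => fderiv ℝ (fun y : EuclideanSpace ℝ (Fin 2) => ψ (Real.log ‖y‖)) y
        (EuclideanSpace.single i 1)) x (EuclideanSpace.single i 1) =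
      (ψ₂ (Real.log ‖x‖) - 2 * ψ₁ (Real.log ‖x‖)) * ((‖x‖ ^ 2)⁻¹) ^ 2 * x i ^ 2 +
        ψ₁ (Real.log ‖x‖) * (‖x‖ ^ 2)⁻¹ := fun i => by
    have hev : (fun y => fderiv ℝ (fun y : EuclideanSpace ℝ (Fin 2) => ψ (Real.log ‖y‖)) y
        (EuclideanSpace.single i 1)) =ᶠ[𝓝 x]
        fun y => ψ₁ (Real.log ‖y‖) * (‖y‖ ^ 2)⁻¹ * y i := by
      filter_upwards [isOpen_ne.mem_nhds hx] with y hy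
      exact fderiv_radial_log h₁ hy i
    rw [hev.fderiv_eq]
    have hA := (h₂ _).comp_hasFDerivAt x (hasFDerivAt_log_norm hx)
    have hB := (hasDerivAt_inv hx').comp_hasFDerivAt x (hasStrictFDerivAt_norm_sq x).hasFDerivAt
    have hC : HasFDerivAt (fun y : EuclideanSpace ℝ (Fin 2) => y i)
        (EuclideanSpace.proj i : EuclideanSpace ℝ (Fin 2) →L[ℝ] ℝ) x :=
      (EuclideanSpace.proj i : EuclideanSpace ℝ (Fin 2) →L[ℝ] ℝ).hasFDerivAt
    have hD : fderiv ℝ (fun y : EuclideanSpace ℝ (Fin 2) =>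
        ψ₁ (Real.log ‖y‖) * (‖y‖ ^ 2)⁻¹ * y i) x = _ := ((hA.mul hB).mul hC).fderiv
    rw [hD]
    simp [EuclideanSpace.inner_single_right]
    field_simp
    ring
  have hn : ‖x‖ ^ 2 = x 0 ^ 2 + x 1 ^ 2 := by
    rw [EuclideanSpace.norm_sq_eq, Fin.sum_univ_two]
    simp
  rw [laplacian, Fin.sum_univ_two, key, key]
  have h3 : (‖x‖ ^ 2)⁻¹ * (x 0 ^ 2 + x 1 ^ 2) = 1 := by
    rw [← hn]
    exact inv_mul_cancel₀ hx'
  linear_combination (ψ₂ (Real.log ‖x‖) - 2 * ψ₁ (Real.log ‖x‖)) * (‖x‖ ^ 2)⁻¹ * h3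

theorem contDiff_one_of_hasDerivAt (h₁ : ∀ l, HasDerivAt ψ (ψ₁ l) l) (hc : Continuous ψ₁) :
    ContDiff ℝ 1 ψ := by
  rw [contDiff_one_iff_deriv]
  refine ⟨fun l => (h₁ l).differentiableAt, ?_⟩
  rwa [show deriv ψ = ψ₁ from funext fun l => (h₁ l).deriv]

theorem contDiff_two_of_hasDerivAt (h₁ : ∀ l, HasDerivAt ψ (ψ₁ l) l)
    (h₂ : ∀ l, HasDerivAt ψ₁ (ψ₂ l) l) (hc : Continuous ψ₂) : ContDiff ℝ 2 ψ := by
  rw [show (2 : WithTop ℕ∞) = 1 + 1 by norm_num, contDiff_succ_iff_deriv]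
  refine ⟨fun l => (h₁ l).differentiableAt, by simp, ?_⟩
  rw [show deriv ψ = ψ₁ from funext fun l => (h₁ l).deriv]
  exact contDiff_one_of_hasDerivAt h₂ hc

end RadialFunctions

/-- The function `|x|^(-α) w(log (|x| / √t))`, extended by zero to `t ≤ 0`. -/
noncomputable def selfSimilarSolution (α : ℝ) (w : ℝ → ℝ) (x : EuclideanSpace ℝ (Fin 2)) (t : ℝ) :
    ℝ :=
  if 0 < t then Real.exp (-α * Real.log ‖x‖) * w (Real.log ‖x‖ - Real.log t / 2) else 0

theorem selfSimilarSolution_of_pos {α : ℝ} {w : ℝ → ℝ} {t : ℝ} (ht : 0 < t)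
    (x : EuclideanSpace ℝ (Fin 2)) : selfSimilarSolution α w x t =
      Real.exp (-α * Real.log ‖x‖) * w (Real.log ‖x‖ - Real.log t / 2) := if_pos ht

theorem continuousOn_selfSimilarSolution (α : ℝ) {w : ℝ → ℝ} (hw : Continuous w)
    (hw0 : Tendsto w atTop (𝓝 0)) :
    ContinuousOn (fun q : EuclideanSpace ℝ (Fin 2) × ℝ => selfSimilarSolution α w q.1 q.2)
      {q | q.1 ≠ 0 ∧ 0 ≤ q.2} := by
  rintro ⟨x, t⟩ ⟨hx, ht⟩
  simp only at hx ht
  have hlog : ContinuousAt (fun q : EuclideanSpace ℝ (Fin 2) × ℝ => Real.log ‖q.1‖) (x, t) :=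
    continuousAt_fst.norm.log (norm_ne_zero_iff.2 hx)
  have hexp : ContinuousAt (fun q : EuclideanSpace ℝ (Fin 2) × ℝ =>
      Real.exp (-α * Real.log ‖q.1‖)) (x, t) := (continuousAt_const.mul hlog).rexp
  rcases ht.eq_or_lt with rfl | ht
  · have hval : selfSimilarSolution α w x 0 = 0 := if_neg (lt_irrefl _)
    rw [ContinuousWithinAt, hval]
    have hpos : Tendsto (fun q : EuclideanSpace ℝ (Fin 2) × ℝ =>
        Real.exp (-α * Real.log ‖q.1‖) * w (Real.log ‖q.1‖ - Real.log q.2 / 2))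
        (𝓝 (x, 0) ⊓ 𝓟 {q | 0 < q.2}) (𝓝 0) := by
      have h1 : Tendsto (fun q : EuclideanSpace ℝ (Fin 2) × ℝ => Real.log q.2 / 2)
          (𝓝 (x, 0) ⊓ 𝓟 {q | 0 < q.2}) atBot := by
        refine (Real.tendsto_log_nhdsGT_zero.comp ?_).atBot_div_const two_pos
        refine tendsto_nhdsWithin_iff.2 ⟨?_, ?_⟩
        · exact (continuousAt_snd (p := (x, (0 : ℝ)))).tendsto.mono_left inf_le_left
        · exact eventually_inf_principal.2 (Eventually.of_forall fun q hq => hq)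
      have h2 : Tendsto (fun q : EuclideanSpace ℝ (Fin 2) × ℝ =>
          Real.log ‖q.1‖ - Real.log q.2 / 2) (𝓝 (x, 0) ⊓ 𝓟 {q | 0 < q.2}) atTop := by
        simp only [sub_eq_add_neg]
        exact (hlog.tendsto.mono_left inf_le_left).add_atTop (tendsto_neg_atBot_atTop.comp h1)
      simpa using (hexp.tendsto.mono_left inf_le_left).mul (hw0.comp h2)
    refine Tendsto.mono_left ?_ nhdsWithin_le_nhds
    refine Tendsto.if (p := fun q : EuclideanSpace ℝ (Fin 2) × ℝ => 0 < q.2) hpos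
      tendsto_const_nhds
  · have hev : (fun q : EuclideanSpace ℝ (Fin 2) × ℝ => selfSimilarSolution α w q.1 q.2)
        =ᶠ[𝓝 (x, t)] fun q => Real.exp (-α * Real.log ‖q.1‖) *
          w (Real.log ‖q.1‖ - Real.log q.2 / 2) := by
      filter_upwards [continuousAt_snd.eventually (lt_mem_nhds ht)] with q hq
      exact selfSimilarSolution_of_pos hq q.1
    refine ContinuousAt.continuousWithinAt (ContinuousAt.congr ?_ hev.symm)
    exact hexp.mul (hw.continuousAt.comp (hlog.sub ((continuousAt_snd.log ht.ne').div_const 2)))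

/-- A self-similar profile yields a classical solution with vanishing initial data. -/
theorem isClassicalSolution_selfSimilarSolution {α p : ℝ} (hα : α * (p - 1) = 2)
    {w w₁ w₂ : ℝ → ℝ} (h₁ : ∀ s, HasDerivAt w (w₁ s) s) (h₂ : ∀ s, HasDerivAt w₁ (w₂ s) s)
    (hc : Continuous w₂)
    (heq : ∀ s, w₂ s + (Real.exp (2 * s) / 2 - 2 * α) * w₁ s + α ^ 2 * w s - w s ^ p = 0)
    (hnn : ∀ s, 0 ≤ w s) (hw0 : Tendsto w atTop (𝓝 0)) :
    IsClassicalSolution 2 p (fun _ => 0) (selfSimilarSolution α w) := by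
  have hwc : Continuous w := continuous_iff_continuousAt.2 fun s => (h₁ s).continuousAt
  have hw₁c : Continuous w₁ := continuous_iff_continuousAt.2 fun s => (h₂ s).continuousAt
  have hslice : ∀ t, 0 < t → (fun y => selfSimilarSolution α w y t) =
      fun y => (fun l => Real.exp (-α * l) * w (l - Real.log t / 2)) (Real.log ‖y‖) := fun t ht =>
    funext (selfSimilarSolution_of_pos ht)
  have htime : ∀ x : EuclideanSpace ℝ (Fin 2), ∀ t, 0 < t → selfSimilarSolution α w x =ᶠ[𝓝 t]
      fun r => Real.exp (-α * Real.log ‖x‖) * w (Real.log ‖x‖ - Real.log r / 2) := fun x t ht => by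
    filter_upwards [lt_mem_nhds ht] with r hr
    exact selfSimilarSolution_of_pos hr x
  have hE : ∀ l, HasDerivAt (fun l => Real.exp (-α * l)) (-α * Real.exp (-α * l)) l := fun l => by
    refine (((hasDerivAt_id l).const_mul (-α)).exp).congr_deriv ?_
    simp only [id]
    ring
  refine ⟨continuousOn_selfSimilarSolution α hwc hw0, fun x hx t ht => ?_, fun x hx t ht => ?_,
    fun x hx t ht => ?_, fun x hx t ht => ?_, fun x hx => if_neg (lt_irrefl _)⟩
  · rw [hslice t ht]
    have hψ : ContDiff ℝ 2 fun l => Real.exp (-α * l) * w (l - Real.log t / 2) := by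
      have := contDiff_two_of_hasDerivAt h₁ h₂ hc
      fun_prop
    exact hψ.contDiffAt.comp x ((contDiffAt_norm ℝ hx).log (norm_ne_zero_iff.2 hx))
  · refine ContDiffAt.congr_of_eventuallyEq ?_ (htime x t ht)
    have hw : ContDiff ℝ 1 w := contDiff_one_of_hasDerivAt h₁ hw₁c
    exact contDiffAt_const.mul (hw.contDiffAt.comp t
      (contDiffAt_const.sub ((contDiffAt_id.log ht.ne').div_const 2)))
  · set l := Real.log ‖x‖ with hl
    set s := l - Real.log t / 2 with hs
    have hdt : HasDerivAt (selfSimilarSolution α w x)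
        (Real.exp (-α * l) * (w₁ s * (-(t⁻¹ / 2)))) t := by
      refine HasDerivAt.congr_of_eventuallyEq ?_ (htime x t ht)
      exact ((h₁ s).comp t (((Real.hasDerivAt_log ht.ne').div_const 2).const_sub l)).const_mul _
    have hsh : ∀ {f f' : ℝ → ℝ}, (∀ s, HasDerivAt f (f' s) s) → ∀ l,
        HasDerivAt (fun l => f (l - Real.log t / 2)) (f' (l - Real.log t / 2)) l :=
      fun hf l => (hf _).comp_sub_const l _
    have hψ₁ : ∀ l, HasDerivAt (fun l => Real.exp (-α * l) * w (l - Real.log t / 2))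
        (Real.exp (-α * l) * (w₁ (l - Real.log t / 2) - α * w (l - Real.log t / 2))) l :=
      fun l => ((hE l).mul (hsh h₁ l)).congr_deriv (by ring)
    have hψ₂ : ∀ l, HasDerivAt (fun l => Real.exp (-α * l) *
        (w₁ (l - Real.log t / 2) - α * w (l - Real.log t / 2)))
        (Real.exp (-α * l) * (w₂ (l - Real.log t / 2) - 2 * α * w₁ (l - Real.log t / 2) +
          α ^ 2 * w (l - Real.log t / 2))) l :=
      fun l => ((hE l).mul ((hsh h₂ l).sub ((hsh h₁ l).const_mul α))).congr_deriv (by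
        simp only [Pi.sub_apply]
        ring)
    have hx' : 0 < ‖x‖ := norm_pos_iff.2 hx
    have hlx : Real.exp (2 * l) = ‖x‖ ^ 2 := by
      rw [two_mul, Real.exp_add, Real.exp_log hx', sq]
    have hst : Real.exp (2 * s) = ‖x‖ ^ 2 * t⁻¹ := by
      rw [hs, mul_sub, Real.exp_sub, hlx, mul_div_cancel₀ _ two_ne_zero, Real.exp_log ht,
        div_eq_mul_inv]
    have hpow : (Real.exp (-α * l) * w s) ^ p = Real.exp (-α * l) * (‖x‖ ^ 2)⁻¹ * w s ^ p := by
      rw [Real.mul_rpow (Real.exp_pos _).le (hnn s), ← Real.exp_mul, ← hlx, ← Real.exp_neg,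
        ← Real.exp_add]
      congr 2
      linear_combination (-l) * hα
    rw [hdt.deriv, hslice t ht, laplacian_radial_log hψ₁ hψ₂ hx, selfSimilarSolution_of_pos ht,
      ← hl, ← hs, hpow]
    have := heq s
    rw [hst] at this
    have hq : ‖x‖ ^ 2 * (‖x‖ ^ 2)⁻¹ = 1 := mul_inv_cancel₀ (pow_ne_zero 2 hx'.ne')
    linear_combination (-Real.exp (-α * l) * (‖x‖ ^ 2)⁻¹) * this +
      (Real.exp (-α * l) * t⁻¹ / 2 * w₁ s) * hq
  · rw [selfSimilarSolution_of_pos ht]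
    exact mul_nonneg (Real.exp_pos _).le (hnn _)

end

/-- for `n = 2` and any `p > 1`, there is a nontrivial classical
solution of (P) in the punctured plane with vanishing initial data. -/
theorem nonuniqueness_in_punctured_plane (p : ℝ) (hp : 1 < p) :
    ∃ u : EuclideanSpace ℝ (Fin 2) → ℝ → ℝ,
      IsClassicalSolution 2 p (fun _ => 0) u ∧
      ∃ x : EuclideanSpace ℝ (Fin 2), x ≠ 0 ∧ ∃ t : ℝ, 0 ≤ t ∧ u x t ≠ 0 := by
  have hα : 0 < 2 / (p - 1) := div_pos two_pos (by linarith)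
  obtain ⟨w, w₁, w₂, h₁, h₂, hc, heq, hnn, hw0, s, hs⟩ := exists_selfSimilar_profile hα hp
  refine ⟨selfSimilarSolution (2 / (p - 1)) w, isClassicalSolution_selfSimilarSolution
    (div_mul_cancel₀ _ (by linarith)) h₁ h₂ hc heq hnn hw0,
    EuclideanSpace.single 0 (Real.exp s), ?_, 1, zero_le_one, ?_⟩
  · simp
  · rw [selfSimilarSolution_of_pos one_pos]
    simpa using hs
end
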